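/- arXiv:1807.10017 — 2 statements merged into one kernel-verified Lean document; each statement's English description precedes it below -/
import Mathlib

section
/- Let A∈ℝ∖{0} and B∈ℝ, let f₀(r)=Ar²+B, let x₀∈(0,1) be the unique zero on (0,1) of x↦F(1−√2,1+√2;1;x), and set Ω₀=B/2+A/(4x₀). Then there exist a>0, an open neighborhood U of (Ω₀,f₀) in ℝ×C([0,1];ℝ), and a continuous curve ξ∈(−a,a)↦(Ω_ξ,f_ξ)∈U with (Ω_{ξ=0},f_{ξ=0})=(Ω₀,f₀) and f_ξ≠f₀ for ξ≠0, such that G_rad(Ω_ξ,f_ξ)=0 for all ξ∈(−a,a). -/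
open MeasureTheory Real Set

/-- Rising factorial (Pochhammer symbol) `(a)_k`. -/
noncomputable def poch (a : ℝ) (k : ℕ) : ℝ := (ascPochhammer ℝ k).eval a

/-- Gauss hypergeometric function `F(a,b;c;x)`: given by Euler's integral representation
when `c > b > 0` (valid for all `x ∈ (-∞,1]`), and by the defining power series otherwise. -/
noncomputable def hyper (a b c x : ℝ) : ℝ :=
  if b < c ∧ 0 < b then
    Real.Gamma c / (Real.Gamma b * Real.Gamma (c - b)) *
      ∫ t in (0:ℝ)..1, t ^ (b - 1) * (1 - t) ^ (c - b - 1) * (1 - x * t) ^ (-a)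
  else
    ∑' k : ℕ, poch a k * poch b k / (poch c k * (Nat.factorial k)) * x ^ k

/-- The coefficient `a_t = (t - √(t²+8))/2`. -/
noncomputable def aCoef (t : ℝ) : ℝ := (t - Real.sqrt (t ^ 2 + 8)) / 2

/-- The coefficient `b_t = (t + √(t²+8))/2`. -/
noncomputable def bCoef (t : ℝ) : ℝ := (t + Real.sqrt (t ^ 2 + 8)) / 2

/-- `F_t(x) = F(a_t, b_t; t+1; x)`. -/
noncomputable def Fhyp (t x : ℝ) : ℝ := hyper (aCoef t) (bCoef t) (t + 1) x

/-- The dispersion function `ζ_n` associated with the quadratic profile `f₀(r) = Ar² + B`. -/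
noncomputable def zetaDisp (A B : ℝ) (n : ℕ) (x : ℝ) : ℝ :=
  Fhyp n x * (1 - x + (A + 2 * B) / (A * ((n : ℝ) + 1)) * x)
    + ∫ τ in (0:ℝ)..1, Fhyp n (τ * x) * τ ^ n * (-1 + 2 * x * τ)

/-- The radial functional `G_rad(Ω,f)(r)` associated with the quadratic profile
`f₀(r) = Ar² + B`. -/
noncomputable def Grad (A B Ω : ℝ) (f : ℝ → ℝ) (r : ℝ) : ℝ :=
  (4 * Ω - B) / (8 * A) * f r - f r ^ 2 / (16 * A)
    - (∫ τ in r..1, τ⁻¹ * ∫ s in (0:ℝ)..τ, s * f s)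
    - Ω * r ^ 2 / 2
    - (8 * Ω * B - 3 * B ^ 2 - A ^ 2 - 4 * A * B) / (16 * A)

/-- average of `f` on `[0,y]`. -/
noncomputable def avgI (f : ℝ → ℝ) (y : ℝ) : ℝ := ∫ u in (0:ℝ)..1, f (y * u)

/-- the Volterra operator. -/
noncomputable def volt (f : ℝ → ℝ) (z : ℝ) : ℝ := ∫ y in (0:ℝ)..z, avgI f y

lemma avgI_cont {f : ℝ → ℝ} (hf : Continuous f) : Continuous (avgI f) := by
  unfold avgI
  apply intervalIntegral.continuous_parametric_intervalIntegral_of_continuous'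
  fun_prop

lemma volt_hasDeriv {f : ℝ → ℝ} (hf : Continuous f) (z : ℝ) : HasDerivAt (volt f) (avgI f z) z := by
  have h := avgI_cont hf
  exact intervalIntegral.integral_hasDerivAt_right (h.intervalIntegrable _ _)
    (h.stronglyMeasurableAtFilter _ _) h.continuousAt

lemma volt_cont {f : ℝ → ℝ} (hf : Continuous f) : Continuous (volt f) :=
  continuous_iff_continuousAt.2 fun z => (volt_hasDeriv hf z).continuousAt

lemma avgI_bound {f g : ℝ → ℝ} (hf : Continuous f) (hg : Continuous g) {y C : ℝ} (hy : 0 ≤ y)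
    (h : ∀ s ∈ Icc 0 y, |f s - g s| ≤ C) : |avgI f y - avgI g y| ≤ C := by
  unfold avgI
  rw [← intervalIntegral.integral_sub
    (Continuous.intervalIntegrable (by fun_prop) _ _) (Continuous.intervalIntegrable (by fun_prop) _ _)]
  have := intervalIntegral.norm_integral_le_of_norm_le_const (a := (0:ℝ)) (b := 1) (C := C)
    (f := fun u => f (y * u) - g (y * u)) ?_
  · simpa using this
  · intro u hu
    rw [uIoc_of_le zero_le_one] at hu
    exact h _ ⟨mul_nonneg hy hu.1.le, mul_le_of_le_one_right hy hu.2⟩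

lemma avgI_add {f g : ℝ → ℝ} (hf : Continuous f) (hg : Continuous g) (y : ℝ) :
    avgI (fun s => f s + g s) y = avgI f y + avgI g y :=
  intervalIntegral.integral_add
    (Continuous.intervalIntegrable (by fun_prop) _ _) (Continuous.intervalIntegrable (by fun_prop) _ _)

lemma avgI_smul (f : ℝ → ℝ) (c : ℝ) (y : ℝ) :
    avgI (fun s => c * f s) y = c * avgI f y :=
  intervalIntegral.integral_const_mul _ _

lemma volt_add {f g : ℝ → ℝ} (hf : Continuous f) (hg : Continuous g) (y : ℝ) :
    volt (fun s => f s + g s) y = volt f y + volt g y := by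
  unfold volt
  simp only [avgI_add hf hg]
  exact intervalIntegral.integral_add
    ((avgI_cont hf).intervalIntegrable _ _) ((avgI_cont hg).intervalIntegrable _ _)

lemma volt_smul (f : ℝ → ℝ) (c : ℝ) (y : ℝ) :
    volt (fun s => c * f s) y = c * volt f y := by
  unfold volt
  simp only [avgI_smul]
  exact intervalIntegral.integral_const_mul _ _

/-- weighted bound -/
lemma volt_wbound {f : ℝ → ℝ} (hf : Continuous f) {z C M : ℝ} (hz : 0 ≤ z) (hM : 0 < M)
    (hC : 0 ≤ C)
    (h : ∀ s ∈ Icc 0 z, |f s| ≤ C * rexp (M * s)) : |volt f z| ≤ C / M * rexp (M * z) := by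
  have h1 : ∀ y ∈ Icc 0 z, |avgI f y| ≤ C * rexp (M * y) := by
    intro y hy
    have := avgI_bound hf (continuous_const (y := (0:ℝ))) (C := C * rexp (M * y)) hy.1 ?_
    · simpa [avgI] using this
    · intro s hs
      rw [sub_zero]
      refine (h s ⟨hs.1, hs.2.trans hy.2⟩).trans ?_
      have := hs.2
      gcongr
  have h2 : |volt f z| ≤ ∫ y in (0:ℝ)..z, C * rexp (M * y) := by
    have := intervalIntegral.norm_integral_le_of_norm_le (μ := volume) (f := avgI f)
      (g := fun y => C * rexp (M * y)) hz
      (Filter.Eventually.of_forall fun y hy => h1 y ⟨hy.1.le, hy.2⟩)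
      (Continuous.intervalIntegrable (by fun_prop) _ _)
    exact this
  have h3 : ∫ y in (0:ℝ)..z, C * rexp (M * y) = C / M * rexp (M * z) - C / M * rexp (M * 0) := by
    apply intervalIntegral.integral_eq_sub_of_hasDerivAt
      (f := fun y => C / M * rexp (M * y))
    · intro x _
      have : HasDerivAt (fun y => C / M * rexp (M * y)) (C / M * (rexp (M * x) * (M * 1))) x :=
        (((hasDerivAt_id x).const_mul M).exp).const_mul _
      have e : C * rexp (M * x) = C / M * (rexp (M * x) * (M * 1)) := by field_simp
      rw [e]
      exact this
    · exact Continuous.intervalIntegrable (by fun_prop) _ _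
  rw [h3] at h2
  have : 0 ≤ C / M * rexp (M * 0) := by positivity
  linarith

lemma volt_bound {f : ℝ → ℝ} {z C : ℝ} (hf : Continuous f) (hz : 0 ≤ z)
    (h : ∀ s ∈ Icc 0 z, |f s| ≤ C) : |volt f z| ≤ C * z := by
  have h1 : ∀ y ∈ Icc 0 z, |avgI f y| ≤ C := by
    intro y hy
    have := avgI_bound hf (continuous_const (y := (0:ℝ))) (C := C) hy.1 ?_
    · simpa [avgI] using this
    · intro s hs
      rw [sub_zero]
      exact h s ⟨hs.1, hs.2.trans hy.2⟩
  have := intervalIntegral.norm_integral_le_of_norm_le_const (a := (0:ℝ)) (b := z) (C := C)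
    (f := avgI f) ?_
  · simpa [volt, abs_of_nonneg hz] using this
  · intro u hu
    rw [uIoc_of_le hz] at hu
    exact h1 _ ⟨hu.1.le, hu.2⟩

/-- extension to the line -/
noncomputable def extI {R : ℝ} (hR : 0 ≤ R) (q : C(Icc (0:ℝ) R, ℝ)) : ℝ → ℝ := IccExtend hR q

lemma extI_cont {R : ℝ} (hR : 0 ≤ R) (q : C(Icc (0:ℝ) R, ℝ)) : Continuous (extI hR q) :=
  q.continuous.Icc_extend'

lemma extI_apply {R : ℝ} (hR : 0 ≤ R) (q : C(Icc (0:ℝ) R, ℝ)) (z : Icc (0:ℝ) R) :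
    extI hR q z = q z := IccExtend_val hR q z

lemma extI_sub_le {R : ℝ} (hR : 0 ≤ R) (p q : C(Icc (0:ℝ) R, ℝ)) (s : ℝ) :
    |extI hR p s - extI hR q s| ≤ ‖p - q‖ := by
  have := (p - q).norm_coe_le_norm (projIcc 0 R hR s)
  simpa [extI, IccExtend] using this

/-- the Volterra operator on continuous functions. -/
noncomputable def voltL {R : ℝ} (hR : 0 ≤ R) :
    C(Icc (0:ℝ) R, ℝ) →L[ℝ] C(Icc (0:ℝ) R, ℝ) :=
  LinearMap.mkContinuous
    { toFun := fun q => ⟨fun z => volt (extI hR q) z,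
        (volt_cont (extI_cont hR q)).comp continuous_subtype_val⟩
      map_add' := by
        intro p q
        ext z
        exact volt_add (extI_cont hR p) (extI_cont hR q) z
      map_smul' := by
        intro c q
        ext z
        exact volt_smul (extI hR q) c z } R (by
    intro q
    rw [ContinuousMap.norm_le _ (by positivity)]
    intro z
    have := volt_bound (f := extI hR q) (C := ‖q‖) (extI_cont hR q) z.2.1
      (fun s _ => by simpa [extI, IccExtend] using q.norm_coe_le_norm (projIcc 0 R hR s))
    refine this.trans ?_
    rw [mul_comm]
    exact mul_le_mul_of_nonneg_right z.2.2 (norm_nonneg _))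

lemma voltL_apply {R : ℝ} (hR : 0 ≤ R) (q : C(Icc (0:ℝ) R, ℝ)) (z : Icc (0:ℝ) R) :
    voltL hR q z = volt (extI hR q) z := rfl

/-- coordinate function -/
def zed (R : ℝ) : C(Icc (0:ℝ) R, ℝ) := ⟨fun z => z, continuous_subtype_val⟩

/-- exponential weight -/
noncomputable def wexp (R M : ℝ) : C(Icc (0:ℝ) R, ℝ) := ⟨fun z => rexp (M * z), by fun_prop⟩

noncomputable def linOp {R : ℝ} (hR : 0 ≤ R) :
    C(Icc (0:ℝ) R, ℝ) →L[ℝ] C(Icc (0:ℝ) R, ℝ) :=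
  ContinuousLinearMap.mul ℝ _ (1 - zed R) + (2:ℝ) • voltL hR

lemma linOp_unit {R : ℝ} (hR : 0 < R) (hR1 : R < 1) : IsUnit (linOp hR.le) := by
  obtain ⟨M, hM, hMR⟩ : ∃ M : ℝ, 0 < M ∧ R + 2 / M < 1 := by
    refine ⟨4 / (1 - R), by apply div_pos <;> linarith, ?_⟩
    have : 1 - R > 0 := by linarith
    have : 2 / (4 / (1 - R)) = (1 - R) / 2 := by field_simp; norm_num
    rw [this]; linarith
  let U := ContinuousLinearMap.mul ℝ _ (wexp R M)
  let V := ContinuousLinearMap.mul ℝ _ (wexp R (-M))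
  have hw : wexp R M * wexp R (-M) = 1 := by
    ext z
    simp [wexp, ← Real.exp_add]
  have hw' : wexp R (-M) * wexp R M = 1 := by rw [mul_comm]; exact hw
  have hUV : U * V = 1 := by
    ext1 p
    change wexp R M * (wexp R (-M) * p) = p
    rw [← mul_assoc, hw, one_mul]
  have hVU : V * U = 1 := by
    ext1 p
    change wexp R (-M) * (wexp R M * p) = p
    rw [← mul_assoc, hw', one_mul]
  have hn : ‖1 - V * linOp hR.le * U‖ < 1 := by
    refine lt_of_le_of_lt (ContinuousLinearMap.opNorm_le_bound _ (by positivity) ?_) hMR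
    intro p
    rw [ContinuousMap.norm_le _ (by positivity)]
    intro z
    have e : (1 - V * linOp hR.le * U) p z =
        z * p z - 2 * (rexp (-M * z) * volt (extI hR.le (wexp R M * p)) z) := by
      change p z - rexp (-M * z) * ((1 - (z:ℝ)) * (rexp (M * z) * p z) +
        2 * volt (extI hR.le (wexp R M * p)) z) = _
      have : rexp (-M * z) * rexp (M * z) = 1 := by rw [← Real.exp_add]; simp
      linear_combination (-(1 - (z:ℝ)) * p z) * this
    have hb := volt_wbound (f := extI hR.le (wexp R M * p)) (extI_cont _ _) (C := ‖p‖)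
      z.2.1 hM (norm_nonneg _) (by
        intro s hs
        have hs' : s ∈ Icc 0 R := ⟨hs.1, hs.2.trans z.2.2⟩
        rw [extI_apply hR.le _ ⟨s, hs'⟩]
        have := p.norm_coe_le_norm ⟨s, hs'⟩
        change |rexp (M * s) * p ⟨s, hs'⟩| ≤ _
        rw [abs_mul, abs_of_pos (Real.exp_pos _), mul_comm]
        gcongr
        exact this)
    rw [e, Real.norm_eq_abs]
    have h1 : |(z:ℝ) * p z| ≤ R * ‖p‖ := by
      rw [abs_mul, abs_of_nonneg z.2.1]
      exact mul_le_mul z.2.2 (p.norm_coe_le_norm z) (abs_nonneg _) hR.le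
    have h2 : |2 * (rexp (-M * z) * volt (extI hR.le (wexp R M * p)) z)| ≤ 2 / M * ‖p‖ := by
      rw [abs_mul, abs_mul, abs_of_pos (Real.exp_pos _), abs_two]
      calc 2 * (rexp (-M * z) * |volt (extI hR.le (wexp R M * p)) z|)
          ≤ 2 * (rexp (-M * z) * (‖p‖ / M * rexp (M * z))) := by gcongr
        _ = 2 / M * ‖p‖ * (rexp (-M * z) * rexp (M * z)) := by ring
        _ = 2 / M * ‖p‖ := by rw [← Real.exp_add]; simp
    calc _ ≤ _ := abs_sub _ _
      _ ≤ R * ‖p‖ + 2 / M * ‖p‖ := add_le_add h1 h2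
      _ = _ := by ring
  have hu : IsUnit (V * linOp hR.le * U) := by
    have := isUnit_one_sub_of_norm_lt_one
      (R := C(Icc (0:ℝ) R, ℝ) →L[ℝ] C(Icc (0:ℝ) R, ℝ)) (x := 1 - V * linOp hR.le * U) hn
    simpa using this
  have hUu : IsUnit U := ⟨⟨U, V, hUV, hVU⟩, rfl⟩
  have hVu : IsUnit V := ⟨⟨V, U, hVU, hUV⟩, rfl⟩
  have : linOp hR.le = U * (V * linOp hR.le * U) * V := by
    calc linOp hR.le = (U * V) * linOp hR.le * (U * V) := by rw [hUV, one_mul, mul_one]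
      _ = _ := by simp only [mul_assoc]
  rw [this]
  exact (hUu.mul hu).mul hVu

lemma exists_family {R : ℝ} (hR : 0 < R) (hR1 : R < 1) (q₀ : C(Icc (0:ℝ) R, ℝ))
    (h0 : ∀ z : Icc (0:ℝ) R, (1 - (z:ℝ)) * q₀ z + 2 * volt (extI hR.le q₀) z = 2) :
    ∃ ψ : ℝ → C(Icc (0:ℝ) R, ℝ), ∃ a : ℝ, 0 < a ∧ ψ 0 = q₀ ∧ ContinuousOn ψ (Ioo (-a) a) ∧
      ∀ ξ ∈ Ioo (-a) a, ∀ z : Icc (0:ℝ) R,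
        (1 - (z:ℝ)) * ψ ξ z - ξ * (ψ ξ z) ^ 2 / 2 + 2 * volt (extI hR.le (ψ ξ)) z = 2 := by
  let H : ℝ × C(Icc (0:ℝ) R, ℝ) → C(Icc (0:ℝ) R, ℝ) := fun u =>
    linOp hR.le u.2 - (u.1 / 2) • (u.2 * u.2)
  let D : ℝ × C(Icc (0:ℝ) R, ℝ) →L[ℝ] C(Icc (0:ℝ) R, ℝ) :=
    (linOp hR.le).comp (ContinuousLinearMap.snd ℝ ℝ _) -
      (ContinuousLinearMap.smulRight
        ((1/2:ℝ) • ContinuousLinearMap.fst ℝ ℝ C(Icc (0:ℝ) R, ℝ)) (q₀ * q₀))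
  have hH : HasStrictFDerivAt H D (0, q₀) := by
    apply HasStrictFDerivAt.sub
    · exact (linOp hR.le).hasStrictFDerivAt.comp (0, q₀) hasStrictFDerivAt_snd
    · have hm := (hasStrictFDerivAt_snd (𝕜 := ℝ) (p := ((0:ℝ), q₀))).mul'
        hasStrictFDerivAt_snd
      have hc : HasStrictFDerivAt (fun u : ℝ × C(Icc (0:ℝ) R, ℝ) => u.1 / 2)
          ((1/2:ℝ) • ContinuousLinearMap.fst ℝ ℝ C(Icc (0:ℝ) R, ℝ)) (0, q₀) := by
        have := (hasStrictFDerivAt_fst (𝕜 := ℝ) (p := ((0:ℝ), q₀))).const_smul (1/2:ℝ)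
        refine this.congr_of_eventuallyEq (Filter.Eventually.of_forall fun u => ?_)
        simp; ring
      have := hc.smul hm
      simp at this ⊢
      exact this
  have hDinr : D ∘L .inr ℝ ℝ C(Icc (0:ℝ) R, ℝ) = linOp hR.le := by
    ext1 p
    simp [D]
  have hinv : (D ∘L .inr ℝ ℝ C(Icc (0:ℝ) R, ℝ)).IsInvertible := by
    rw [hDinr]
    obtain ⟨u, hu⟩ := linOp_unit hR hR1
    exact ⟨ContinuousLinearEquiv.unitsEquiv ℝ _ u, hu⟩
  let ψ := hH.implicitFunctionOfProdDomain hinv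
  have hψ0 : ψ 0 = q₀ :=
    (hH.eventually_apply_eq_iff_implicitFunctionOfProdDomain hinv).self_of_nhds.mp rfl
  have hev := hH.eventually_apply_implicitFunctionOfProdDomain hinv
  obtain ⟨K, s, hs, hlip⟩ :=
    (hH.hasStrictFDerivAt_implicitFunctionOfProdDomain hinv).exists_lipschitzOnWith
  have hH0 : H (0, q₀) = 2 := by
    ext z
    have := h0 z
    have h3 : H (0, q₀) z = (1 - (z:ℝ)) * q₀ z + 2 * volt (extI hR.le q₀) z
        - 0 / 2 * (q₀ z * q₀ z) := rfl
    change H (0, q₀) z = 2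
    linear_combination h3 + this
  obtain ⟨a, ha, hball⟩ := Metric.eventually_nhds_iff_ball.1 (hev.and hs)
  have hb : ∀ ξ ∈ Ioo (-a) a, ξ ∈ Metric.ball (0:ℝ) a := by
    intro ξ hξ
    rw [Metric.mem_ball, dist_zero_right]
    exact abs_lt.2 hξ
  refine ⟨ψ, a, ha, hψ0, ?_, ?_⟩
  · exact hlip.continuousOn.mono fun ξ hξ => (hball ξ (hb ξ hξ)).2
  · intro ξ hξ z
    have h1 := (hball ξ (hb ξ hξ)).1
    rw [hH0] at h1
    have h2 := congrArg (fun p : C(Icc (0:ℝ) R, ℝ) => p z) h1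
    have h3 : H (ξ, ψ ξ) z = (1 - (z:ℝ)) * ψ ξ z + 2 * volt (extI hR.le (ψ ξ)) z
        - ξ / 2 * (ψ ξ z * ψ ξ z) := rfl
    have h4 : H (ξ, ψ ξ) z = 2 := h2
    linear_combination h4 - h3

/-- coefficients of the hypergeometric series -/
noncomputable def hcoef (n : ℕ) : ℝ :=
  poch (1 - Real.sqrt 2) n * poch (1 + Real.sqrt 2) n / (poch 1 n * (Nat.factorial n))

lemma hcoef_zero : hcoef 0 = 1 := by simp [hcoef, poch]

lemma hcoef_succ (n : ℕ) : hcoef (n + 1) = hcoef n * (1 - 2 / ((n:ℝ) + 1) ^ 2) := by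
  have h1 : poch 1 n ≠ 0 := (ascPochhammer_pos n 1 one_pos).ne'
  have h2 : ((n:ℝ) + 1) ≠ 0 := by positivity
  have h3 : (Nat.factorial n : ℝ) ≠ 0 := by positivity
  have hs : Real.sqrt 2 ^ 2 = 2 := Real.sq_sqrt (by norm_num)
  have e : ∀ x : ℝ, poch x (n + 1) = poch x n * (x + n) := fun x => by
    simp [poch, ascPochhammer_succ_eval]
  unfold hcoef
  rw [e, e, e, Nat.factorial_succ]
  push_cast
  have h4 : (1 + (n:ℝ)) ≠ 0 := by positivity
  field_simp
  have : (1 - Real.sqrt 2 + n) * (1 + Real.sqrt 2 + n) = (n + 1) ^ 2 - 2 := by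
    linear_combination -hs
  linear_combination (poch (1 - Real.sqrt 2) n * poch (1 + Real.sqrt 2) n * ((n:ℝ) + 1)) * this

lemma hcoef_le (n : ℕ) : |hcoef n| ≤ 1 := by
  induction n with
  | zero => simp [hcoef_zero]
  | succ n ih =>
    rw [hcoef_succ, abs_mul]
    have : |1 - 2 / ((n:ℝ) + 1) ^ 2| ≤ 1 := by
      have h1 : (1:ℝ) ≤ ((n:ℝ) + 1) ^ 2 := by nlinarith [(Nat.cast_nonneg n : (0:ℝ) ≤ n)]
      have h2 : 2 / ((n:ℝ) + 1) ^ 2 ≤ 2 := div_le_self (by norm_num) h1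
      have h3 : 0 ≤ 2 / ((n:ℝ) + 1) ^ 2 := by positivity
      rw [abs_le]; constructor <;> linarith
    calc _ ≤ 1 * 1 := mul_le_mul ih this (abs_nonneg _) (by norm_num)
      _ = 1 := by norm_num

/-- the hypergeometric function as a series -/
noncomputable def hF (x : ℝ) : ℝ := ∑' k : ℕ, hcoef k * x ^ k

lemma hyper_eq (x : ℝ) : hyper (1 - Real.sqrt 2) (1 + Real.sqrt 2) 1 x = hF x := by
  have : ¬ (1 + Real.sqrt 2 < 1 ∧ 0 < 1 + Real.sqrt 2) := by
    intro h
    have := Real.sqrt_nonneg 2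
    linarith [h.1]
  simp only [hyper, if_neg this]
  rfl

lemma hcoef_pow_le {R : ℝ} {s : ℝ} (hs : s ∈ Icc 0 R) (n : ℕ) : ‖hcoef n * s ^ n‖ ≤ R ^ n := by
  rw [norm_mul, norm_pow, Real.norm_eq_abs, Real.norm_eq_abs, abs_of_nonneg hs.1]
  calc _ ≤ 1 * R ^ n := mul_le_mul (hcoef_le n) (pow_le_pow_left₀ hs.1 hs.2 n)
        (pow_nonneg hs.1 n) (by norm_num)
    _ = _ := one_mul _

lemma hF_hasSum {s : ℝ} (hs : s ∈ Ico 0 1) : HasSum (fun n => hcoef n * s ^ n) (hF s) := by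
  have : Summable (fun n => hcoef n * s ^ n) :=
    Summable.of_norm_bounded (summable_geometric_of_lt_one hs.1 hs.2)
      (fun n => hcoef_pow_le ⟨hs.1, le_rfl⟩ n)
  exact this.hasSum

lemma hF_cont {R : ℝ} (hR : 0 ≤ R) (hR1 : R < 1) : ContinuousOn hF (Icc 0 R) := by
  unfold hF
  exact continuousOn_tsum (u := fun n => R ^ n) (fun n => by fun_prop)
    (summable_geometric_of_lt_one hR hR1) (fun n x hx => hcoef_pow_le hx n)

lemma hF_zero : hF 0 = 1 := by
  have h := hF_hasSum (s := 0) (by simp)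
  have h2 : HasSum (fun n => hcoef n * (0:ℝ) ^ n) (hcoef 0 * 0 ^ 0) :=
    hasSum_single 0 (fun n hn => by simp [hn])
  rw [h.unique h2]; simp [hcoef_zero]

lemma hasSum_int {d : ℕ → ℝ} {g : ℝ → ℝ} {z : ℝ} (hz : 0 ≤ z)
    (hd : Summable fun n => |d n| * z ^ n)
    (hg : ∀ s ∈ Icc 0 z, HasSum (fun n => d n * s ^ n) (g s)) :
    HasSum (fun n : ℕ => d n / (n + 1) * z ^ (n + 1)) (∫ s in (0:ℝ)..z, g s) := by
  have h := intervalIntegral.hasSum_integral_of_dominated_convergence (μ := volume)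
    (a := 0) (b := z) (F := fun (n : ℕ) s => d n * s ^ n) (f := g)
    (fun (n : ℕ) (_ : ℝ) => |d n| * z ^ n)
    (fun n => Continuous.aestronglyMeasurable (by fun_prop))
    (fun n => Filter.Eventually.of_forall fun s hs => by
      rw [uIoc_of_le hz] at hs
      rw [norm_mul, norm_pow, Real.norm_eq_abs, Real.norm_eq_abs, abs_of_nonneg hs.1.le]
      exact mul_le_mul_of_nonneg_left (pow_le_pow_left₀ hs.1.le hs.2 n) (abs_nonneg _))
    (Filter.Eventually.of_forall fun s _ => hd)
    (by simp)
    (Filter.Eventually.of_forall fun s hs => by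
      rw [uIoc_of_le hz] at hs
      exact hg s ⟨hs.1.le, hs.2⟩)
  have e : (fun n : ℕ => d n / (n + 1) * z ^ (n + 1)) =
      fun n : ℕ => ∫ s in (0:ℝ)..z, d n * s ^ n := by
    funext n
    rw [intervalIntegral.integral_const_mul, integral_pow]
    simp
    ring
  rw [e]
  exact h

lemma volt_series {f : ℝ → ℝ} {R : ℝ} (hR1 : R < 1)
    (hf : ∀ s ∈ Icc 0 R, f s = 2 * hF s) {z : ℝ} (hz : z ∈ Icc 0 R) :
    (1 - z) * f z + 2 * volt f z = 2 := by
  have hs1 : ∀ y ∈ Icc 0 R, Summable fun n => |2 * hcoef n| * y ^ n := by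
    intro y hy
    refine Summable.of_norm_bounded
      ((summable_geometric_of_lt_one hy.1 (hy.2.trans_lt hR1)).mul_left 2) fun n => ?_
    have := hcoef_le n
    have h2 := pow_nonneg hy.1 n
    rw [Real.norm_eq_abs, abs_of_nonneg (by positivity), abs_mul, abs_two]
    nlinarith
  have hf1 : ∀ s ∈ Icc 0 R, HasSum (fun n => 2 * hcoef n * s ^ n) (f s) := by
    intro s hs
    rw [hf s hs]
    simpa [mul_assoc] using (hF_hasSum ⟨hs.1, hs.2.trans_lt hR1⟩).mul_left 2
  have h1 : ∀ y ∈ Icc 0 R, HasSum (fun n : ℕ => 2 * hcoef n / (n + 1) * y ^ n) (avgI f y) := by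
    intro y hy
    have := hasSum_int (d := fun n => 2 * hcoef n * y ^ n) (g := fun u => f (y * u))
      zero_le_one ?_ ?_
    · have e : (fun n : ℕ => 2 * hcoef n / (n + 1) * y ^ n) =
          fun n : ℕ => 2 * hcoef n * y ^ n / (n + 1) * 1 ^ (n + 1) := by
        funext n
        simp; ring
      rw [e]
      exact this
    · refine (hs1 y hy).congr fun n => ?_
      rw [abs_mul _ (y ^ n), abs_of_nonneg (pow_nonneg hy.1 n)]; simp
    · intro u hu
      have hyu : y * u ∈ Icc 0 R :=
        ⟨mul_nonneg hy.1 hu.1, (mul_le_of_le_one_right hy.1 hu.2).trans hy.2⟩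
      convert hf1 _ hyu using 2 with n
      rw [mul_pow]; ring
  have h2 : HasSum (fun n : ℕ => 2 * hcoef n / (n + 1) / (n + 1) * z ^ (n + 1)) (volt f z) := by
    refine hasSum_int (d := fun n => 2 * hcoef n / (n + 1)) hz.1 ?_ ?_
    · refine Summable.of_norm_bounded (hs1 z hz) fun n => ?_
      rw [Real.norm_eq_abs, abs_mul, abs_abs, abs_of_nonneg (pow_nonneg hz.1 n), abs_div]
      refine mul_le_mul_of_nonneg_right (div_le_self (abs_nonneg _) ?_) (pow_nonneg hz.1 n)
      rw [abs_of_nonneg (by positivity)]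
      linarith [(Nat.cast_nonneg n : (0:ℝ) ≤ n)]
    · intro s hs
      exact h1 s ⟨hs.1, hs.2.trans hz.2⟩
  have h3 := hf1 z hz
  have h4 := (hasSum_nat_add_iff' 1).2 h3
  have h5 := h3.mul_left z
  have h6 := (h4.sub h5).add (h2.mul_left 2)
  have h7 : HasSum (fun _ : ℕ => (0:ℝ)) 0 := hasSum_zero
  have e : (fun b : ℕ => 2 * hcoef (b + 1) * z ^ (b + 1) - z * (2 * hcoef b * z ^ b) +
        2 * (2 * hcoef b / (b + 1) / (b + 1) * z ^ (b + 1))) = fun _ => 0 := by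
    funext n
    rw [hcoef_succ]
    have : (n:ℝ) + 1 ≠ 0 := by positivity
    field_simp
    ring
  rw [e] at h6
  have h8 := h6.unique h7
  simp [hcoef_zero] at h8
  linear_combination h8

lemma hF_pos {x₀ : ℝ} (hx : x₀ ∈ Ioo (0:ℝ) 1) (hu : ∀ y ∈ Ioo (0:ℝ) 1, hF y = 0 → y = x₀)
    {y : ℝ} (hy : y ∈ Ico 0 x₀) : 0 < hF y := by
  by_contra! hneg
  have hy1 : y < 1 := hy.2.trans hx.2
  have hc := hF_cont hy.1 hy1
  obtain ⟨c, hc1, hc2⟩ := intermediate_value_Icc' hy.1 hc (show (0:ℝ) ∈ Icc (hF y) (hF 0) from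
    ⟨hneg, by rw [hF_zero]; norm_num⟩)
  have hc0 : c ≠ 0 := by
    rintro rfl
    rw [hF_zero] at hc2; norm_num at hc2
  have := hu c ⟨lt_of_le_of_ne hc1.1 hc0.symm, hc1.2.trans_lt hy1⟩ hc2
  linarith [hc1.2, hy.2]

lemma mul_avgI (f : ℝ → ℝ) (y : ℝ) : y * avgI f y = ∫ s in (0:ℝ)..y, f s := by
  unfold avgI
  rw [intervalIntegral.mul_integral_comp_mul_left]
  simp

lemma inner_int (A B c X : ℝ) (hX : X ≠ 0) {q : ℝ → ℝ} (hq : Continuous q) (τ : ℝ) :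
    τ⁻¹ * ∫ s in (0:ℝ)..τ, s * (A * s ^ 2 + B + c * q (X * s ^ 2)) =
      A * τ ^ 3 / 4 + B * τ / 2 + c * (τ / 2) * avgI q (X * τ ^ 2) := by
  by_cases hτ : τ = 0
  · simp [hτ]
  have hQ : ∀ y, HasDerivAt (fun y => ∫ s in (0:ℝ)..y, q s) (q y) y := fun y =>
    intervalIntegral.integral_hasDerivAt_right (hq.intervalIntegrable _ _)
      (hq.stronglyMeasurableAtFilter _ _) hq.continuousAt
  have hd : ∀ s : ℝ, HasDerivAt (fun s => A / 4 * s ^ 4 + B / 2 * s ^ 2 +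
      c / (2 * X) * ∫ t in (0:ℝ)..(X * s ^ 2), q t)
      (s * (A * s ^ 2 + B + c * q (X * s ^ 2))) s := by
    intro s
    have h1 : HasDerivAt (fun s : ℝ => X * s ^ 2) (X * (2 * s)) s := by
      simpa using (hasDerivAt_pow 2 s).const_mul X
    have h2 := (hQ (X * s ^ 2)).comp s h1
    have h3 := (((hasDerivAt_pow 4 s).const_mul (A / 4)).add
      ((hasDerivAt_pow 2 s).const_mul (B / 2))).add (h2.const_mul (c / (2 * X)))
    refine h3.congr_deriv ?_
    push_cast
    field_simp
    try ring
  rw [intervalIntegral.integral_eq_sub_of_hasDerivAt (fun s _ => hd s)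
    (Continuous.intervalIntegrable (by fun_prop) _ _), ← mul_avgI]
  simp
  field_simp

lemma grad_zero (A B : ℝ) (hA : A ≠ 0) (ξ X : ℝ) (hX : 0 < X) {q : ℝ → ℝ} (hq : Continuous q)
    (h : ∀ z ∈ Icc 0 X, (1 - z) * q z - ξ * q z ^ 2 / 2 + 2 * volt q z = 2)
    (hv : volt q X = 1) (r : ℝ) (hr : r ∈ Icc (0:ℝ) 1) :
    Grad A B (B / 2 + A / (4 * X)) (fun r => A * r ^ 2 + B + A * ξ / X * q (X * r ^ 2)) r = 0 := by
  have hz : X * r ^ 2 ∈ Icc 0 X :=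
    ⟨by positivity, mul_le_of_le_one_right hX.le (pow_le_one₀ hr.1 hr.2)⟩
  have he := h _ hz
  unfold Grad
  have ha := avgI_cont hq
  have hd : ∀ τ : ℝ, HasDerivAt (fun τ => A / 16 * τ ^ 4 + B / 4 * τ ^ 2 +
      (A * ξ / X) / (4 * X) * volt q (X * τ ^ 2))
      (A * τ ^ 3 / 4 + B * τ / 2 + (A * ξ / X) * (τ / 2) * avgI q (X * τ ^ 2)) τ := by
    intro s
    have h1 : HasDerivAt (fun s : ℝ => X * s ^ 2) (X * (2 * s)) s := by
      simpa using (hasDerivAt_pow 2 s).const_mul X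
    have h2 := (volt_hasDeriv hq (X * s ^ 2)).comp s h1
    have h3 := (((hasDerivAt_pow 4 s).const_mul (A / 16)).add
      ((hasDerivAt_pow 2 s).const_mul (B / 4))).add (h2.const_mul ((A * ξ / X) / (4 * X)))
    refine h3.congr_deriv ?_
    push_cast
    field_simp
    try ring
  simp only [inner_int A B (A * ξ / X) X hX.ne' hq]
  rw [intervalIntegral.integral_eq_sub_of_hasDerivAt (fun s _ => hd s)
    (Continuous.intervalIntegrable (by fun_prop) _ _)]
  simp only [one_pow, mul_one, hv]
  have : volt q (X * r ^ 2) = 1 - ((1 - X * r ^ 2) * q (X * r ^ 2) - ξ * q (X * r ^ 2) ^ 2 / 2) / 2 := by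
    linarith
  rw [this]
  field_simp
  ring

lemma volt_ext_sub_le {R : ℝ} (hR : 0 ≤ R) (hR1 : R < 1) (p q : C(Icc (0:ℝ) R, ℝ)) {z : ℝ}
    (hz : z ∈ Icc 0 R) : |volt (extI hR p) z - volt (extI hR q) z| ≤ ‖p - q‖ := by
  have h1 : voltL hR (p - q) ⟨z, hz⟩ = volt (extI hR p) z - volt (extI hR q) z := by
    rw [map_sub]; rfl
  have h2 := volt_bound (f := extI hR (p - q)) (C := ‖p - q‖) (extI_cont hR _) hz.1
      (fun s _ => by
        simpa [extI, IccExtend] using (p - q).norm_coe_le_norm (projIcc 0 R hR s))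
  rw [← h1]
  refine h2.trans (mul_le_of_le_one_right (norm_nonneg _) (hz.2.trans hR1.le))

lemma extI_joint {R : ℝ} (hR : 0 ≤ R) :
    Continuous fun u : C(Icc (0:ℝ) R, ℝ) × ℝ => extI hR u.1 u.2 := by
  have : Continuous fun u : C(Icc (0:ℝ) R, ℝ) × ℝ => u.1 (projIcc 0 R hR u.2) := by
    have := continuous_projIcc (h := hR)
    fun_prop
  exact this

lemma volt_mono {q : ℝ → ℝ} (hq : Continuous q) {α β c : ℝ}
    (h : ∀ z ∈ Icc α β, c ≤ avgI q z) :
    ∀ z ∈ Icc α β, ∀ w ∈ Icc α β, z ≤ w → c * (w - z) ≤ volt q w - volt q z := by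
  apply Convex.mul_sub_le_image_sub_of_le_deriv (convex_Icc α β) (volt_cont hq).continuousOn
  · exact fun z _ => (volt_hasDeriv hq z).differentiableAt.differentiableWithinAt
  · intro z hz
    rw [(volt_hasDeriv hq z).deriv]
    exact h z (interior_subset hz)

/-- a continuous curve of solutions of the radial equation bifurcating from the
quadratic profile at the singular value `Ω₀ = B/2 + A/(4x₀)`. -/
theorem radial_bifurcation (A B : ℝ) (hA : A ≠ 0) (x₀ : ℝ)
    (hx₀ : x₀ ∈ Ioo (0:ℝ) 1 ∧ hyper (1 - Real.sqrt 2) (1 + Real.sqrt 2) 1 x₀ = 0 ∧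
      ∀ y ∈ Ioo (0:ℝ) 1, hyper (1 - Real.sqrt 2) (1 + Real.sqrt 2) 1 y = 0 → y = x₀) :
    ∃ a : ℝ, 0 < a ∧ ∃ Ωc : ℝ → ℝ, ∃ fc : ℝ → ℝ → ℝ,
      -- the curve passes through (Ω₀, f₀) at ξ = 0
      Ωc 0 = B / 2 + A / (4 * x₀) ∧
      (∀ r ∈ Icc (0:ℝ) 1, fc 0 r = A * r ^ 2 + B) ∧
      -- continuity of the curve ξ ↦ (Ω_ξ, f_ξ) ∈ ℝ × C([0,1];ℝ)
      ContinuousOn Ωc (Ioo (-a) a) ∧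
      (∀ ξ₀ ∈ Ioo (-a) a, ∀ ε : ℝ, 0 < ε → ∃ δ : ℝ, 0 < δ ∧
        ∀ ξ ∈ Ioo (-a) a, |ξ - ξ₀| < δ →
          ∀ r ∈ Icc (0:ℝ) 1, |fc ξ r - fc ξ₀ r| ≤ ε) ∧
      -- the curve consists of solutions, nontrivial for ξ ≠ 0
      ∀ ξ ∈ Ioo (-a) a,
        ContinuousOn (fc ξ) (Icc 0 1) ∧
        (∀ r ∈ Icc (0:ℝ) 1, Grad A B (Ωc ξ) (fc ξ) r = 0) ∧
        (ξ ≠ 0 → ∃ r ∈ Icc (0:ℝ) 1, fc ξ r ≠ A * r ^ 2 + B) := by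
  obtain ⟨hx, hx0, hxu⟩ := hx₀
  simp only [hyper_eq] at hx0 hxu
  obtain ⟨R, hxR, hR1⟩ := exists_between hx.2
  have hR : 0 < R := hx.1.trans hxR
  let q₀ : C(Icc (0:ℝ) R, ℝ) := ⟨fun z => 2 * hF z,
    (continuousOn_iff_continuous_domRestrict.1 (hF_cont hR.le hR1)).const_mul 2⟩
  have hq0 : ∀ s ∈ Icc 0 R, extI hR.le q₀ s = 2 * hF s := fun s hs =>
    extI_apply hR.le q₀ ⟨s, hs⟩
  have hvs : ∀ z ∈ Icc 0 R, _ := fun z hz => volt_series hR1 hq0 hz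
  obtain ⟨ψ, a₀, ha₀, hψ0, hψc, hψe⟩ := exists_family hR hR1 q₀ (by
    intro z
    have := hvs z z.2
    rwa [extI_apply] at this)
  have hf0 := extI_cont hR.le q₀
  have hvx : volt (extI hR.le q₀) x₀ = 1 := by
    have hm : x₀ ∈ Icc 0 R := ⟨hx.1.le, hxR.le⟩
    have := hvs x₀ hm
    rw [hq0 x₀ hm, hx0] at this
    linarith
  have havg : 0 < avgI (extI hR.le q₀) x₀ := by
    apply intervalIntegral.intervalIntegral_pos_of_pos_on
    · exact Continuous.intervalIntegrable (by fun_prop) _ _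
    · intro u hu
      have h1 : x₀ * u < x₀ := mul_lt_of_lt_one_right hx.1 hu.2
      have h2 : 0 ≤ x₀ * u := mul_nonneg hx.1.le hu.1.le
      rw [hq0 _ ⟨h2, (h1.trans hxR).le⟩]
      have := hF_pos hx hxu ⟨h2, h1⟩
      linarith
    · exact zero_lt_one
  obtain ⟨c, hc, hc2⟩ : ∃ c : ℝ, 0 < c ∧ 2 * c < avgI (extI hR.le q₀) x₀ :=
    ⟨avgI (extI hR.le q₀) x₀ / 3, by linarith, by linarith⟩
  obtain ⟨η, hη, hη0, hηR, hηc⟩ : ∃ η : ℝ, 0 < η ∧ 0 < x₀ - η ∧ x₀ + η < R ∧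
      ∀ z ∈ Icc (x₀ - η) (x₀ + η), 2 * c ≤ avgI (extI hR.le q₀) z := by
    have hev := (avgI_cont hf0).continuousAt.eventually (lt_mem_nhds hc2)
    obtain ⟨ε, hε, hball⟩ := Metric.eventually_nhds_iff_ball.1 hev
    refine ⟨min (ε / 2) (min (x₀ / 2) ((R - x₀) / 2)), ?_, ?_, ?_, ?_⟩
    · have := hx.1
      refine lt_min (by linarith) (lt_min (by linarith) (by linarith))
    · have h1 := (min_le_right (ε / 2) (min (x₀ / 2) ((R - x₀) / 2))).trans (min_le_left _ _)
      linarith [hx.1]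
    · have h1 := (min_le_right (ε / 2) (min (x₀ / 2) ((R - x₀) / 2))).trans (min_le_right _ _)
      linarith
    · intro z hz
      have h1 := min_le_left (ε / 2) (min (x₀ / 2) ((R - x₀) / 2))
      refine (hball z ?_).le
      rw [Metric.mem_ball, Real.dist_eq, abs_lt]
      constructor <;> linarith [hz.1, hz.2]
  obtain ⟨a, ha, haa, hclose⟩ : ∃ a : ℝ, 0 < a ∧ a ≤ a₀ ∧
      ∀ ξ ∈ Ioo (-a) a, ‖ψ ξ - q₀‖ ≤ min c (c * η) := by
    have hcont : ContinuousAt ψ 0 := hψc.continuousAt (Ioo_mem_nhds (by linarith) ha₀)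
    obtain ⟨δ, hδ, hb⟩ := Metric.continuousAt_iff.1 hcont (min c (c * η))
      (lt_min hc (mul_pos hc hη))
    refine ⟨min δ a₀, lt_min hδ ha₀, min_le_right _ _, fun ξ hξ => ?_⟩
    have h1 : dist ξ 0 < δ := by
      rw [dist_zero_right]
      exact (abs_lt.2 hξ).trans_le (min_le_left _ _)
    have := hb h1
    rw [hψ0, dist_eq_norm] at this
    exact this.le
  have hsub : Ioo (-a) a ⊆ Ioo (-a₀) a₀ := Ioo_subset_Ioo (by linarith) haa
  have hJ : Icc (x₀ - η) (x₀ + η) ⊆ Icc 0 R := Icc_subset_Icc hη0.le hηR.le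
  have hmono : ∀ ξ ∈ Ioo (-a) a, ∀ z ∈ Icc (x₀ - η) (x₀ + η), ∀ w ∈ Icc (x₀ - η) (x₀ + η),
      z ≤ w → c * (w - z) ≤ volt (extI hR.le (ψ ξ)) w - volt (extI hR.le (ψ ξ)) z := by
    intro ξ hξ
    apply volt_mono (extI_cont hR.le _)
    intro z hz
    have h1 := avgI_bound (extI_cont hR.le (ψ ξ)) hf0 (hJ hz).1
      (fun s _ => extI_sub_le hR.le (ψ ξ) q₀ s)
    have h2 := (hclose ξ hξ).trans (min_le_left _ _)
    have h3 := hηc z hz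
    have h4 := (abs_le.1 (h1.trans h2)).1
    linarith
  have hmono0 := volt_mono hf0 hηc
  have hxJ : x₀ ∈ Icc (x₀ - η) (x₀ + η) := ⟨by linarith, by linarith⟩
  have hlJ : x₀ - η ∈ Icc (x₀ - η) (x₀ + η) := ⟨le_rfl, by linarith⟩
  have hrJ : x₀ + η ∈ Icc (x₀ - η) (x₀ + η) := ⟨by linarith, le_rfl⟩
  have hex : ∀ ξ ∈ Ioo (-a) a, ∃ X ∈ Icc (x₀ - η) (x₀ + η), volt (extI hR.le (ψ ξ)) X = 1 := by
    intro ξ hξ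
    have h2 := (hclose ξ hξ).trans (min_le_right _ _)
    have hl := hmono0 _ hlJ _ hxJ (by linarith)
    have hr := hmono0 _ hxJ _ hrJ (by linarith)
    have hl' := (volt_ext_sub_le hR.le hR1 (ψ ξ) q₀ (hJ hlJ)).trans h2
    have hr' := (volt_ext_sub_le hR.le hR1 (ψ ξ) q₀ (hJ hrJ)).trans h2
    rw [abs_le] at hl' hr'
    have hcη := mul_pos hc hη
    exact intermediate_value_Icc (by linarith) (volt_cont (extI_cont hR.le (ψ ξ))).continuousOn
      ⟨by nlinarith [hl'.2], by nlinarith [hr'.1]⟩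
  choose! X hXJ hXv using hex
  have hXlip : ∀ ξ ∈ Ioo (-a) a, ∀ w ∈ Icc (x₀ - η) (x₀ + η),
      c * |X ξ - w| ≤ |volt (extI hR.le (ψ ξ)) (X ξ) - volt (extI hR.le (ψ ξ)) w| := by
    intro ξ hξ w hw
    rcases le_total w (X ξ) with h | h
    · rw [abs_of_nonneg (sub_nonneg.2 h)]
      exact (hmono ξ hξ w hw _ (hXJ ξ hξ) h).trans (le_abs_self _)
    · rw [abs_sub_comm, abs_of_nonneg (sub_nonneg.2 h), abs_sub_comm]
      exact (hmono ξ hξ _ (hXJ ξ hξ) w hw h).trans (le_abs_self _)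
  have h0a : (0:ℝ) ∈ Ioo (-a) a := ⟨by linarith, ha⟩
  have hX0 : X 0 = x₀ := by
    have h1 := hXlip 0 h0a x₀ hxJ
    rw [hXv 0 h0a, hψ0, hvx, sub_self, abs_zero] at h1
    have h2 : |X 0 - x₀| ≤ 0 := by
      by_contra! h
      have := mul_pos hc h
      linarith
    exact sub_eq_zero.1 (abs_nonpos_iff.1 h2)
  have hψa : ContinuousOn ψ (Ioo (-a) a) := hψc.mono hsub
  have hXpos : ∀ ξ ∈ Ioo (-a) a, 0 < X ξ := fun ξ hξ => hη0.trans_le (hXJ ξ hξ).1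
  have hXc : ContinuousOn X (Ioo (-a) a) := by
    intro ξ₀ hξ₀
    have hψ1 := hψa ξ₀ hξ₀
    rw [ContinuousWithinAt, tendsto_iff_dist_tendsto_zero] at hψ1 ⊢
    have hlim : Filter.Tendsto (fun ξ => c⁻¹ * dist (ψ ξ) (ψ ξ₀)) (nhdsWithin ξ₀ (Ioo (-a) a))
        (nhds 0) := by simpa using hψ1.const_mul c⁻¹
    refine squeeze_zero' (Filter.Eventually.of_forall fun _ => dist_nonneg) ?_ hlim
    filter_upwards [self_mem_nhdsWithin] with ξ hξ
    have h1 := hXlip ξ hξ (X ξ₀) (hXJ ξ₀ hξ₀)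
    rw [hXv ξ hξ, ← hXv ξ₀ hξ₀] at h1
    have h2 := volt_ext_sub_le hR.le hR1 (ψ ξ) (ψ ξ₀) (hJ (hXJ ξ₀ hξ₀))
    rw [abs_sub_comm] at h2
    rw [Real.dist_eq, dist_eq_norm, le_inv_mul_iff₀ hc]
    exact h1.trans h2
  let fc : ℝ → ℝ → ℝ := fun ξ r =>
    A * r ^ 2 + B + A * ξ / X ξ * extI hR.le (ψ ξ) (X ξ * r ^ 2)
  refine ⟨a, ha, fun ξ => B / 2 + A / (4 * X ξ), fc, by simp only [hX0], ?_, ?_, ?_, ?_⟩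
  · intro r _
    simp [fc]
  · refine continuousOn_const.add (continuousOn_const.div (continuousOn_const.mul hXc) ?_)
    intro ξ hξ
    have := hXpos ξ hξ
    positivity
  · intro ξ₀ hξ₀ ε hε
    have hjoint : ContinuousOn (Function.uncurry fc) (Ioo (-a) a ×ˢ Icc (0:ℝ) 1) := by
      have hX1 : ContinuousOn (fun p : ℝ × ℝ => X p.1) (Ioo (-a) a ×ˢ Icc (0:ℝ) 1) :=
        hXc.comp continuousOn_fst fun p hp => hp.1
      have hψ1 : ContinuousOn (fun p : ℝ × ℝ => ψ p.1) (Ioo (-a) a ×ˢ Icc (0:ℝ) 1) :=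
        hψa.comp continuousOn_fst fun p hp => hp.1
      have h2 : ContinuousOn (fun p : ℝ × ℝ => X p.1 * p.2 ^ 2) (Ioo (-a) a ×ˢ Icc (0:ℝ) 1) :=
        hX1.mul (by fun_prop)
      have h3 : ContinuousOn (fun p : ℝ × ℝ => extI hR.le (ψ p.1) (X p.1 * p.2 ^ 2))
          (Ioo (-a) a ×ˢ Icc (0:ℝ) 1) :=
        (extI_joint hR.le).comp_continuousOn (hψ1.prodMk h2)
      have h4 : ContinuousOn (fun p : ℝ × ℝ => A * p.1 / X p.1) (Ioo (-a) a ×ˢ Icc (0:ℝ) 1) :=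
        ContinuousOn.div (by fun_prop) hX1 fun p hp => (hXpos _ hp.1).ne'
      exact ContinuousOn.add (by fun_prop) (h4.mul h3)
    obtain ⟨v, hv, hvε⟩ := (isCompact_Icc (a := (0:ℝ)) (b := 1)).mem_uniformity_of_prod hjoint hξ₀
      (Metric.dist_mem_uniformity hε)
    obtain ⟨δ, hδ, hb⟩ := Metric.mem_nhdsWithin_iff.1 hv
    refine ⟨δ, hδ, fun ξ hξ hd r hr => ?_⟩
    have := hvε ξ (hb ⟨by rwa [Metric.mem_ball, Real.dist_eq], hξ⟩) r hr
    exact le_of_lt this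
  · intro ξ hξ
    have hqc := extI_cont hR.le (ψ ξ)
    have heq : ∀ z ∈ Icc 0 R, (1 - z) * extI hR.le (ψ ξ) z - ξ * extI hR.le (ψ ξ) z ^ 2 / 2
        + 2 * volt (extI hR.le (ψ ξ)) z = 2 := by
      intro z hz
      have := hψe ξ (hsub hξ) ⟨z, hz⟩
      rwa [← extI_apply hR.le] at this
    refine ⟨Continuous.continuousOn (by fun_prop), fun r hr => ?_, fun hne => ?_⟩
    · exact grad_zero A B hA ξ (X ξ) (hXpos ξ hξ) hqc
        (fun z hz => heq z ⟨hz.1, hz.2.trans (hJ (hXJ ξ hξ)).2⟩) (hXv ξ hξ) r hr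
    · refine ⟨0, ⟨le_rfl, zero_le_one⟩, ?_⟩
      have h0 := heq 0 ⟨le_rfl, hR.le⟩
      have hv0 : volt (extI hR.le (ψ ξ)) 0 = 0 := by simp [volt]
      have hqne : extI hR.le (ψ ξ) 0 ≠ 0 := by
        intro h
        rw [h, hv0] at h0
        norm_num at h0
      intro h
      have hpos := hXpos ξ hξ
      have h1 : A * ξ / X ξ * extI hR.le (ψ ξ) 0 = 0 := by
        simpa [fc] using h
      have h2 : A * ξ / X ξ ≠ 0 := div_ne_zero (mul_ne_zero hA hne) hpos.ne'
      exact mul_ne_zero h2 hqne h1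
end

section
/- Let k∈ℕ and α∈(0,1). Suppose φ:𝕋→ℂ belongs to C^{k,α}(𝕋) and has the form φ(w)=w·Σ_{n≥0}a_n w^n for w∈𝕋, with real coefficients a_n. Define C(φ)(z)=Σ_{n≥0}a_n z^n for z∈𝔻̄. Then C(φ) is well-defined and continuous on 𝔻̄, holomorphic on 𝔻, belongs to C^{k,α}(𝔻̄), and satisfies ‖C(φ)‖_{C^{k,α}(𝔻̄)}≤6‖φ‖_{C^{k,α}(𝕋)}; in particular the linear map C is continuous from this subspace of C^{k,α}(𝕋) to C^{k,α}(𝔻̄). -/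
open MeasureTheory Metric Real Set

/-- Membership in the Hölder space `C^{k,α}(𝔻̄)` for a function on the closed unit disc. -/
def MemHolderDisc (k : ℕ) (α : ℝ) (f : ℂ → ℂ) : Prop :=
  ContDiffOn ℝ k f (closedBall 0 1) ∧
  ∃ C : ℝ, ∀ x ∈ closedBall (0:ℂ) 1, ∀ y ∈ closedBall (0:ℂ) 1,
    ‖iteratedFDerivWithin ℝ k f (closedBall 0 1) x
      - iteratedFDerivWithin ℝ k f (closedBall 0 1) y‖ ≤ C * ‖x - y‖ ^ α

/-- The `C^{k,α}(𝔻̄)` norm of a function on the closed unit disc. -/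
noncomputable def discHolderNorm (k : ℕ) (α : ℝ) (f : ℂ → ℂ) : ℝ :=
  (∑ j ∈ Finset.range (k + 1),
    sSup ((fun x => ‖iteratedFDerivWithin ℝ j f (closedBall 0 1) x‖) '' closedBall 0 1)) +
  sSup {c : ℝ | ∃ x ∈ closedBall (0:ℂ) 1, ∃ y ∈ closedBall (0:ℂ) 1, x ≠ y ∧
    c = ‖iteratedFDerivWithin ℝ k f (closedBall 0 1) x
          - iteratedFDerivWithin ℝ k f (closedBall 0 1) y‖ / ‖x - y‖ ^ α}

/-- The circle parametrization `θ ↦ φ(e^{iθ})` of a function on the unit circle. -/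
noncomputable def circParam (φ : ℂ → ℂ) : ℝ → ℂ := fun θ => φ (Complex.exp (θ * Complex.I))

/-- Membership in the Hölder space `C^{k,α}(𝕋)`, via the circle parametrization. -/
def MemHolderCircle (k : ℕ) (α : ℝ) (φ : ℂ → ℂ) : Prop :=
  ContDiff ℝ k (circParam φ) ∧
  ∃ C : ℝ, ∀ θ₁ θ₂ : ℝ,
    ‖iteratedDeriv k (circParam φ) θ₁ - iteratedDeriv k (circParam φ) θ₂‖ ≤ C * |θ₁ - θ₂| ^ α

/-- The `C^{k,α}(𝕋)` norm of a function on the unit circle, via the circle parametrization. -/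
noncomputable def circleHolderNorm (k : ℕ) (α : ℝ) (φ : ℂ → ℂ) : ℝ :=
  (∑ j ∈ Finset.range (k + 1),
    sSup ((fun θ => ‖iteratedDeriv j (circParam φ) θ‖) '' Icc 0 (2 * Real.pi))) +
  sSup {c : ℝ | ∃ θ₁ ∈ Icc 0 (2 * Real.pi), ∃ θ₂ ∈ Icc 0 (2 * Real.pi), θ₁ ≠ θ₂ ∧
    c = ‖iteratedDeriv k (circParam φ) θ₁ - iteratedDeriv k (circParam φ) θ₂‖ / |θ₁ - θ₂| ^ α}



/-- numerical check for small `k` -/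
theorem num_check : ∀ k < 26, ∀ N < 400,
    3 * (k * (k + 1) / 2) * (N.descFactorial k * N ^ k) ≤
      2 * (N * (N + 1)) ^ k + 3 * (k * (k + 1) / 2) * ((N - 1).descFactorial k * (N + 1) ^ k) := by
  decide +kernel

/-- the multiplier `∏_{l=1}^k (1 - l/N)` -/
noncomputable def mm (k N : ℕ) : ℝ := ((N - 1).descFactorial k : ℝ) / (N : ℝ) ^ k
/-- `k(k+1)/2` -/
noncomputable def BB (k : ℕ) : ℝ := (k : ℝ) * (k + 1) / 2

theorem mm_zero_of_le {k N : ℕ} (hk : 1 ≤ k) (h : N ≤ k) : mm k N = 0 := by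
  unfold mm
  rw [Nat.descFactorial_eq_zero_iff_lt.2 (by omega)]; simp

theorem mm_succ {k N : ℕ} (h : k + 1 ≤ N) : mm (k + 1) N = mm k N * (1 - ((k + 1 : ℕ) : ℝ) / N) := by
  unfold mm
  have hN : (N : ℝ) ≠ 0 := by
    have : 0 < N := by omega
    positivity
  rw [Nat.descFactorial_succ]
  have : ((N - 1 - k : ℕ) : ℝ) = N - (k + 1 : ℕ) := by
    rw [Nat.sub_sub, Nat.cast_sub (by omega)]; push_cast; ring
  push_cast at this ⊢
  rw [this]; field_simp; ring

theorem mm_zero (N : ℕ) : mm 0 N = 1 := by simp [mm]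

theorem mm_nonneg (k N : ℕ) : 0 ≤ mm k N := by unfold mm; positivity

theorem fac_nonneg {k N : ℕ} (h : k ≤ N) : 0 ≤ 1 - (k : ℝ) / N := by
  rcases Nat.eq_zero_or_pos N with h0 | h0
  · subst h0; simp
  rw [sub_nonneg, div_le_one (by positivity)]; exact_mod_cast h

theorem mm_le_exp {k N : ℕ} (h : k ≤ N) : mm k N ≤ exp (-(BB k / N)) := by
  induction k with
  | zero => simp [mm_zero, BB]
  | succ k ih =>
    rw [mm_succ h]
    have h1 := ih (by omega)
    have h2 : 1 - ((k + 1 : ℕ) : ℝ) / N ≤ exp (-(((k + 1 : ℕ) : ℝ) / N)) := by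
      have := Real.add_one_le_exp (-(((k + 1 : ℕ) : ℝ) / N)); linarith
    calc _ ≤ exp (-(BB k / N)) * exp (-(((k + 1 : ℕ) : ℝ) / N)) :=
          mul_le_mul h1 h2 (fac_nonneg h) (exp_pos _).le
      _ = _ := by rw [← exp_add]; congr 1; unfold BB; push_cast; ring

theorem BB_nonneg (k : ℕ) : 0 ≤ BB k := by unfold BB; positivity

theorem mm_le_one {k N : ℕ} (hk : 1 ≤ k) : mm k N ≤ 1 := by
  by_cases h : k ≤ N
  · refine (mm_le_exp h).trans (exp_le_one_iff.2 ?_)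
    have := div_nonneg (BB_nonneg k) (Nat.cast_nonneg (α := ℝ) N); linarith
  · rw [mm_zero_of_le hk (by omega)]; norm_num

theorem BB_succ (k : ℕ) : BB (k + 1) = BB k + (k + 1) := by unfold BB; push_cast; ring

theorem one_sub_mm_le {k N : ℕ} (hk : 1 ≤ k) (hN : 1 ≤ N) : 1 - mm k N ≤ BB k / N := by
  have hN' : (0 : ℝ) < N := by exact_mod_cast hN
  by_cases h : k ≤ N
  · clear hk
    induction k with
    | zero => simp [mm_zero, BB]
    | succ k ih =>
      rw [mm_succ h, BB_succ, add_div]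
      have h1 := ih (by omega)
      have h3 : mm k N ≤ 1 := by
        rcases Nat.eq_zero_or_pos k with h0 | h0
        · subst h0; simp [mm_zero]
        · exact mm_le_one h0
      have h4 : 0 ≤ ((k : ℝ) + 1) / N := by positivity
      push_cast
      nlinarith
  · rw [mm_zero_of_le hk (by omega), sub_zero, le_div_iff₀ hN']
    have h1 : (N : ℝ) ≤ k := by exact_mod_cast (by omega : N ≤ k)
    have h2 : (1 : ℝ) ≤ k := by exact_mod_cast hk
    unfold BB; nlinarith

/-- increments -/
noncomputable def dd (k N : ℕ) : ℝ := mm k (N + 1) - mm k N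

theorem dd_aux {k N : ℕ} (h : k + 1 ≤ N) : 0 ≤ dd (k + 1) N ∧
    dd (k + 1) N ≤ BB (k + 1) / (N * (N + 1)) * mm k (N + 1) := by
  have hN : (0 : ℝ) < N := by exact_mod_cast (by omega : 0 < N)
  have key : ∀ j, dd (j + 1) N = 0 ∨ True := fun _ => Or.inr trivial
  have rec1 : ∀ j, j + 1 ≤ N → dd (j + 1) N = dd j N * (1 - ((j + 1 : ℕ) : ℝ) / (N + 1 : ℕ))
      + mm j N * (((j : ℝ) + 1) / (N * (N + 1))) := by
    intro j hj
    unfold dd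
    rw [mm_succ hj, mm_succ (by omega)]
    push_cast; field_simp; ring
  induction k with
  | zero =>
    rw [rec1 0 h]
    have : dd 0 N = 0 := by simp [dd, mm_zero]
    rw [this, mm_zero, mm_zero]
    constructor
    · simp; positivity
    · apply le_of_eq; simp [BB]
  | succ k ih =>
    obtain ⟨i1, i2⟩ := ih (by omega)
    rw [rec1 (k + 1) h]
    have f0 : 0 ≤ 1 - ((k + 1 + 1 : ℕ) : ℝ) / (N + 1 : ℕ) := fac_nonneg (by omega)
    have f1 : 1 - ((k + 1 + 1 : ℕ) : ℝ) / (N + 1 : ℕ) ≤ 1 - ((k + 1 : ℕ) : ℝ) / (N + 1 : ℕ) := by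
      gcongr; omega
    have m0 := mm_nonneg k (N + 1)
    have m1 := mm_nonneg (k + 1) N
    have hc : (0 : ℝ) ≤ (((k + 1 : ℕ) : ℝ) + 1) / (N * (N + 1)) := by positivity
    refine ⟨by positivity, ?_⟩
    have e1 : dd (k + 1) N * (1 - ((k + 1 + 1 : ℕ) : ℝ) / (N + 1 : ℕ)) ≤
        BB (k + 1) / (N * (N + 1)) * mm (k + 1) (N + 1) := by
      rw [mm_succ (by omega : k + 1 ≤ N + 1), ← mul_assoc]
      exact mul_le_mul i2 f1 f0 (mul_nonneg (div_nonneg (BB_nonneg _) (by positivity)) m0)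
    have e2 : mm (k + 1) N ≤ mm (k + 1) (N + 1) := by unfold dd at i1; linarith
    have e3 := mul_le_mul_of_nonneg_right e2 hc
    rw [BB_succ (k + 1)]
    have e4 : (BB (k + 1) + (((k + 1 : ℕ) : ℝ) + 1)) / ((N : ℝ) * (N + 1)) * mm (k + 1) (N + 1) =
        BB (k + 1) / (N * (N + 1)) * mm (k + 1) (N + 1) +
        mm (k + 1) (N + 1) * ((((k + 1 : ℕ) : ℝ) + 1) / (N * (N + 1))) := by ring
    rw [e4]
    linarith

theorem dd_zero_of_lt {k N : ℕ} (hk : 1 ≤ k) (h : N < k) : dd k N = 0 := by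
  unfold dd; rw [mm_zero_of_le hk h.le, mm_zero_of_le hk h, sub_zero]

theorem dd_nonneg {k : ℕ} (hk : 1 ≤ k) (N : ℕ) : 0 ≤ dd k N := by
  by_cases h : N < k
  · rw [dd_zero_of_lt hk h]
  · obtain ⟨j, rfl⟩ := Nat.exists_eq_add_of_le' hk
    exact (dd_aux (by omega)).1

theorem mm_le_one' (k N : ℕ) : mm k N ≤ 1 := by
  rcases Nat.eq_zero_or_pos k with h0 | h0
  · subst h0; simp [mm_zero]
  · exact mm_le_one h0

theorem dd_le {k : ℕ} (hk : 1 ≤ k) (N : ℕ) : dd k N ≤ BB k / (N * (N + 1)) := by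
  by_cases h : N < k
  · rw [dd_zero_of_lt hk h]; exact div_nonneg (BB_nonneg _) (by positivity)
  · obtain ⟨j, rfl⟩ := Nat.exists_eq_add_of_le' hk
    refine (dd_aux (by omega)).2.trans ?_
    have : 0 ≤ BB (j + 1) / ((N : ℝ) * (N + 1)) := div_nonneg (BB_nonneg _) (by positivity)
    nlinarith [mm_le_one' j (N + 1)]

theorem BB_pos {k : ℕ} (hk : 1 ≤ k) : 0 < BB k := by
  have : (0 : ℝ) < k := by exact_mod_cast hk
  unfold BB; positivity

theorem BB_eq_nat (k : ℕ) : BB k = ((k * (k + 1) / 2 : ℕ) : ℝ) := by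
  rw [Nat.cast_div (Nat.even_mul_succ_self k).two_dvd (by norm_num)]
  unfold BB; push_cast; ring

theorem exp_neg_two_bound : exp (-2) ≤ 0.13534 := by
  have := Real.exp_one_gt_d9
  rw [show (-2 : ℝ) = -(1 + 1) by norm_num, exp_neg, exp_add]
  rw [inv_le_comm₀ (by positivity) (by norm_num)]
  nlinarith

theorem dd_max {k : ℕ} (hk : 1 ≤ k) (N : ℕ) : dd k N * BB k ≤ 2 / 3 := by
  have hB := BB_pos hk
  by_cases h : N < k
  · rw [dd_zero_of_lt hk h]; norm_num
  push Not at h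
  have hN : (0 : ℝ) < N := by exact_mod_cast (by omega : 0 < N)
  by_cases hk26 : k < 26
  · by_cases hN4 : N < 400
    · have := num_check k hk26 N hN4
      have h2 : 3 * BB k * ((N.descFactorial k : ℝ) * (N : ℝ) ^ k) ≤
        2 * ((N : ℝ) * (N + 1)) ^ k + 3 * BB k * (((N - 1).descFactorial k : ℝ) * ((N : ℝ) + 1) ^ k) := by
        rw [BB_eq_nat]; exact_mod_cast this
      unfold dd mm
      simp only [Nat.add_sub_cancel]
      push_cast
      rw [div_sub_div _ _ (by positivity) (by positivity), div_mul_eq_mul_div,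
        div_le_div_iff₀ (by positivity) (by norm_num)]
      rw [mul_pow] at h2
      nlinarith
    · have h1 := dd_le hk N
      have h2 : (400 : ℝ) ≤ N := by exact_mod_cast (by omega : 400 ≤ N)
      have h3 : (k : ℝ) ≤ 25 := by exact_mod_cast (by omega : k ≤ 25)
      have h5 : (0 : ℝ) ≤ k := by positivity
      have h4 : BB k ≤ 325 := by unfold BB; nlinarith
      calc dd k N * BB k ≤ BB k / (N * (N + 1)) * BB k := by gcongr
        _ ≤ 325 / (400 * (400 + 1)) * 325 := by gcongr
        _ ≤ 2 / 3 := by norm_num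
  · obtain ⟨j, rfl⟩ := Nat.exists_eq_add_of_le' hk
    have h1 := (dd_aux h).2
    have h2 := mm_le_exp (k := j) (N := N + 1) (by omega)
    have hj : (25 : ℝ) ≤ j := by exact_mod_cast (by omega : 25 ≤ j)
    have hNr : (26 : ℝ) ≤ N := by exact_mod_cast (by omega : 26 ≤ N)
    have hBj : 0 < BB j := BB_pos (by omega)
    have hr : BB (j + 1) ≤ 27 / 25 * BB j := by
      unfold BB; push_cast; nlinarith
    set x : ℝ := (N : ℝ) + 1 with hx
    have hx0 : 0 < x := by positivity
    set y := BB j / x with hy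
    have hy0 : 0 < y := by positivity
    have hye : y ^ 2 * exp (-y) ≤ 4 * exp (-2) := by
      have e1 := Real.add_one_le_exp (y / 2 - 1)
      have e2 : y / 2 ≤ exp (y / 2 - 1) := by linarith
      have e3 : (y / 2) ^ 2 ≤ exp (y / 2 - 1) ^ 2 := by gcongr
      rw [← Real.exp_nat_mul] at e3
      have e4 : exp (((2 : ℕ) : ℝ) * (y / 2 - 1)) * exp (-y) = exp (-2) := by
        rw [← exp_add]; congr 1; push_cast; ring
      have := mul_le_mul_of_nonneg_right e3 (exp_pos (-y)).le
      rw [e4] at this; linarith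
    have h2' : mm j (N + 1) ≤ exp (-y) := by
      rw [hy, hx]; exact_mod_cast h2
    have hxN : 1 / (N * x) ≤ 27 / 26 / x ^ 2 := by
      rw [div_le_div_iff₀ (by positivity) (by positivity)]
      rw [hx]; nlinarith
    calc dd (j + 1) N * BB (j + 1) ≤ (BB (j + 1) / (N * x) * mm j (N + 1)) * BB (j + 1) := by
          gcongr
      _ ≤ (BB (j + 1) / (N * x) * exp (-y)) * BB (j + 1) := by gcongr
      _ = BB (j + 1) ^ 2 * (1 / (N * x)) * exp (-y) := by ring
      _ ≤ (27 / 25 * BB j) ^ 2 * (27 / 26 / x ^ 2) * exp (-y) := by gcongr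
      _ = (27 / 25) ^ 2 * (27 / 26) * (y ^ 2 * exp (-y)) := by rw [hy]; field_simp
      _ ≤ (27 / 25) ^ 2 * (27 / 26) * (4 * 0.13534) := by
          have := exp_neg_two_bound
          exact mul_le_mul_of_nonneg_left (hye.trans (by linarith)) (by norm_num)
      _ ≤ 2 / 3 := by norm_num


theorem S0_range {k : ℕ} (hk : 1 ≤ k) (n : ℕ) :
    ∑ N ∈ Finset.range n, (1 - mm k (N + 1)) ^ 2 ≤ 2 * BB k := by
  have hB := BB_pos hk
  set b : ℕ := k * (k + 1) / 2 with hb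
  have hBb : BB k = b := BB_eq_nat k
  have hb0 : 0 < b := by
    have : (0 : ℝ) < b := hBb ▸ hB
    exact_mod_cast this
  have c0 : ∀ N, 0 ≤ 1 - mm k N := fun N => by linarith [mm_le_one' k N]
  have c1 : ∀ N, 1 - mm k N ≤ 1 := fun N => by linarith [mm_nonneg k N]
  have i1 : ∀ n : ℕ, ∑ N ∈ Finset.range n, (1 - mm k (N + 1)) ^ 2 ≤ (n : ℝ) := by
    intro n
    calc _ ≤ ∑ N ∈ Finset.range n, (1 : ℝ) := by
          refine Finset.sum_le_sum fun N _ => ?_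
          exact pow_le_one₀ (c0 _) (c1 _)
      _ = n := by simp
  have i2 : ∀ n : ℕ, b ≤ n → ∑ N ∈ Finset.range n, (1 - mm k (N + 1)) ^ 2
      ≤ 2 * BB k - BB k ^ 2 / n := by
    intro n hn
    induction n, hn using Nat.le_induction with
    | base =>
      refine (i1 b).trans (le_of_eq ?_)
      have : (b : ℝ) ≠ 0 := by positivity
      rw [hBb]; field_simp; ring
    | succ n hn ih =>
      rw [Finset.sum_range_succ]
      have hn0 : (0 : ℝ) < n := by exact_mod_cast (by omega : 0 < n)
      have h1 : (1 - mm k (n + 1)) ^ 2 ≤ (BB k / ((n + 1 : ℕ) : ℝ)) ^ 2 :=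
        pow_le_pow_left₀ (c0 _) (one_sub_mm_le hk (by omega)) 2
      have h2 : (BB k / ((n + 1 : ℕ) : ℝ)) ^ 2 ≤ BB k ^ 2 / n - BB k ^ 2 / ((n + 1 : ℕ) : ℝ) := by
        rw [div_pow, div_sub_div _ _ (by positivity) (by positivity),
          div_le_div_iff₀ (by positivity) (by positivity)]
        push_cast
        have : 0 ≤ BB k ^ 2 * ((n : ℝ) + 1) := by positivity
        nlinarith
      linarith
  rcases le_total n b with h | h
  · refine (i1 n).trans ?_
    have : (n : ℝ) ≤ b := by exact_mod_cast h
    rw [hBb]; rw [hBb] at hB; linarith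
  · refine (i2 n h).trans ?_
    have : 0 ≤ BB k ^ 2 / n := by positivity
    linarith

theorem mm_mono {k : ℕ} (hk : 1 ≤ k) {m n : ℕ} (h : m ≤ n) : mm k m ≤ mm k n := by
  have : Monotone (mm k) := monotone_nat_of_le_succ fun n => by
    have := dd_nonneg hk n; unfold dd at this; linarith
  exact this h

theorem T_gen {k : ℕ} (hk : 1 ≤ k) (N1 : ℕ) (h1 : 1 ≤ N1) (n : ℕ) :
    ∑ N ∈ Finset.range n, dd k N ^ 2 ≤ 2 / (3 * BB k) * mm k N1 + BB k ^ 2 / (3 * N1 ^ 3) := by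
  have hB := BB_pos hk
  have hN1 : (0 : ℝ) < N1 := by exact_mod_cast h1
  have i1 : ∀ n, ∑ N ∈ Finset.range n, dd k N ^ 2 ≤ 2 / (3 * BB k) * mm k n := by
    intro n
    calc _ ≤ ∑ N ∈ Finset.range n, 2 / (3 * BB k) * dd k N := by
          refine Finset.sum_le_sum fun N _ => ?_
          have h2 := dd_max hk N
          have h3 := dd_nonneg hk N
          rw [pow_two]
          refine mul_le_mul_of_nonneg_right ?_ h3
          rw [le_div_iff₀ (by positivity)]; linarith
      _ = 2 / (3 * BB k) * mm k n := by
          rw [← Finset.mul_sum]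
          unfold dd
          rw [Finset.sum_range_sub, mm_zero_of_le hk (Nat.zero_le k), sub_zero]
  have i2 : ∀ n : ℕ, N1 ≤ n → ∑ N ∈ Finset.range n, dd k N ^ 2 ≤
      2 / (3 * BB k) * mm k N1 + BB k ^ 2 / 3 * (1 / N1 ^ 3 - 1 / n ^ 3) := by
    intro n hn
    induction n, hn using Nat.le_induction with
    | base => simpa using i1 N1
    | succ n hn ih =>
      rw [Finset.sum_range_succ]
      have hn0 : (0 : ℝ) < n := by exact_mod_cast (by omega : 0 < n)
      have h2 : dd k n ^ 2 ≤ (BB k / (n * (n + 1))) ^ 2 :=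
        pow_le_pow_left₀ (dd_nonneg hk n) (dd_le hk n) 2
      have h3 : (1 : ℝ) / (n * (n + 1)) ^ 2 ≤ 1 / 3 * (1 / n ^ 3 - 1 / ((n + 1 : ℕ) : ℝ) ^ 3) := by
        push_cast
        rw [div_sub_div _ _ (by positivity) (by positivity), div_mul_div_comm,
          div_le_div_iff₀ (by positivity) (by positivity)]
        have : 0 ≤ (n : ℝ) ^ 2 * (n + 1) ^ 2 := by positivity
        nlinarith
      have h4 : (BB k / (n * (n + 1))) ^ 2 ≤
          BB k ^ 2 * (1 / 3 * (1 / n ^ 3 - 1 / ((n + 1 : ℕ) : ℝ) ^ 3)) := by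
        rw [div_pow, div_eq_mul_one_div]
        exact mul_le_mul_of_nonneg_left h3 (by positivity)
      linarith
  rcases le_total n N1 with h | h
  · refine (i1 n).trans ?_
    have := mul_le_mul_of_nonneg_left (mm_mono hk h) (by positivity : 0 ≤ 2 / (3 * BB k))
    have h2 : 0 ≤ BB k ^ 2 / (3 * (N1 : ℝ) ^ 3) := by positivity
    linarith
  · refine (i2 n h).trans ?_
    have h2 : 0 ≤ 1 / (n : ℝ) ^ 3 := by positivity
    have h3 : BB k ^ 2 / (3 * (N1 : ℝ) ^ 3) = BB k ^ 2 / 3 * (1 / N1 ^ 3) := by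
      field_simp
    rw [h3]
    gcongr
    linarith

theorem exp_five_sixth : exp (-(5 / 6)) ≤ 0.4347 := by
  have h := Real.sum_le_exp_of_nonneg (x := 5 / 6) (by norm_num) 7
  rw [exp_neg, inv_le_comm₀ (by positivity) (by norm_num)]
  refine le_trans ?_ h
  norm_num [Finset.sum_range_succ, Nat.factorial]

theorem T_one (n : ℕ) : ∑ N ∈ Finset.range n, dd 1 N ^ 2 ≤ 1 / 3 := by
  refine (T_gen le_rfl 1 le_rfl n).trans (le_of_eq ?_)
  rw [mm_zero_of_le le_rfl le_rfl]; norm_num [BB]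

theorem T_two (n : ℕ) : ∑ N ∈ Finset.range n, dd 2 N ^ 2 ≤ 13 / 81 := by
  refine (T_gen (by norm_num) 3 (by norm_num) n).trans (le_of_eq ?_)
  norm_num [BB, mm, Nat.descFactorial]

theorem T_ge_three {k : ℕ} (hk : 3 ≤ k) (n : ℕ) :
    ∑ N ∈ Finset.range n, dd k N ^ 2 ≤ 1 / 2 / BB k := by
  have hk1 : 1 ≤ k := by omega
  have hB := BB_pos hk1
  set b : ℕ := k * (k + 1) / 2 with hb
  have hBb : BB k = b := BB_eq_nat k
  have hkb : 2 * k ≤ b := by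
    rw [hb, Nat.le_div_iff_mul_le (by norm_num)]; nlinarith
  refine (T_gen hk1 (b + b / 5) (by omega) n).trans ?_
  have hN0 : (0 : ℝ) < ((b + b / 5 : ℕ) : ℝ) := by exact_mod_cast (by omega)
  have u1 : 5 * ((b + b / 5 : ℕ) : ℝ) ≤ 6 * BB k := by
    rw [hBb]; exact_mod_cast (by omega : 5 * (b + b / 5) ≤ 6 * b)
  have u2 : 7 * BB k ≤ 6 * ((b + b / 5 : ℕ) : ℝ) := by
    rw [hBb]
    have : 7 * b ≤ 6 * (b + b / 5) := by
      by_cases h7 : k < 7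
      · interval_cases k <;> simp [hb]
      · have : 24 ≤ b := by
          rw [hb, Nat.le_div_iff_mul_le (by norm_num)]; nlinarith
        omega
    exact_mod_cast this
  have m1 : mm k (b + b / 5) ≤ 0.4347 := by
    refine (mm_le_exp (by omega)).trans (le_trans (exp_le_exp.2 ?_) exp_five_sixth)
    rw [neg_le_neg_iff, div_le_div_iff₀ (by norm_num) hN0]; linarith
  generalize ((b + b / 5 : ℕ) : ℝ) = x at *
  have m2 : BB k ^ 2 / (3 * x ^ 3) ≤ 0.20992 / BB k := by
    rw [div_le_div_iff₀ (by positivity) hB]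
    have := pow_le_pow_left₀ (by positivity) u2 3
    nlinarith [pow_pos hN0 3]
  have m3 : 2 / (3 * BB k) * mm k (b + b / 5) ≤ 2 / (3 * BB k) * 0.4347 := by gcongr
  have m4 : 2 / (3 * BB k) * 0.4347 + 0.20992 / BB k ≤ 1 / 2 / BB k := by
    have : 2 / (3 * BB k) * 0.4347 + 0.20992 / BB k = (2 / 3 * 0.4347 + 0.20992) / BB k := by
      field_simp
    rw [this]; gcongr; norm_num
  linarith


/-- radius used for the negative coefficients -/
noncomputable def rr (k : ℕ) : ℝ := 2 * BB k / (2 * BB k + 1)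

theorem rr_nonneg {k : ℕ} : 0 ≤ rr k := by
  have := BB_nonneg k; unfold rr; positivity

theorem rr_lt_one {k : ℕ} : rr k < 1 := by
  have := BB_nonneg k; unfold rr; rw [div_lt_one (by positivity)]; linarith

theorem T_all {k : ℕ} (hk : 1 ≤ k) (n : ℕ) :
    ∑ N ∈ Finset.range n, dd k N ^ 2 ≤ 0.52 * (4 * BB k + 1) / ((4 * BB k + 2) * BB k) ∧
    (k + 1) ^ 2 * (∑ N ∈ Finset.range n, dd k N ^ 2 + 1 / (4 * BB k + 1)) ≤ 2.14 := by
  rcases Nat.lt_or_ge k 3 with h | h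
  · interval_cases k
    · have := T_one n
      norm_num [BB]; constructor <;> linarith
    · have := T_two n
      norm_num [BB]; constructor <;> linarith
  · have h1 := T_ge_three h n
    have hB := BB_pos hk
    have hk3 : (3 : ℝ) ≤ k := by exact_mod_cast h
    have hB6 : 6 ≤ BB k := by unfold BB; nlinarith
    constructor
    · refine h1.trans ?_
      rw [div_div, div_le_div_iff₀ (by positivity) (by positivity)]
      nlinarith
    · have h2 : 1 / (4 * BB k + 1) ≤ 1 / 4 / BB k := by
        rw [div_div]
        exact one_div_le_one_div_of_le (by positivity) (by linarith)
      have h3 : ((k : ℝ) + 1) ^ 2 * (1 / 2 / BB k + 1 / 4 / BB k) ≤ 2 := by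
        have : ((k : ℝ) + 1) ^ 2 * (1 / 2 / BB k + 1 / 4 / BB k) = 3 / 2 * (k + 1) / k := by
          unfold BB; field_simp; ring
        rw [this, div_le_iff₀ (by positivity)]; linarith
      have h4 : ((k : ℝ) + 1) ^ 2 * (∑ N ∈ Finset.range n, dd k N ^ 2 + 1 / (4 * BB k + 1)) ≤
        ((k : ℝ) + 1) ^ 2 * (1 / 2 / BB k + 1 / 4 / BB k) := by gcongr
      linarith

theorem V_range {k : ℕ} (hk : 1 ≤ k) (n : ℕ) :
    ∑ N ∈ Finset.range n, ((1 - mm k N) - rr k * (1 - mm k (N + 1))) ^ 2 ≤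
      1.52 * (1 - rr k ^ 2) := by
  have hB := BB_pos hk
  have hr0 : 0 ≤ rr k := rr_nonneg
  have hr1 : rr k < 1 := rr_lt_one
  have e : ∀ N, ((1 - mm k N) - rr k * (1 - mm k (N + 1))) ^ 2 =
      (1 - rr k) ^ 2 * (1 - mm k N) ^ 2 + rr k * (1 - rr k) *
      ((1 - mm k N) ^ 2 - (1 - mm k (N + 1)) ^ 2) + rr k * dd k N ^ 2 := by
    intro N; unfold dd; ring
  simp only [e]
  rw [Finset.sum_add_distrib, Finset.sum_add_distrib, ← Finset.mul_sum, ← Finset.mul_sum,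
    ← Finset.mul_sum, Finset.sum_range_sub']
  have s0 : ∑ N ∈ Finset.range n, (1 - mm k N) ^ 2 ≤ 2 * BB k + 1 := by
    calc _ ≤ ∑ N ∈ Finset.range (n + 1), (1 - mm k N) ^ 2 :=
          Finset.sum_le_sum_of_subset_of_nonneg (by simp) (fun _ _ _ => sq_nonneg _)
      _ ≤ _ := by
          rw [Finset.sum_range_succ', mm_zero_of_le hk (Nat.zero_le k)]
          have := S0_range hk n
          norm_num; linarith
  have s1 := (T_all hk n).1
  rw [mm_zero_of_le hk (Nat.zero_le k)]
  have hε : (1 - rr k) * (2 * BB k + 1) = 1 := by unfold rr; field_simp; ring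
  have t1 : (1 - rr k) ^ 2 * ∑ N ∈ Finset.range n, (1 - mm k N) ^ 2 ≤ 1 - rr k := by
    calc _ ≤ (1 - rr k) ^ 2 * (2 * BB k + 1) := by gcongr
      _ = (1 - rr k) * ((1 - rr k) * (2 * BB k + 1)) := by ring
      _ = _ := by rw [hε, mul_one]
  have t2 : rr k * (1 - rr k) * ((1 - 0) ^ 2 - (1 - mm k n) ^ 2) ≤ rr k * (1 - rr k) := by
    have h1 : 0 ≤ rr k * (1 - rr k) := mul_nonneg hr0 (by linarith)
    have h2 := mul_nonneg h1 (sq_nonneg (1 - mm k n))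
    linarith
  have t3 : rr k * ∑ N ∈ Finset.range n, dd k N ^ 2 ≤ 0.52 * (1 - rr k ^ 2) := by
    calc _ ≤ rr k * (0.52 * (4 * BB k + 1) / ((4 * BB k + 2) * BB k)) := by gcongr
      _ = _ := by unfold rr; field_simp; ring
  linarith

theorem S1_range {k : ℕ} (hk : 1 ≤ k) (n : ℕ) :
    ∑ N ∈ Finset.range n, dd k N ^ 2 + (1 - rr k) / (1 + rr k) ≤ 2.14 / (k + 1) ^ 2 := by
  have hB := BB_pos hk
  have : (1 - rr k) / (1 + rr k) = 1 / (4 * BB k + 1) := by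
    have hr0 : 0 ≤ rr k := rr_nonneg
    rw [div_eq_div_iff (by positivity) (by positivity)]
    unfold rr; field_simp; ring
  rw [this, le_div_iff₀ (by positivity), mul_comm]
  exact (T_all hk n).2


/-- Haar measure on the unit additive circle -/
noncomputable abbrev hmu : Measure (AddCircle (1 : ℝ)) := AddCircle.haarAddCircle

theorem exists_kernel_fun (c : ℤ → ℂ) (hc : Summable fun n => ‖c n‖ ^ 2) :
    ∃ κ : AddCircle (1 : ℝ) → ℂ, MemLp κ 2 hmu ∧ ∀ n, fourierCoeff κ n = c n := by
  have hm : Memℓp c 2 := by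
    refine memℓp_gen ?_
    simpa using hc
  let x : lp (fun _ : ℤ => ℂ) 2 := ⟨c, hm⟩
  let f : Lp ℂ 2 hmu := fourierBasis.repr.symm x
  refine ⟨f, Lp.memLp f, fun n => ?_⟩
  rw [← fourierBasis_repr]
  simp [f, x]

theorem parsv_memLp {f : AddCircle (1 : ℝ) → ℂ} (hf : MemLp f 2 hmu) :
    HasSum (fun n => ‖fourierCoeff f n‖ ^ 2) (∫ t, ‖f t‖ ^ 2 ∂hmu) := by
  have h := hasSum_sq_fourierCoeff hf.toLp
  have h1 : ∀ n, fourierCoeff (hf.toLp) n = fourierCoeff f n := fun n =>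
    congrFun (fourierCoeff_congr_ae hf.coeFn_toLp) n
  simp only [h1] at h
  convert h using 1
  apply integral_congr_ae
  filter_upwards [hf.coeFn_toLp] with x hx
  rw [hx]

theorem norm_fourier_apply (n : ℤ) (t : AddCircle (1 : ℝ)) : ‖fourier n t‖ = 1 := by
  rw [fourier_apply]; exact Circle.norm_coe _

theorem fourier_integrable_mul {f : AddCircle (1 : ℝ) → ℂ} (hf : Integrable f hmu) (n : ℤ) :
    Integrable (fun t => f t * fourier n t) hmu := by
  refine hf.mul_bdd (c := 1) (fourier n).continuous.aestronglyMeasurable ?_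
  exact Filter.Eventually.of_forall fun t => (norm_fourier_apply n t).le

theorem memLp_mul_cont {f : AddCircle (1 : ℝ) → ℂ} (hf : MemLp f 2 hmu) {g : AddCircle (1 : ℝ) → ℂ}
    (hg : Continuous g) : MemLp (fun t => f t * g t) 2 hmu := by
  have hg' : MemLp g ⊤ hmu := by
    obtain ⟨C, hC⟩ := (isCompact_range hg).isBounded.exists_norm_le
    exact memLp_top_of_bound hg.aestronglyMeasurable C
      (Filter.Eventually.of_forall fun t => hC _ (mem_range_self t))
  exact hg'.mul hf

theorem coeff_mul_one_sub {f : AddCircle (1 : ℝ) → ℂ} (hf : Integrable f hmu) (a : ℂ) (n : ℤ) :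
    fourierCoeff (fun t => f t * (1 - a * fourier (-1) t)) n =
      fourierCoeff f n - a * fourierCoeff f (n + 1) := by
  unfold fourierCoeff
  have : ∀ t : AddCircle (1 : ℝ), fourier (-n) t • (f t * (1 - a * fourier (-1) t)) =
      f t * fourier (-n) t - a * (f t * fourier (-(n + 1)) t) := by
    intro t
    rw [show (-(n + 1) : ℤ) = -n + -1 by ring, fourier_add, smul_eq_mul]; ring
  simp only [this]
  rw [integral_sub (fourier_integrable_mul hf _) ((fourier_integrable_mul hf _).const_mul _),
    integral_const_mul]
  simp only [smul_eq_mul, mul_comm]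

theorem lemma_P {f : AddCircle (1 : ℝ) → ℂ} (hf : Integrable f hmu) {a : ℕ → ℂ}
    (ha : Summable fun i => ‖a i‖) (m : ℕ → ℤ) :
    ∫ t, f t * ∑' i, a i * fourier (m i) t ∂hmu = ∑' i, a i * ∫ t, f t * fourier (m i) t ∂hmu := by
  have h1 : ∀ i, Integrable (fun t => a i * (f t * fourier (m i) t)) hmu := fun i =>
    (fourier_integrable_mul hf _).const_mul _
  have h2 : Summable fun i => ∫ t, ‖a i * (f t * fourier (m i) t)‖ ∂hmu := by
    simp only [norm_mul, norm_fourier_apply, mul_one, integral_const_mul]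
    exact ha.mul_right _
  have h3 := integral_tsum_of_summable_integral_norm h1 h2
  simp only [integral_const_mul] at h3
  rw [h3]
  congr 1; funext t
  rw [← tsum_mul_left]
  congr 1; funext i; ring

theorem integral_fourier_mul (i j : ℕ) :
    ∫ t, fourier (-(i : ℤ)) t * fourier (j : ℤ) t ∂hmu = if j = i then 1 else 0 := by
  have h := fourierCoeff_fourier (T := 1) (j : ℤ)
  have h2 := congrFun h (i : ℤ)
  unfold fourierCoeff at h2
  simp only [smul_eq_mul] at h2
  rw [h2]
  simp [Pi.single_apply, eq_comm]

theorem tsum_pow_fourier {r : ℝ} (hr0 : 0 ≤ r) (hr1 : r < 1) (m : ℤ) (t : AddCircle (1 : ℝ)) :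
    ∑' j : ℕ, ((r ^ j : ℝ) : ℂ) * fourier ((j : ℤ) * m) t = (1 - r * fourier m t)⁻¹ := by
  have h1 : ∀ j : ℕ, ((r ^ j : ℝ) : ℂ) * fourier ((j : ℤ) * m) t = (r * fourier m t) ^ j := by
    intro j
    rw [mul_pow]
    push_cast
    congr 1
    induction j with
    | zero => simp
    | succ j ih => rw [pow_succ, ← ih, ← fourier_add]; congr 2; push_cast; ring
  simp only [h1]
  apply tsum_geometric_of_norm_lt_one
  rw [norm_mul, norm_fourier_apply, mul_one, Complex.norm_real, Real.norm_eq_abs, abs_of_nonneg hr0]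
  exact hr1

theorem integral_poisson {r : ℝ} (hr0 : 0 ≤ r) (hr1 : r < 1) :
    ∫ t, ‖(1 - (r : ℂ) * fourier (-1) t)⁻¹‖ ^ 2 ∂hmu = 1 / (1 - r ^ 2) := by
  have hs : Summable fun i : ℕ => ‖((r ^ i : ℝ) : ℂ)‖ := by
    simp only [Complex.norm_real, norm_pow, Real.norm_eq_abs, abs_of_nonneg hr0]
    exact summable_geometric_of_lt_one hr0 hr1
  have e1 : ∀ t : AddCircle (1 : ℝ), ((‖(1 - (r : ℂ) * fourier (-1) t)⁻¹‖ ^ 2 : ℝ) : ℂ) =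
      (∑' j : ℕ, ((r ^ j : ℝ) : ℂ) * fourier ((j : ℤ) * 1) t) *
        ∑' j : ℕ, ((r ^ j : ℝ) : ℂ) * fourier ((j : ℤ) * (-1)) t := by
    intro t
    rw [tsum_pow_fourier hr0 hr1, tsum_pow_fourier hr0 hr1]
    have := Complex.mul_conj' ((1 - (r : ℂ) * fourier (-1) t)⁻¹)
    rw [map_inv₀, map_sub, map_mul, map_one, Complex.conj_ofReal, ← fourier_neg, neg_neg] at this
    rw [Complex.ofReal_pow, ← this]; ring
  have hcont : Continuous fun t : AddCircle (1 : ℝ) =>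
      ∑' j : ℕ, ((r ^ j : ℝ) : ℂ) * fourier ((j : ℤ) * 1) t := by
    refine continuous_tsum (fun i => by fun_prop) hs ?_
    intro i t
    rw [norm_mul, norm_fourier_apply, mul_one]
  have hInt : Integrable (fun t : AddCircle (1 : ℝ) =>
      ∑' j : ℕ, ((r ^ j : ℝ) : ℂ) * fourier ((j : ℤ) * 1) t) hmu :=
    (memLp_mul_cont (f := fun _ => 1) (memLp_const _) hcont).integrable (by norm_num) |>.congr
      (Filter.Eventually.of_forall fun t => by simp)
  have e2 : ∀ i : ℕ, ∫ t, (∑' j : ℕ, ((r ^ j : ℝ) : ℂ) * fourier ((j : ℤ) * 1) t) *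
      fourier ((i : ℤ) * (-1)) t ∂hmu = ((r ^ i : ℝ) : ℂ) := by
    intro i
    have h := lemma_P (f := fun t => fourier (-(i : ℤ)) t)
      ((fourier_integrable_mul (f := fun _ => 1) (integrable_const _) (-(i : ℤ))).congr
        (Filter.Eventually.of_forall fun t => by simp)) hs (fun j => (j : ℤ) * 1)
    simp only [mul_one, integral_fourier_mul] at h
    have h2 : ∀ t : AddCircle (1 : ℝ), (∑' j : ℕ, ((r ^ j : ℝ) : ℂ) * fourier ((j : ℤ) * 1) t) *
      fourier ((i : ℤ) * (-1)) t = fourier (-(i : ℤ)) t *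
        ∑' j : ℕ, ((r ^ j : ℝ) : ℂ) * fourier (j : ℤ) t := by
      intro t
      rw [mul_comm]; simp
    simp only [h2]
    rw [h]
    simp
  have h3 := lemma_P hInt hs (fun j => (j : ℤ) * (-1))
  simp only [e2] at h3
  have h4 : ((∫ t, ‖(1 - (r : ℂ) * fourier (-1) t)⁻¹‖ ^ 2 ∂hmu : ℝ) : ℂ) =
      ((1 / (1 - r ^ 2) : ℝ) : ℂ) := by
    rw [← integral_complex_ofReal]
    simp only [e1]
    rw [h3]
    have : ∀ i : ℕ, ((r ^ i : ℝ) : ℂ) * ((r ^ i : ℝ) : ℂ) = (((r ^ 2) ^ i : ℝ) : ℂ) := by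
      intro i; rw [← Complex.ofReal_mul]; congr 1; ring
    simp only [this]
    rw [← Complex.ofReal_tsum, tsum_geometric_of_lt_one (by positivity) (by nlinarith), one_div]
  exact_mod_cast h4


/-- Fourier coefficients of the kernel -/
noncomputable def cz (k : ℕ) : ℤ → ℝ
  | Int.ofNat N => 1 - mm k N
  | Int.negSucc j => rr k ^ (j + 1)

theorem cz_nat (k N : ℕ) : cz k (N : ℤ) = 1 - mm k N := rfl
theorem cz_neg (k j : ℕ) : cz k (-((j : ℤ) + 1)) = rr k ^ (j + 1) := by
  rw [← Int.negSucc_eq]; rfl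
theorem cz_neg' {k : ℕ} (hk : 1 ≤ k) (j : ℕ) : cz k (-((j : ℤ) + 1) + 1) = rr k ^ j := by
  cases j with
  | zero =>
    have : (-(((0 : ℕ) : ℤ) + 1) + 1) = ((0 : ℕ) : ℤ) := by simp
    rw [this, cz_nat, mm_zero_of_le hk (Nat.zero_le k)]; simp
  | succ j =>
    have : (-(((j + 1 : ℕ) : ℤ) + 1) + 1) = -((j : ℤ) + 1) := by push_cast; ring
    rw [this, cz_neg]

theorem summable_nat_of_range {f : ℕ → ℝ} (hf : ∀ n, 0 ≤ f n) {C : ℝ}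
    (h : ∀ n, ∑ i ∈ Finset.range n, f i ≤ C) : Summable f ∧ ∑' n, f n ≤ C :=
  ⟨summable_of_sum_range_le hf h, Real.tsum_le_of_sum_range_le hf h⟩

theorem rr_sq_lt (k : ℕ) : rr k ^ 2 < 1 := by
  have h0 : 0 ≤ rr k := rr_nonneg
  have h1 : rr k < 1 := rr_lt_one
  nlinarith

theorem cz_summable {k : ℕ} (hk : 1 ≤ k) : Summable fun n : ℤ => ‖((cz k n : ℝ) : ℂ)‖ ^ 2 := by
  simp only [Complex.norm_real, Real.norm_eq_abs, sq_abs]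
  refine Summable.of_nat_of_neg_add_one ?_ ?_
  · simp only [cz_nat]
    rw [← summable_nat_add_iff 1]
    exact (summable_nat_of_range (fun _ => sq_nonneg _) (S0_range hk)).1
  · simp only [cz_neg]
    have : ∀ n : ℕ, (rr k ^ (n + 1)) ^ 2 = rr k ^ 2 * (rr k ^ 2) ^ n := by intro n; ring
    simp only [this]
    exact (summable_geometric_of_lt_one (sq_nonneg _) (rr_sq_lt k)).mul_left _

theorem cz_sum_r {k : ℕ} (hk : 1 ≤ k) {S : ℝ}
    (h : HasSum (fun n : ℤ => (cz k n - rr k * cz k (n + 1)) ^ 2) S) :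
    S ≤ 1.52 * (1 - rr k ^ 2) := by
  obtain ⟨h1, h2⟩ := summable_nat_of_range (fun _ => sq_nonneg _) (V_range hk)
  have h3 : HasSum (fun n : ℤ => (cz k n - rr k * cz k (n + 1)) ^ 2)
      ((∑' N : ℕ, ((1 - mm k N) - rr k * (1 - mm k (N + 1))) ^ 2) + 0) := by
    refine HasSum.of_nat_of_neg_add_one ?_ ?_
    · exact h1.hasSum
    · convert hasSum_zero (α := ℝ) (β := ℕ) using 2 with j
      rw [cz_neg, cz_neg' hk]; ring
  rw [h.unique h3]; linarith

theorem cz_sum_one {k : ℕ} (hk : 1 ≤ k) {S : ℝ}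
    (h : HasSum (fun n : ℤ => (cz k n - cz k (n + 1)) ^ 2) S) :
    S ≤ 2.14 / (k + 1) ^ 2 := by
  obtain ⟨h1, h2⟩ := summable_nat_of_range (C := 2.14 / (k + 1) ^ 2 - (1 - rr k) / (1 + rr k))
    (fun N => sq_nonneg (dd k N)) (fun n => by linarith [S1_range hk n])
  have h3 : HasSum (fun n : ℤ => (cz k n - cz k (n + 1)) ^ 2)
      ((∑' N : ℕ, dd k N ^ 2) + (1 - rr k) / (1 + rr k)) := by
    refine HasSum.of_nat_of_neg_add_one ?_ ?_
    · convert h1.hasSum using 2 with N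
      have : ((N : ℤ) + 1) = ((N + 1 : ℕ) : ℤ) := by push_cast; ring
      rw [this, cz_nat, cz_nat]; unfold dd; ring
    · have hg := (hasSum_geometric_of_lt_one (sq_nonneg _) (rr_sq_lt k)).mul_left ((1 - rr k) ^ 2)
      have e1 : (fun j : ℕ => (cz k (-((j : ℤ) + 1)) - cz k (-((j : ℤ) + 1) + 1)) ^ 2) =
          fun i : ℕ => (1 - rr k) ^ 2 * (rr k ^ 2) ^ i := by
        funext j
        rw [cz_neg, cz_neg' hk]; ring
      have e2 : (1 - rr k) / (1 + rr k) = (1 - rr k) ^ 2 * (1 - rr k ^ 2)⁻¹ := by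
        have h0 : 0 ≤ rr k := rr_nonneg
        have h1 : rr k < 1 := rr_lt_one
        have h2 : 1 - rr k ≠ 0 := by linarith
        rw [show 1 - rr k ^ 2 = (1 - rr k) * (1 + rr k) by ring]
        have : 1 + rr k ≠ 0 := by linarith
        field_simp
      rw [e1, e2]
      exact hg
  rw [h.unique h3]; linarith

theorem kernel_exists {k : ℕ} (hk : 1 ≤ k) : ∃ κ : AddCircle (1 : ℝ) → ℂ,
    Integrable κ hmu ∧ ∫ t, ‖κ t‖ ∂hmu ≤ 1.233 ∧
    ∫ t, ‖κ t‖ * ‖1 - fourier (-1) t‖ ∂hmu ≤ 1.463 / (k + 1) ∧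
    ∀ N : ℕ, ∫ t, κ t * fourier (-(N : ℤ)) t ∂hmu = ((1 - mm k N : ℝ) : ℂ) := by
  obtain ⟨κ, hκ, hc⟩ := exists_kernel_fun _ (cz_summable hk)
  have hInt : Integrable κ hmu := hκ.integrable (by norm_num)
  have hr0 : 0 ≤ rr k := rr_nonneg
  have hr1 : rr k < 1 := rr_lt_one
  have hmem : ∀ a : ℂ, MemLp (fun t => κ t * (1 - a * fourier (-1) t)) 2 hmu := fun a =>
    memLp_mul_cont hκ (by fun_prop)
  have hpars : ∀ a : ℝ, HasSum (fun n : ℤ => (cz k n - a * cz k (n + 1)) ^ 2)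
      (∫ t, ‖κ t * (1 - (a : ℂ) * fourier (-1) t)‖ ^ 2 ∂hmu) := by
    intro a
    convert parsv_memLp (hmem a) using 2 with n
    rw [coeff_mul_one_sub hInt, hc, hc, ← Complex.ofReal_mul, ← Complex.ofReal_sub,
      Complex.norm_real, Real.norm_eq_abs, sq_abs]
  have hsq : ∀ a : ℂ, Integrable (fun t => ‖κ t * (1 - a * fourier (-1) t)‖ ^ 2) hmu := fun a =>
    (hmem a).integrable_norm_pow (by norm_num)
  refine ⟨κ, hInt, ?_, ?_, ?_⟩
  · have hX := cz_sum_r hk (hpars (rr k))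
    have hY := integral_poisson hr0 hr1
    have hq : 0 < 1 - rr k ^ 2 := by linarith [rr_sq_lt k]
    have hne : ∀ t : AddCircle (1 : ℝ), 1 - (rr k : ℂ) * fourier (-1) t ≠ 0 := by
      intro t h
      have h2 : (rr k : ℂ) * fourier (-1) t = 1 := by linear_combination -h
      have := congrArg norm h2
      rw [norm_mul, norm_fourier_apply, Complex.norm_real, Real.norm_eq_abs, abs_of_nonneg hr0] at this
      simp at this; linarith
    have hYi : Integrable (fun t => ‖(1 - (rr k : ℂ) * fourier (-1) t)⁻¹‖ ^ 2) hmu := by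
      by_contra hcon
      rw [integral_undef hcon] at hY
      have : 0 < 1 / (1 - rr k ^ 2) := by positivity
      linarith
    have hs : 0 < 1.233 * (1 - rr k ^ 2) := by positivity
    calc ∫ t, ‖κ t‖ ∂hmu ≤ ∫ t, (1 / (2 * (1.233 * (1 - rr k ^ 2))) *
          ‖κ t * (1 - (rr k : ℂ) * fourier (-1) t)‖ ^ 2 +
          (1.233 * (1 - rr k ^ 2)) / 2 * ‖(1 - (rr k : ℂ) * fourier (-1) t)⁻¹‖ ^ 2) ∂hmu := by
          refine integral_mono hInt.norm (((hsq _).const_mul _).add (hYi.const_mul _)) fun t => ?_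
          generalize hs' : 1.233 * (1 - rr k ^ 2) = s at *
          dsimp only
          have e : ‖κ t‖ = ‖κ t * (1 - (rr k : ℂ) * fourier (-1) t)‖ *
              ‖(1 - (rr k : ℂ) * fourier (-1) t)⁻¹‖ := by
            rw [← norm_mul, mul_assoc, mul_inv_cancel₀ (hne t), mul_one]
          rw [e]
          generalize ‖κ t * (1 - (rr k : ℂ) * fourier (-1) t)‖ = x
          generalize ‖(1 - (rr k : ℂ) * fourier (-1) t)⁻¹‖ = y
          have : 1 / (2 * s) * x ^ 2 + s / 2 * y ^ 2 - x * y = (x - s * y) ^ 2 / (2 * s) := by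
            field_simp; ring
          have h2 : 0 ≤ (x - s * y) ^ 2 / (2 * s) := by positivity
          linarith
      _ = 1 / (2 * (1.233 * (1 - rr k ^ 2))) *
          (∫ t, ‖κ t * (1 - (rr k : ℂ) * fourier (-1) t)‖ ^ 2 ∂hmu) +
          (1.233 * (1 - rr k ^ 2)) / 2 * (1 / (1 - rr k ^ 2)) := by
          rw [integral_add ((hsq _).const_mul _) (hYi.const_mul _), integral_const_mul,
            integral_const_mul, hY]
      _ ≤ 1 / (2 * (1.233 * (1 - rr k ^ 2))) * (1.52 * (1 - rr k ^ 2)) +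
          (1.233 * (1 - rr k ^ 2)) / 2 * (1 / (1 - rr k ^ 2)) := by gcongr
      _ = 1.52 / (2 * 1.233) + 1.233 / 2 := by field_simp
      _ ≤ 1.233 := by norm_num
  · have hp := hpars 1
    simp only [one_mul] at hp
    have hX := cz_sum_one hk hp
    have hL : (0 : ℝ) < (k : ℝ) + 1 := by positivity
    calc ∫ t, ‖κ t‖ * ‖1 - fourier (-1) t‖ ∂hmu ≤ ∫ t, (((k : ℝ) + 1) / (2 * 1.463) *
          ‖κ t * (1 - ((1 : ℝ) : ℂ) * fourier (-1) t)‖ ^ 2 + 1.463 / (2 * ((k : ℝ) + 1))) ∂hmu := by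
          refine integral_mono ?_ (((hsq _).const_mul _).add (integrable_const _)) fun t => ?_
          · have := ((hmem 1).integrable (by norm_num)).norm
            simpa only [norm_mul, one_mul] using this
          · dsimp only
            rw [← norm_mul, Complex.ofReal_one, one_mul]
            generalize ‖κ t * (1 - fourier (-1) t)‖ = x
            have : ((k : ℝ) + 1) / (2 * 1.463) * x ^ 2 + 1.463 / (2 * ((k : ℝ) + 1)) - x =
              (((k : ℝ) + 1) * x - 1.463) ^ 2 / (2 * 1.463 * ((k : ℝ) + 1)) := by
              field_simp; ring
            have h2 : 0 ≤ (((k : ℝ) + 1) * x - 1.463) ^ 2 / (2 * 1.463 * ((k : ℝ) + 1)) := by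
              positivity
            linarith
      _ = ((k : ℝ) + 1) / (2 * 1.463) *
          (∫ t, ‖κ t * (1 - ((1 : ℝ) : ℂ) * fourier (-1) t)‖ ^ 2 ∂hmu) +
            1.463 / (2 * ((k : ℝ) + 1)) := by
          rw [integral_add ((hsq _).const_mul _) (integrable_const _), integral_const_mul,
            integral_const]
          simp
      _ ≤ ((k : ℝ) + 1) / (2 * 1.463) * (2.14 / (k + 1) ^ 2) + 1.463 / (2 * ((k : ℝ) + 1)) := by
          gcongr
      _ = (2.14 / (2 * 1.463) + 1.463 / 2) / ((k : ℝ) + 1) := by field_simp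
      _ ≤ 1.463 / ((k : ℝ) + 1) := by gcongr; norm_num
  · intro N
    have := hc N
    rw [cz_nat] at this
    rw [← this]
    unfold fourierCoeff
    congr 1; funext t; rw [smul_eq_mul, mul_comm]


theorem fourier_neg_nat_eq_pow (i : ℕ) (t : AddCircle (1 : ℝ)) :
    fourier (-(i : ℤ)) t = (fourier (-1) t) ^ i := by
  induction i with
  | zero => simp
  | succ j ih => rw [pow_succ, ← ih, ← fourier_add]; congr 2; push_cast; ring

/-- Convergence of a power series in the open disc. -/
def PS (u : ℕ → ℂ) : Prop := ∀ z ∈ ball (0 : ℂ) 1, Summable fun N => u N * z ^ N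

theorem PS.norm {u : ℕ → ℂ} (hu : PS u) {z : ℂ} (hz : z ∈ ball (0 : ℂ) 1) :
    Summable fun N => ‖u N * z ^ N‖ := (hu z hz).norm

theorem W_rep {k : ℕ} (hk : 1 ≤ k) {κ : AddCircle (1 : ℝ) → ℂ} (hκ : Integrable κ hmu)
    (hc : ∀ N : ℕ, ∫ t, κ t * fourier (-(N : ℤ)) t ∂hmu = ((1 - mm k N : ℝ) : ℂ))
    {u : ℕ → ℂ} (hu : PS u) {z : ℂ} (hz : z ∈ ball (0 : ℂ) 1) :
    ∑' N, ((mm k N : ℝ) : ℂ) * u N * z ^ N =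
      ∑' N, u N * z ^ N - ∫ t, κ t * ∑' N, u N * (z * fourier (-1) t) ^ N ∂hmu ∧
    ∑' N, ((mm k N : ℝ) : ℂ) * u N * z ^ N =
      ∫ t, κ t * (∑' N, u N * z ^ N - ∑' N, u N * (z * fourier (-1) t) ^ N) ∂hmu := by
  have e0 : ∀ t : AddCircle (1 : ℝ), ∀ N, u N * (z * fourier (-1) t) ^ N = (u N * z ^ N) * fourier (-(N : ℤ)) t := by
    intro t N
    rw [mul_pow, fourier_neg_nat_eq_pow]; ring
  simp only [e0]
  have h := lemma_P hκ (hu.norm hz) (fun N => -(N : ℤ))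
  have hs : Summable fun N => ((mm k N : ℝ) : ℂ) * u N * z ^ N := by
    refine Summable.of_norm_bounded (hu.norm hz) fun N => ?_
    rw [mul_assoc, norm_mul, Complex.norm_real, Real.norm_eq_abs, abs_of_nonneg (mm_nonneg k N)]
    exact mul_le_of_le_one_left (norm_nonneg _) (mm_le_one' k N)
  have h1 : ∑' N, ((mm k N : ℝ) : ℂ) * u N * z ^ N =
      ∑' N, u N * z ^ N - ∫ t, κ t * ∑' N, (u N * z ^ N) * fourier (-(N : ℤ)) t ∂hmu := by
    rw [h, eq_sub_iff_add_eq]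
    simp only [hc]
    rw [← Summable.tsum_add hs]
    · congr 1; funext N; push_cast; ring
    · refine ((hu z hz).sub hs).congr fun N => ?_
      push_cast; ring
  refine ⟨h1, ?_⟩
  rw [h1]
  have hcont : Continuous fun t : AddCircle (1 : ℝ) =>
      ∑' N, (u N * z ^ N) * fourier (-(N : ℤ)) t := by
    refine continuous_tsum (fun i => by fun_prop) (hu.norm hz) ?_
    intro i t
    rw [norm_mul, norm_fourier_apply, mul_one]
  have hInt : Integrable (fun t => κ t * ∑' N, (u N * z ^ N) * fourier (-(N : ℤ)) t) hmu := by
    refine hκ.mul_bdd (c := ∑' N, ‖u N * z ^ N‖) hcont.aestronglyMeasurable ?_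
    refine Filter.Eventually.of_forall fun t => ?_
    refine tsum_of_norm_bounded (hu.norm hz).hasSum fun i => ?_
    rw [norm_mul _ (fourier _ _), norm_fourier_apply, mul_one]
  simp only [mul_sub]
  rw [integral_sub (hκ.mul_const _) hInt, integral_mul_const]
  have h0 := hc 0
  rw [mm_zero_of_le hk (Nat.zero_le k)] at h0
  simp at h0
  rw [h0, one_mul]

theorem W_bound {k : ℕ} (hk : 1 ≤ k) {u : ℕ → ℂ} (hu : PS u) {M : ℝ}
    (hM : ∀ z ∈ ball (0 : ℂ) 1, ‖∑' N, u N * z ^ N‖ ≤ M) {z : ℂ} (hz : z ∈ ball (0 : ℂ) 1) :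
    ‖∑' N, ((mm k N : ℝ) : ℂ) * u N * z ^ N‖ ≤ 2.233 * M := by
  obtain ⟨κ, hκ, h1, h2, hc⟩ := kernel_exists hk
  have hM0 : 0 ≤ M := (norm_nonneg _).trans (hM z hz)
  rw [(W_rep hk hκ hc hu hz).1]
  refine (norm_sub_le _ _).trans ?_
  have h3 : ‖∫ t, κ t * ∑' N, u N * (z * fourier (-1) t) ^ N ∂hmu‖ ≤ ∫ t, ‖κ t‖ * M ∂hmu := by
    refine norm_integral_le_of_norm_le (hκ.norm.mul_const _) (Filter.Eventually.of_forall fun t => ?_)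
    rw [norm_mul]
    gcongr
    apply hM
    rw [mem_ball_zero_iff, norm_mul, norm_fourier_apply, mul_one]
    exact mem_ball_zero_iff.1 hz
  rw [integral_mul_const] at h3
  have h4 := hM z hz
  nlinarith

theorem W_bound_holder {k : ℕ} (hk : 1 ≤ k) {u : ℕ → ℂ} (hu : PS u) {P α : ℝ} (hP : 0 ≤ P)
    (hα0 : 0 ≤ α) (hα1 : α ≤ 1)
    (hM : ∀ z ∈ ball (0 : ℂ) 1, ∀ ω : ℂ, ‖ω‖ = 1 →
      ‖∑' N, u N * z ^ N - ∑' N, u N * (z * ω) ^ N‖ ≤ P * ‖1 - ω‖ ^ α)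
    {z : ℂ} (hz : z ∈ ball (0 : ℂ) 1) :
    ‖∑' N, ((mm k N : ℝ) : ℂ) * u N * z ^ N‖ ≤
      P * (1.233 * (1.463 / (1.233 * (k + 1))) ^ α) := by
  obtain ⟨κ, hκ, h1, h2, hc⟩ := kernel_exists hk
  rw [(W_rep hk hκ hc hu hz).2]
  set σ : ℝ := 1.463 / (1.233 * (k + 1)) with hσ
  have hσ0 : 0 < σ := by positivity
  have hi : Integrable (fun t => ‖κ t‖ * ‖1 - fourier (-1) t‖) hmu := by
    refine hκ.norm.mul_bdd (c := 2) (by fun_prop) (Filter.Eventually.of_forall fun t => ?_)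
    rw [norm_norm]
    refine (norm_sub_le _ _).trans ?_
    rw [norm_fourier_apply]; norm_num
  calc ‖∫ t, κ t * (∑' N, u N * z ^ N - ∑' N, u N * (z * fourier (-1) t) ^ N) ∂hmu‖
      ≤ ∫ t, P * σ ^ α * ((1 - α) * ‖κ t‖ + α / σ * (‖κ t‖ * ‖1 - fourier (-1) t‖)) ∂hmu := by
        refine norm_integral_le_of_norm_le
          (((hκ.norm.const_mul _).add (hi.const_mul _)).const_mul _)
          (Filter.Eventually.of_forall fun t => ?_)
        rw [norm_mul]
        have e1 := hM z hz (fourier (-1) t) (norm_fourier_apply _ _)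
        set d := ‖1 - fourier (-1) t‖ with hd
        have hd0 : 0 ≤ d := norm_nonneg _
        have e2 : d ^ α ≤ σ ^ α * (1 + α * (d / σ - 1)) := by
          have e3 := rpow_one_add_le_one_add_mul_self (s := d / σ - 1)
            (by linarith [div_nonneg hd0 hσ0.le]) hα0 hα1
          rw [add_sub_cancel, Real.div_rpow hd0 hσ0.le, div_le_iff₀ (by positivity)] at e3
          linarith
        have e4 : P * d ^ α ≤ P * (σ ^ α * (1 + α * (d / σ - 1))) := by gcongr
        have e5 := mul_le_mul_of_nonneg_left (e1.trans e4) (norm_nonneg (κ t))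
        refine e5.trans (le_of_eq ?_)
        field_simp; ring
    _ = P * σ ^ α * ((1 - α) * (∫ t, ‖κ t‖ ∂hmu) +
          α / σ * (∫ t, ‖κ t‖ * ‖1 - fourier (-1) t‖ ∂hmu)) := by
        rw [integral_const_mul, integral_add (hκ.norm.const_mul _) (hi.const_mul _),
          integral_const_mul, integral_const_mul]
    _ ≤ P * σ ^ α * ((1 - α) * 1.233 + α / σ * (1.463 / (k + 1))) := by
        have : 0 ≤ 1 - α := by linarith
        gcongr
    _ = P * (1.233 * σ ^ α) := by
        have : α / σ * (1.463 / (k + 1)) = α * 1.233 := by rw [hσ]; field_simp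
        rw [this]; ring


theorem series_diffContOnCl {b : ℕ → ℂ} (hb : Summable fun N => ‖b N‖) :
    ContinuousOn (fun z : ℂ => ∑' N, b N * z ^ N) (closedBall 0 1) ∧
    DifferentiableOn ℂ (fun z : ℂ => ∑' N, b N * z ^ N) (ball 0 1) := by
  have hle : ∀ N, ∀ z ∈ closedBall (0 : ℂ) 1, ‖b N * z ^ N‖ ≤ ‖b N‖ := by
    intro N z hz
    rw [norm_mul, norm_pow]
    exact mul_le_of_le_one_right (norm_nonneg _)
      (pow_le_one₀ (norm_nonneg _) (mem_closedBall_zero_iff.1 hz))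
  constructor
  · exact continuousOn_tsum (fun i => by fun_prop) hb hle
  · exact Complex.differentiableOn_tsum_of_summable_norm hb (fun i => by fun_prop) isOpen_ball
      (fun i w hw => hle i w (ball_subset_closedBall hw))

theorem series_max {b : ℕ → ℂ} (hb : Summable fun N => ‖b N‖) {C : ℝ}
    (hC : ∀ θ : ℝ, ‖∑' N, b N * Complex.exp (θ * Complex.I) ^ N‖ ≤ C) {z : ℂ}
    (hz : z ∈ closedBall (0 : ℂ) 1) : ‖∑' N, b N * z ^ N‖ ≤ C := by
  obtain ⟨h1, h2⟩ := series_diffContOnCl hb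
  have hcl : closure (ball (0 : ℂ) 1) = closedBall 0 1 := closure_ball _ one_ne_zero
  refine Complex.norm_le_of_forall_mem_frontier_norm_le (f := fun z => ∑' N, b N * z ^ N)
    (U := ball 0 1) isBounded_ball ⟨h2, by rwa [hcl]⟩ ?_ (by rwa [hcl])
  intro w hw
  rw [frontier_ball _ one_ne_zero, mem_sphere_zero_iff_norm, Complex.norm_eq_one_iff] at hw
  obtain ⟨θ, rfl⟩ := hw
  exact hC θ

theorem Q_step1 (j : ℕ) : ∀ {b : ℕ → ℂ} {g : ℝ → ℂ}, (Summable fun N => ‖b N‖) →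
    (∀ θ : ℝ, g θ = ∑' N, b N * Complex.exp (θ * Complex.I) ^ N) → ContDiff ℝ j g →
    ∀ {M : ℝ}, (∀ θ, ‖iteratedDeriv j g θ‖ ≤ M) → ∀ h θ : ℝ,
    ‖∑' N, (b N * (Complex.exp (h * Complex.I) ^ N - 1) ^ j) * Complex.exp (θ * Complex.I) ^ N‖
      ≤ |h| ^ j * M := by
  induction j with
  | zero =>
    intro b g hb hg hgc M hM h θ
    simpa [hg] using hM θ
  | succ j ih =>
    intro b g hb hg hgc M hM h θ
    have hb' : Summable fun N => ‖b N * (Complex.exp (h * Complex.I) ^ N - 1)‖ := by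
      refine Summable.of_nonneg_of_le (fun _ => norm_nonneg _) (fun N => ?_) (hb.mul_right 2)
      rw [norm_mul]
      gcongr
      refine (norm_sub_le _ _).trans ?_
      rw [norm_pow, Complex.norm_exp_ofReal_mul_I]; norm_num
    have hsum : ∀ θ : ℝ, Summable fun N => b N * Complex.exp (θ * Complex.I) ^ N := by
      intro θ
      refine Summable.of_norm ?_
      simpa [norm_pow, Complex.norm_exp_ofReal_mul_I] using hb
    have hcj : ContDiff ℝ j g := hgc.of_le (by exact_mod_cast Nat.le_succ j)
    have key := ih (b := fun N => b N * (Complex.exp (h * Complex.I) ^ N - 1))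
      (g := fun θ => g (θ + h) - g θ) hb' ?_ ?_ (M := |h| * M) ?_ h θ
    · convert key using 1
      · congr 1; congr 1; funext N; ring
      · ring
    · intro θ
      rw [hg, hg, ← Summable.tsum_sub (hsum _) (hsum _)]
      congr 1; funext N
      push_cast
      rw [add_mul, Complex.exp_add, mul_pow]; ring
    · exact (hcj.comp (contDiff_id.add contDiff_const)).sub hcj
    · intro θ
      have e : iteratedDeriv j (fun θ => g (θ + h) - g θ) θ =
          iteratedDeriv j g (θ + h) - iteratedDeriv j g θ := by
        have := iteratedDeriv_fun_sub (n := j) (x := θ) (f := fun θ => g (θ + h)) (g := g)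
          (hcj.comp (contDiff_id.add contDiff_const)).contDiffAt hcj.contDiffAt
        rw [this, iteratedDeriv_comp_add_const]
      rw [e]
      have hd : Differentiable ℝ (iteratedDeriv j g) :=
        hgc.differentiable_iteratedDeriv j (by exact_mod_cast Nat.lt_succ_self j)
      have := Convex.norm_image_sub_le_of_norm_deriv_le (f := iteratedDeriv j g) (s := univ)
        (x := θ) (y := θ + h) (C := M) (fun x _ => hd x)
        (fun x _ => by rw [← iteratedDeriv_succ]; exact hM x) convex_univ (mem_univ _) (mem_univ _)
      simpa [mul_comm] using this

theorem summable_poly_geom {b : ℕ → ℂ} (hb : Summable fun N => ‖b N‖) (j : ℕ) {r : ℝ}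
    (hr0 : 0 ≤ r) (hr1 : r < 1) : Summable fun N : ℕ => ‖b N‖ * (N : ℝ) ^ j * r ^ N := by
  obtain ⟨C, hC⟩ := hb.tendsto_atTop_zero.bddAbove_range
  have := (summable_pow_mul_geometric_of_norm_lt_one j (r := r)
    (by rwa [Real.norm_eq_abs, abs_of_nonneg hr0])).mul_left C
  refine Summable.of_nonneg_of_le (fun N => by positivity) (fun N => ?_) this
  rw [mul_assoc]
  gcongr
  exact hC (mem_range_self N)

theorem lemma_Q {j : ℕ} {b : ℕ → ℂ} {g : ℝ → ℂ} (hb : Summable fun N => ‖b N‖)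
    (hg : ∀ θ : ℝ, g θ = ∑' N, b N * Complex.exp (θ * Complex.I) ^ N) (hgc : ContDiff ℝ j g)
    {M : ℝ} (hM : ∀ θ, ‖iteratedDeriv j g θ‖ ≤ M) {z : ℂ} (hz : z ∈ ball (0 : ℂ) 1) :
    ‖∑' N : ℕ, ((N : ℂ) ^ j * b N) * z ^ N‖ ≤ M := by
  have hz1 : ‖z‖ < 1 := mem_ball_zero_iff.1 hz
  have hn : ∀ (h : ℝ) (N : ℕ), ‖Complex.exp (h * Complex.I) ^ N - 1‖ ≤ N * |h| := by
    intro h N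
    have := Real.norm_exp_I_mul_ofReal_sub_one_le (x := N * h)
    rw [← Complex.exp_nat_mul]
    rw [Real.norm_eq_abs, abs_mul, Nat.abs_cast] at this
    convert this using 4
    push_cast; ring
  have hbd : ∀ h : ℝ, Summable fun N => ‖b N * (Complex.exp (h * Complex.I) ^ N - 1) ^ j‖ := by
    intro h
    refine Summable.of_nonneg_of_le (fun _ => norm_nonneg _) (fun N => ?_) (hb.mul_right (2 ^ j))
    rw [norm_mul, norm_pow]
    gcongr
    refine (norm_sub_le _ _).trans ?_
    rw [norm_pow, Complex.norm_exp_ofReal_mul_I]; norm_num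
  have h1 : ∀ h : ℝ, h ≠ 0 →
      ‖∑' N, (b N * ((Complex.exp (h * Complex.I) ^ N - 1) / h) ^ j) * z ^ N‖ ≤ M := by
    intro h hh
    have := series_max (hbd h) (C := |h| ^ j * M) (fun θ => Q_step1 j hb hg hgc hM h θ)
      (ball_subset_closedBall hz)
    have e : ∑' N, (b N * ((Complex.exp (h * Complex.I) ^ N - 1) / h) ^ j) * z ^ N =
        ((h : ℂ) ^ j)⁻¹ * ∑' N, (b N * (Complex.exp (h * Complex.I) ^ N - 1) ^ j) * z ^ N := by
      rw [← tsum_mul_left]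
      congr 1; funext N; rw [div_pow]; ring
    rw [e, norm_mul, norm_inv, norm_pow, Complex.norm_real, Real.norm_eq_abs]
    have hp : 0 < |h| ^ j := by positivity
    rw [inv_mul_le_iff₀ hp]; exact this
  have h2 : Filter.Tendsto (fun h : ℝ =>
      ∑' N, (b N * ((Complex.exp (h * Complex.I) ^ N - 1) / h) ^ j) * z ^ N) (nhdsWithin 0 {0}ᶜ)
      (nhds (∑' N : ℕ, (b N * ((N : ℂ) * Complex.I) ^ j) * z ^ N)) := by
    refine tendsto_tsum_of_dominated_convergence (summable_poly_geom hb j (norm_nonneg z) hz1) ?_ ?_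
    · intro N
      have hd : HasDerivAt (fun h : ℝ => Complex.exp (h * Complex.I) ^ N)
          ((N : ℂ) * Complex.I) 0 := by
        have e : (fun h : ℝ => Complex.exp (h * Complex.I) ^ N) =
          fun h : ℝ => Complex.exp ((h : ℂ) * ((N : ℂ) * Complex.I)) := by
          funext h; rw [← Complex.exp_nat_mul]; congr 1; ring
        rw [e]
        have h3 := ((Complex.ofRealCLM.hasDerivAt (x := (0 : ℝ))).mul_const
          ((N : ℂ) * Complex.I)).cexp
        simpa using h3
      have h4 := hd.tendsto_slope
      have h5 : Filter.Tendsto (fun h : ℝ => (Complex.exp (h * Complex.I) ^ N - 1) / (h : ℂ))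
          (nhdsWithin 0 {0}ᶜ) (nhds ((N : ℂ) * Complex.I)) := by
        refine h4.congr fun h => ?_
        simp [slope, div_eq_inv_mul]
      exact ((h5.pow j).const_mul (b N)).mul_const _
    · filter_upwards [self_mem_nhdsWithin] with h hh N
      have hh' : h ≠ 0 := hh
      rw [norm_mul, norm_mul, norm_pow, norm_pow, norm_div, Complex.norm_real, Real.norm_eq_abs]
      gcongr
      rw [div_le_iff₀ (by positivity)]
      exact hn h N
  have h3 := le_of_tendsto h2.norm (by
    filter_upwards [self_mem_nhdsWithin] with h hh using h1 h hh)
  have e : ∑' N : ℕ, (b N * ((N : ℂ) * Complex.I) ^ j) * z ^ N =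
      Complex.I ^ j * ∑' N : ℕ, ((N : ℂ) ^ j * b N) * z ^ N := by
    rw [← tsum_mul_left]
    congr 1; funext N; rw [mul_pow]; ring
  rw [e, norm_mul, norm_pow, Complex.norm_I, one_pow, one_mul] at h3
  exact h3


theorem circParam_periodic (φ : ℂ → ℂ) : Function.Periodic (circParam φ) (2 * π) := by
  intro θ
  unfold circParam
  congr 1
  push_cast
  rw [add_mul, Complex.exp_add, Complex.exp_two_pi_mul_I, mul_one]

theorem iteratedDeriv_periodic {g : ℝ → ℂ} {T : ℝ} (hg : Function.Periodic g T) (j : ℕ) :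
    Function.Periodic (iteratedDeriv j g) T := by
  intro θ
  have h : (fun x => g (x + T)) = g := funext hg
  conv_rhs => rw [← h]
  rw [iteratedDeriv_comp_add_const]

/-- sup norm of the `j`-th derivative -/
noncomputable def MM (φ : ℂ → ℂ) (j : ℕ) : ℝ :=
  sSup ((fun θ => ‖iteratedDeriv j (circParam φ) θ‖) '' Icc 0 (2 * Real.pi))

/-- Hölder seminorm on the circle -/
noncomputable def HH (k : ℕ) (α : ℝ) (φ : ℂ → ℂ) : ℝ :=
  sSup {c : ℝ | ∃ θ₁ ∈ Icc 0 (2 * Real.pi), ∃ θ₂ ∈ Icc 0 (2 * Real.pi), θ₁ ≠ θ₂ ∧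
    c = ‖iteratedDeriv k (circParam φ) θ₁ - iteratedDeriv k (circParam φ) θ₂‖ / |θ₁ - θ₂| ^ α}

theorem HH_nonneg (k : ℕ) (α : ℝ) (φ : ℂ → ℂ) : 0 ≤ HH k α φ := by
  apply Real.sSup_nonneg
  rintro c ⟨θ₁, _, θ₂, _, _, rfl⟩
  positivity

theorem MM_nonneg (φ : ℂ → ℂ) (j : ℕ) : 0 ≤ MM φ j := by
  apply Real.sSup_nonneg
  rintro c ⟨θ, _, rfl⟩
  positivity

theorem exists_Ico_rep {f : ℝ → ℂ} (hf : Function.Periodic f (2 * π)) (θ : ℝ) :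
    ∃ n : ℤ, θ - n * (2 * π) ∈ Ico 0 (2 * π) := by
  refine ⟨toIcoDiv two_pi_pos 0 θ, ?_⟩
  have := sub_toIcoDiv_zsmul_mem_Ico two_pi_pos 0 θ
  simpa using this

theorem le_MM {k : ℕ} {α : ℝ} {φ : ℂ → ℂ} (hφ : MemHolderCircle k α φ) {j : ℕ} (hj : j ≤ k)
    (θ : ℝ) : ‖iteratedDeriv j (circParam φ) θ‖ ≤ MM φ j := by
  have hp := iteratedDeriv_periodic (circParam_periodic φ) j
  obtain ⟨n, hn⟩ := exists_Ico_rep hp θ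
  have hc : Continuous (iteratedDeriv j (circParam φ)) :=
    hφ.1.continuous_iteratedDeriv j (by exact_mod_cast hj)
  rw [← hp.sub_int_mul_eq n (x := θ)]
  refine le_csSup ?_ ⟨_, Ico_subset_Icc_self hn, rfl⟩
  exact (isCompact_Icc.image (by fun_prop)).bddAbove

theorem le_HH {k : ℕ} {α : ℝ} {φ : ℂ → ℂ} (hφ : MemHolderCircle k α φ)
    {x y : ℝ} (hx : x ∈ Icc 0 (2 * π)) (hy : y ∈ Icc 0 (2 * π)) (hα : 0 < α) :
    ‖iteratedDeriv k (circParam φ) x - iteratedDeriv k (circParam φ) y‖ ≤ HH k α φ * |x - y| ^ α := by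
  obtain ⟨_, C, hC⟩ := hφ
  rcases eq_or_ne x y with h | h
  · subst h; simp [Real.zero_rpow hα.ne']
  have hp : 0 < |x - y| ^ α := Real.rpow_pos_of_pos (abs_pos.2 (sub_ne_zero.2 h)) _
  rw [← div_le_iff₀ hp]
  refine le_csSup ⟨C, ?_⟩ ⟨x, hx, y, hy, h, rfl⟩
  rintro c ⟨a, _, b, _, hab, rfl⟩
  have hp : 0 < |a - b| ^ α := Real.rpow_pos_of_pos (abs_pos.2 (sub_ne_zero.2 hab)) _
  rw [div_le_iff₀ hp]; exact hC a b

theorem chord_eq (t : ℝ) : ‖Complex.exp (t * Complex.I) - 1‖ = 2 * |sin (t / 2)| := by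
  have := Complex.norm_exp_I_mul_ofReal_sub_one t
  rw [mul_comm, this, norm_mul]; simp

theorem le_chord {t : ℝ} (h0 : 0 ≤ t) (h1 : t ≤ π) :
    t ≤ π / 2 * ‖Complex.exp (t * Complex.I) - 1‖ := by
  rw [chord_eq]
  have h2 := Real.mul_le_sin (x := t / 2) (by linarith) (by linarith)
  have h3 := le_abs_self (sin (t / 2))
  have hpi := pi_pos
  have h4 : π / 2 * (2 * (2 / π * (t / 2))) = t := by field_simp
  have h5 : π / 2 * (2 * (2 / π * (t / 2))) ≤ π / 2 * (2 * |sin (t / 2)|) := by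
    gcongr; linarith
  linarith

theorem add_rpow_le {a b α : ℝ} (ha : 0 ≤ a) (hb : 0 ≤ b) (hα0 : 0 ≤ α) (hα1 : α ≤ 1) :
    a ^ α + b ^ α ≤ 2 * ((a + b) / 2) ^ α := by
  have h := (Real.concaveOn_rpow hα0 hα1).2 ha hb (by norm_num : (0 : ℝ) ≤ 1 / 2)
    (by norm_num : (0 : ℝ) ≤ 1 / 2) (by norm_num)
  simp only [smul_eq_mul] at h
  have e : 1 / 2 * a + 1 / 2 * b = (a + b) / 2 := by ring
  rw [e] at h; linarith

theorem circle_holder_aux {k : ℕ} {α : ℝ} {φ : ℂ → ℂ} (hα : α ∈ Ioo (0 : ℝ) 1)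
    (hφ : MemHolderCircle k α φ) {x y : ℝ} (hx : x ∈ Ico 0 (2 * π)) (hy : y ∈ Ico 0 (2 * π))
    (hxy : x ≤ y) :
    ‖iteratedDeriv k (circParam φ) y - iteratedDeriv k (circParam φ) x‖ ≤
      2 * (π / 4) ^ α * HH k α φ * ‖Complex.exp (((y - x : ℝ) : ℂ) * Complex.I) - 1‖ ^ α := by
  have hH := HH_nonneg k α φ
  have hpi := pi_pos
  have hp := iteratedDeriv_periodic (circParam_periodic φ) k
  set d := ‖Complex.exp (((y - x : ℝ) : ℂ) * Complex.I) - 1‖ with hd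
  have hd0 : 0 ≤ d := norm_nonneg _
  have main : ∀ s : ℝ, 0 ≤ s → s ≤ π / 2 * d → 2 * (s / 2) ^ α ≤ 2 * (π / 4) ^ α * d ^ α := by
    intro s hs hsd
    rw [mul_assoc, ← Real.mul_rpow (by positivity) hd0]
    gcongr
    · exact hα.1.le
    · linarith
  rcases le_total (y - x) π with h | h
  · have h1 := le_HH hφ (Ico_subset_Icc_self hy) (Ico_subset_Icc_self hx) hα.1
    rw [abs_of_nonneg (by linarith)] at h1
    have h2 := add_rpow_le (a := y - x) (b := 0) (by linarith) le_rfl hα.1.le hα.2.le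
    rw [Real.zero_rpow hα.1.ne', add_zero, add_zero] at h2
    have h3 := main (y - x) (by linarith) (le_chord (by linarith) h)
    have h4 := mul_le_mul_of_nonneg_left (h2.trans h3) hH
    linarith
  · have h0 : (0 : ℝ) ∈ Icc 0 (2 * π) := ⟨le_rfl, by linarith⟩
    have h2p : (2 * π) ∈ Icc 0 (2 * π) := ⟨by linarith, le_rfl⟩
    have h1 := le_HH hφ (Ico_subset_Icc_self hy) h2p hα.1
    have h1' := le_HH hφ h0 (Ico_subset_Icc_self hx) hα.1
    have e0 : iteratedDeriv k (circParam φ) (2 * π) = iteratedDeriv k (circParam φ) 0 := by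
      have := hp 0; rwa [zero_add] at this
    rw [e0] at h1
    rw [abs_sub_comm, abs_of_nonneg (by linarith [hy.2])] at h1
    rw [zero_sub, abs_neg, abs_of_nonneg hx.1] at h1'
    have h2 := add_rpow_le (a := 2 * π - y) (b := x) (by linarith [hy.2]) hx.1 hα.1.le hα.2.le
    have hs : 2 * π - y + x ≤ π / 2 * d := by
      have := le_chord (t := 2 * π - y + x) (by linarith [hy.2, hx.1]) (by linarith)
      rw [chord_eq] at this
      rw [hd, chord_eq]
      have e : sin ((2 * π - y + x) / 2) = sin ((y - x) / 2) := by
        rw [show (2 * π - y + x) / 2 = π - (y - x) / 2 by ring, sin_pi_sub]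
      rwa [e] at this
    have h3 := main _ (by linarith [hy.2, hx.1]) hs
    have h4 := mul_le_mul_of_nonneg_left (h2.trans h3) hH
    have h5 := norm_sub_le_norm_sub_add_norm_sub (iteratedDeriv k (circParam φ) y)
      (iteratedDeriv k (circParam φ) 0) (iteratedDeriv k (circParam φ) x)
    linarith

theorem circle_holder {k : ℕ} {α : ℝ} {φ : ℂ → ℂ} (hα : α ∈ Ioo (0 : ℝ) 1)
    (hφ : MemHolderCircle k α φ) (θ τ : ℝ) :
    ‖iteratedDeriv k (circParam φ) (θ + τ) - iteratedDeriv k (circParam φ) θ‖ ≤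
      2 * (π / 4) ^ α * HH k α φ * ‖Complex.exp ((τ : ℂ) * Complex.I) - 1‖ ^ α := by
  have hp := iteratedDeriv_periodic (circParam_periodic φ) k
  obtain ⟨n, hn⟩ := exists_Ico_rep hp θ
  obtain ⟨m, hm⟩ := exists_Ico_rep hp (θ + τ)
  rw [← hp.sub_int_mul_eq n (x := θ), ← hp.sub_int_mul_eq m (x := θ + τ)]
  have key : ∀ l : ℤ, Complex.exp (((τ - l * (2 * π) : ℝ) : ℂ) * Complex.I) =
      Complex.exp ((τ : ℂ) * Complex.I) := by
    intro l
    have := Complex.exp_periodic.sub_int_mul_eq l (x := (τ : ℂ) * Complex.I)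
    rw [← this]; congr 1; push_cast; ring
  rcases le_total (θ - n * (2 * π)) (θ + τ - m * (2 * π)) with h | h
  · have := circle_holder_aux hα hφ hn hm h
    rw [show (θ + τ - m * (2 * π) - (θ - n * (2 * π))) = τ - (m - n : ℤ) * (2 * π) by
      push_cast; ring, key] at this
    exact this
  · have := circle_holder_aux hα hφ hm hn h
    rw [norm_sub_rev, show (θ - n * (2 * π) - (θ + τ - m * (2 * π))) =
      -(τ - (m - n : ℤ) * (2 * π)) by push_cast; ring, chord_eq, neg_div, sin_neg, abs_neg,
      ← chord_eq, key] at this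
    exact this


theorem lemma_R {Φ : ℂ → ℂ} (hΦ : DifferentiableOn ℂ Φ (ball 0 1)) {L : ℕ} {E : ℝ}
    (h : ∀ z ∈ ball (0 : ℂ) 1, ‖z‖ ^ L * ‖Φ z‖ ≤ E) {z : ℂ} (hz : z ∈ ball (0 : ℂ) 1) :
    ‖Φ z‖ ≤ E := by
  have hz1 : ‖z‖ < 1 := mem_ball_zero_iff.1 hz
  have h1 : ∀ ρ : ℝ, ‖z‖ < ρ → ρ < 1 → ρ ^ L * ‖Φ z‖ ≤ E := by
    intro ρ h1 h2
    have hρ : 0 < ρ := (norm_nonneg z).trans_lt h1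
    have hsub : closedBall (0 : ℂ) ρ ⊆ ball 0 1 := closedBall_subset_ball h2
    have hd : DiffContOnCl ℂ Φ (ball 0 ρ) := by
      refine DifferentiableOn.diffContOnCl (hΦ.mono ?_)
      rw [closure_ball _ hρ.ne']; exact hsub
    have := Complex.norm_le_of_forall_mem_frontier_norm_le (f := Φ) (C := E / ρ ^ L)
      isBounded_ball hd ?_ (z := z) (subset_closure (mem_ball_zero_iff.2 h1))
    · rw [le_div_iff₀ (by positivity)] at this; linarith
    · intro w hw
      rw [frontier_ball _ hρ.ne'] at hw
      have h3 := h w (hsub (sphere_subset_closedBall hw))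
      rw [mem_sphere_zero_iff_norm.1 hw] at h3
      rw [le_div_iff₀ (by positivity)]; linarith
  have h2 : Filter.Tendsto (fun ρ : ℝ => ρ ^ L * ‖Φ z‖) (nhdsWithin 1 (Iio 1))
      (nhds (1 ^ L * ‖Φ z‖)) := by
    have : ContinuousAt (fun ρ : ℝ => ρ ^ L * ‖Φ z‖) 1 := by fun_prop
    exact this.tendsto.mono_left nhdsWithin_le_nhds
  have h3 := le_of_tendsto h2 (b := E) (by
    filter_upwards [Ioo_mem_nhdsLT hz1] with ρ hρ using h1 ρ hρ.1 hρ.2)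
  simpa using h3

theorem le_of_pow_le_const {a b C : ℝ} (ha : 0 ≤ a) (hb : 0 ≤ b)
    (h : ∀ q : ℕ, 1 ≤ q → a ^ q ≤ C * b ^ q) : a ≤ b := by
  rcases hb.eq_or_lt with rfl | hb
  · have := h 1 le_rfl; simpa using this
  by_contra hab
  push Not at hab
  have h1 : 1 < a / b := by rwa [one_lt_div hb]
  obtain ⟨n, hn⟩ := pow_unbounded_of_one_lt C h1
  have h2 := h (n + 1) (by omega)
  have h3 : (a / b) ^ (n + 1) ≤ C := by
    rw [div_pow, div_le_iff₀ (by positivity)]; exact h2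
  have h4 : (a / b) ^ n ≤ (a / b) ^ (n + 1) := pow_le_pow_right₀ h1.le (by omega)
  linarith

theorem lemma_X {f : ℂ → ℂ} {R : ℝ} (hR : 1 < R) (hf : DifferentiableOn ℂ f (ball 0 R)) {S α : ℝ}
    (hS : 0 ≤ S) (hα : α ∈ Ioo (0 : ℝ) 1) {w : ℂ} (hw : w ∈ closedBall (0 : ℂ) 1)
    (h : ∀ ζ ∈ sphere (0 : ℂ) 1, ‖f ζ - f w‖ ≤ S * ‖ζ - w‖ ^ α)
    {z : ℂ} (hz : z ∈ closedBall (0 : ℂ) 1) : ‖f z - f w‖ ≤ S * ‖z - w‖ ^ α := by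
  rcases eq_or_ne z w with rfl | hzw
  · simp [Real.zero_rpow hα.1.ne']
  have hD : 0 < ‖z - w‖ := norm_pos_iff.2 (sub_ne_zero.2 hzw)
  have hwR : ball (0 : ℂ) R ∈ nhds w :=
    isOpen_ball.mem_nhds (closedBall_subset_ball hR hw)
  have hh : DifferentiableOn ℂ (dslope f w) (ball 0 R) :=
    (Complex.differentiableOn_dslope hwR).2 hf
  have hds : ∀ x, x ≠ w → ‖dslope f w x‖ = ‖f x - f w‖ / ‖x - w‖ := by
    intro x hx
    rw [dslope_of_ne _ hx, slope_def_field, norm_div]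
  refine le_of_pow_le_const (C := 2 * max 1 (‖z - w‖⁻¹)) (norm_nonneg _) (by positivity) ?_
  intro q hq
  have hq0 : (0 : ℝ) < q := by exact_mod_cast hq
  have hα1 : 0 < (1 - α) * q := mul_pos (by linarith [hα.2]) hq0
  set p : ℕ := ⌈(1 - α) * q⌉₊ with hp
  have hp1 : (1 - α) * q ≤ p := Nat.le_ceil _
  have hp2 : (p : ℝ) < (1 - α) * q + 1 := Nat.ceil_lt_add_one hα1.le
  have hp0 : p ≠ 0 := by
    have := Nat.ceil_pos.2 hα1
    omega
  set e : ℝ := α * q + p - q with he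
  have he0 : 0 ≤ e := by rw [he]; linarith
  have he1 : e ≤ 1 := by rw [he]; linarith
  have hpow : ∀ D : ℝ, 0 < D → (D ^ α) ^ q * D ^ p / D ^ q = D ^ e := by
    intro D hD
    rw [he, Real.rpow_sub hD, Real.rpow_add hD, Real.rpow_natCast, Real.rpow_natCast,
      Real.rpow_mul_natCast hD.le]
  have hbound : ∀ x ∈ closedBall (0 : ℂ) 1, ‖dslope f w x ^ q * (x - w) ^ p‖ ≤ S ^ q * 2 := by
    intro x hx
    have hcl : closure (ball (0 : ℂ) 1) = closedBall 0 1 := closure_ball _ one_ne_zero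
    refine Complex.norm_le_of_forall_mem_frontier_norm_le (U := ball 0 1)
      (f := fun x => dslope f w x ^ q * (x - w) ^ p) isBounded_ball ?_ ?_ (by rwa [hcl])
    · refine DifferentiableOn.diffContOnCl ?_
      rw [hcl]
      have := hh.mono (closedBall_subset_ball hR)
      fun_prop
    · intro ζ hζ
      rw [frontier_ball _ one_ne_zero] at hζ
      rcases eq_or_ne ζ w with rfl | hne
      · simp [hp0]; positivity
      have hD' : 0 < ‖ζ - w‖ := norm_pos_iff.2 (sub_ne_zero.2 hne)
      have hD2 : ‖ζ - w‖ ≤ 2 := by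
        refine (norm_sub_le _ _).trans ?_
        have h1 := mem_sphere_zero_iff_norm.1 hζ
        have h2 := mem_closedBall_zero_iff.1 hw
        linarith
      rw [norm_mul, norm_pow, norm_pow, hds ζ hne]
      calc (‖f ζ - f w‖ / ‖ζ - w‖) ^ q * ‖ζ - w‖ ^ p
          ≤ (S * ‖ζ - w‖ ^ α / ‖ζ - w‖) ^ q * ‖ζ - w‖ ^ p := by
            gcongr; exact h ζ hζ
        _ = S ^ q * ((‖ζ - w‖ ^ α) ^ q * ‖ζ - w‖ ^ p / ‖ζ - w‖ ^ q) := by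
            rw [div_pow, mul_pow]; ring
        _ = S ^ q * ‖ζ - w‖ ^ e := by rw [hpow _ hD']
        _ ≤ S ^ q * 2 := by
            gcongr
            calc ‖ζ - w‖ ^ e ≤ 2 ^ e := by gcongr
              _ ≤ 2 ^ (1 : ℝ) := Real.rpow_le_rpow_of_exponent_le (by norm_num) he1
              _ = 2 := Real.rpow_one 2
  have h1 := hbound z hz
  rw [norm_mul, norm_pow, norm_pow, hds z hzw] at h1
  set D := ‖z - w‖ with hDd
  have hDe : D ^ q = (D ^ α) ^ q * D ^ p / D ^ e := by
    rw [← hpow D hD]; field_simp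
  have hDe0 : 0 < D ^ e := Real.rpow_pos_of_pos hD _
  have h2 : ‖f z - f w‖ ^ q ≤ 2 * S ^ q * (D ^ α) ^ q / D ^ e := by
    rw [div_pow, div_mul_eq_mul_div, div_le_iff₀ (by positivity), hDe] at h1
    have hDp : 0 < D ^ p := by positivity
    have e1 : S ^ q * 2 * ((D ^ α) ^ q * D ^ p / D ^ e) = (2 * S ^ q * (D ^ α) ^ q / D ^ e) * D ^ p := by
      ring
    rw [e1] at h1
    exact le_of_mul_le_mul_right h1 hDp
  have h3 : (D ^ e)⁻¹ ≤ max 1 D⁻¹ := by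
    rcases le_total 1 D with h | h
    · exact le_max_of_le_left (inv_le_one_of_one_le₀ (Real.one_le_rpow h he0))
    · refine le_max_of_le_right (inv_anti₀ hD ?_)
      calc D = D ^ (1 : ℝ) := (Real.rpow_one D).symm
        _ ≤ D ^ e := Real.rpow_le_rpow_of_exponent_ge hD h he1
  calc ‖f z - f w‖ ^ q ≤ 2 * S ^ q * (D ^ α) ^ q * (D ^ e)⁻¹ := by rwa [← div_eq_mul_inv]
    _ ≤ 2 * S ^ q * (D ^ α) ^ q * max 1 D⁻¹ := by gcongr
    _ = _ := by rw [mul_pow]; ring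

theorem lemma_H {Φ : ℂ → ℂ} (hΦ : DifferentiableOn ℂ Φ (ball 0 1)) {S α : ℝ}
    (hS : 0 ≤ S) (hα : α ∈ Ioo (0 : ℝ) 1)
    (h : ∀ z ∈ ball (0 : ℂ) 1, ∀ ω : ℂ, ‖ω‖ = 1 → ‖Φ (z * ω) - Φ z‖ ≤ S * ‖ω - 1‖ ^ α)
    {z w : ℂ} (hz : z ∈ ball (0 : ℂ) 1) (hw : w ∈ ball (0 : ℂ) 1) :
    ‖Φ z - Φ w‖ ≤ S * ‖z - w‖ ^ α := by
  have key : ∀ r : ℝ, 0 < r → r < 1 → ‖Φ (r * z) - Φ (r * w)‖ ≤ S * ‖z - w‖ ^ α := by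
    intro r hr0 hr1
    have hR : 1 < 1 / r := by rw [lt_div_iff₀ hr0]; linarith
    have hd : DifferentiableOn ℂ (fun x => Φ (r * x)) (ball 0 (1 / r)) := by
      refine hΦ.comp (by fun_prop) fun x hx => ?_
      rw [mem_ball_zero_iff] at hx ⊢
      rw [norm_mul, Complex.norm_real, Real.norm_eq_abs, abs_of_pos hr0]
      rw [lt_div_iff₀ hr0] at hx; linarith
    have s1 : ∀ w ∈ sphere (0 : ℂ) 1, ∀ x ∈ closedBall (0 : ℂ) 1,
        ‖Φ (r * x) - Φ (r * w)‖ ≤ S * ‖x - w‖ ^ α := by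
      intro w hw x hx
      refine lemma_X hR hd hS hα (sphere_subset_closedBall hw) (fun ζ hζ => ?_) hx
      have hw1 := mem_sphere_zero_iff_norm.1 hw
      have hζ1 := mem_sphere_zero_iff_norm.1 hζ
      have hw0 : w ≠ 0 := by rintro rfl; simp at hw1
      have := h (r * w) (by
        rw [mem_ball_zero_iff, norm_mul, Complex.norm_real, Real.norm_eq_abs, abs_of_pos hr0, hw1]
        linarith) (ζ / w) (by rw [norm_div, hw1, hζ1]; norm_num)
      have e1 : (r : ℂ) * w * (ζ / w) = r * ζ := by field_simp
      have e2 : ‖ζ / w - 1‖ = ‖ζ - w‖ := by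
        rw [div_sub_one hw0, norm_div, hw1, div_one]
      rwa [e1, e2] at this
    refine lemma_X hR hd hS hα (ball_subset_closedBall hw) (fun ζ hζ => ?_)
      (ball_subset_closedBall hz)
    rw [norm_sub_rev, norm_sub_rev ζ w]
    exact s1 ζ hζ w (ball_subset_closedBall hw)
  have ht : ∀ x ∈ ball (0 : ℂ) 1, Filter.Tendsto (fun r : ℝ => Φ (r * x)) (nhdsWithin 1 (Iio 1))
      (nhds (Φ x)) := by
    intro x hx
    have h1 : ContinuousAt Φ x := (hΦ.differentiableAt (isOpen_ball.mem_nhds hx)).continuousAt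
    have h2 : Filter.Tendsto (fun r : ℝ => (r : ℂ) * x) (nhds 1) (nhds x) := by
      have : ContinuousAt (fun r : ℝ => (r : ℂ) * x) 1 := by fun_prop
      have h3 := this.tendsto
      simpa using h3
    exact h1.tendsto.comp (h2.mono_left nhdsWithin_le_nhds)
  refine le_of_tendsto ((ht z hz).sub (ht w hw)).norm ?_
  filter_upwards [Ioo_mem_nhdsLT (zero_lt_one' ℝ)] with r hr using key r hr.1 hr.2


theorem beta_bound {α : ℝ} (hα : α ∈ Ioo (0 : ℝ) 1) :
    (0.822 : ℝ) ^ (1 / α) ≤ 0.53 + 0.35 * α := by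
  obtain ⟨h0, h1⟩ := hα
  have e1 : (0.822 : ℝ) ≤ exp (-0.195) := by
    have h := Real.add_one_le_exp (-0.195 / 32)
    have h2 := pow_le_pow_left₀ (by norm_num) h 32
    rw [← Real.exp_nat_mul] at h2
    have h3 : ((32 : ℕ) : ℝ) * (-0.195 / 32) = -0.195 := by norm_num
    rw [h3] at h2
    refine le_trans ?_ h2
    norm_num
  have e2 : exp (-0.3) ≤ 0.7409 := by
    have h := Real.sum_le_exp_of_nonneg (x := 0.3) (by norm_num) 5
    rw [exp_neg, inv_le_comm₀ (by positivity) (by norm_num)]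
    refine le_trans ?_ h
    norm_num [Finset.sum_range_succ, Nat.factorial]
  have e3 : (0.822 : ℝ) ^ (1 / α) ≤ exp (-0.195 / α) := by
    calc (0.822 : ℝ) ^ (1 / α) ≤ exp (-0.195) ^ (1 / α) := by gcongr
      _ = exp (-0.195 / α) := by rw [← Real.exp_mul]; congr 1; ring
  have hpos : 0 < 0.7 * α + 0.195 := by positivity
  have e4 : exp (-(0.195 / α - 0.3)) ≤ α / (0.7 * α + 0.195) := by
    have h := Real.add_one_le_exp (0.195 / α - 0.3)
    have h2 : 0.195 / α - 0.3 + 1 = (0.7 * α + 0.195) / α := by field_simp; ring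
    rw [h2] at h
    rw [exp_neg, inv_le_comm₀ (by positivity) (by positivity), inv_div]
    exact h
  have e5 : exp (-0.195 / α) = exp (-0.3) * exp (-(0.195 / α - 0.3)) := by
    rw [← exp_add]; congr 1; ring
  rw [e5] at e3
  calc _ ≤ exp (-0.3) * exp (-(0.195 / α - 0.3)) := e3
    _ ≤ 0.7409 * (α / (0.7 * α + 0.195)) := by gcongr
    _ ≤ 0.53 + 0.35 * α := by
      rw [← mul_div_assoc, div_le_iff₀ hpos]
      nlinarith [sq_nonneg (α - 0.6156)]

theorem alpha_ineq {α : ℝ} (hα : α ∈ Ioo (0 : ℝ) 1) :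
    2.233 * (π / 4) ^ α + 1.5 * (π / 4) * (1.463 / 1.233) * (0.822 : ℝ) ^ (1 / α) ≤ 3 := by
  have hb := beta_bound hα
  obtain ⟨h0, h1⟩ := hα
  have hpi : π / 4 ≤ 0.7854 := by linarith [Real.pi_lt_d4]
  have hp0 := pi_pos
  have h2 : (π / 4) ^ α ≤ 1 - 0.2146 * α := by
    have h3 := rpow_one_add_le_one_add_mul_self (s := π / 4 - 1) (by linarith) h0.le h1.le
    rw [add_sub_cancel] at h3
    nlinarith
  calc _ ≤ 2.233 * (1 - 0.2146 * α) + 1.5 * 0.7854 * (1.463 / 1.233) * (0.53 + 0.35 * α) := by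
        gcongr
    _ ≤ 3 := by norm_num; nlinarith

theorem min_ineq {α L H d : ℝ} (hα : α ∈ Ioo (0 : ℝ) 1) (hL : 0 < L) (hH : 0 ≤ H) (hd : 0 < d)
    {X : ℝ}
    (hX1 : X ≤ 2 * ((2 * (π / 4) ^ α * H) * (1.233 * (1.463 / (1.233 * L)) ^ α)))
    (hX2 : X ≤ 2.233 * ((2 * (π / 4) ^ α * H) * d ^ α) +
      L * d * ((2 * (π / 4) ^ α * H) * (1.233 * (1.463 / (1.233 * L)) ^ α))) :
    X ≤ 6 * H * d ^ α := by
  have hp0 := pi_pos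
  have hai := alpha_ineq hα
  set σ := 1.463 / (1.233 * L) with hσ
  have hσ0 : 0 < σ := by positivity
  set p := (π / 4) ^ α with hp
  have hpp : 0 < p := by positivity
  set β : ℝ := 0.822 ^ (1 / α) with hβ
  have hβ0 : 0 < β := by positivity
  set d0 := β * (π / 4) * σ with hd0
  have hd00 : 0 < d0 := by positivity
  have hd0α : d0 ^ α = 0.822 * p * σ ^ α := by
    rw [hd0, Real.mul_rpow (by positivity) hσ0.le, Real.mul_rpow hβ0.le (by positivity), hβ,
      ← Real.rpow_mul (by norm_num), one_div, inv_mul_cancel₀ hα.1.ne', Real.rpow_one]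
  have hσα : 0 < σ ^ α := by positivity
  have hdα : 0 < d ^ α := by positivity
  rcases le_total d0 d with h | h
  · have h1 : d0 ^ α ≤ d ^ α := Real.rpow_le_rpow hd00.le h hα.1.le
    rw [hd0α] at h1
    have h2 := mul_le_mul_of_nonneg_left h1 hH
    linarith
  · have h1 : d ^ (1 - α) ≤ d0 ^ (1 - α) := Real.rpow_le_rpow hd.le h (by linarith [hα.2])
    rw [Real.rpow_sub hd, Real.rpow_sub hd00, Real.rpow_one, Real.rpow_one, hd0α,
      div_le_div_iff₀ hdα (by positivity)] at h1
    have h2 : p * σ ^ α * d ≤ d0 / 0.822 * d ^ α := by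
      rw [div_mul_eq_mul_div, le_div_iff₀ (by norm_num)]; linarith
    have h3 : L * 1.233 * (p * σ ^ α * d) ≤ L * 1.233 * (d0 / 0.822 * d ^ α) := by gcongr
    have h4 : L * 1.233 * (d0 / 0.822 * d ^ α) = 1.5 * (π / 4) * (1.463 / 1.233) * β * d ^ α := by
      rw [hd0, hσ]; field_simp; norm_num
    have h5 := mul_le_mul_of_nonneg_right hai hdα.le
    have h6 : 2.233 * p * d ^ α + L * 1.233 * (p * σ ^ α * d) ≤ 3 * d ^ α := by linarith
    have h7 := mul_le_mul_of_nonneg_left h6 (by positivity : 0 ≤ 2 * H)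
    linarith


theorem PS_succ {c : ℕ → ℂ} (hc : PS c) : PS fun n => ((n : ℂ) + 1) * c (n + 1) := by
  intro z hz
  have hz1 : ‖z‖ < 1 := mem_ball_zero_iff.1 hz
  obtain ⟨ρ, h1, h2⟩ := exists_between hz1
  have hρ : 0 < ρ := (norm_nonneg z).trans_lt h1
  have hs := hc (ρ : ℂ) (by rw [mem_ball_zero_iff]; simpa [abs_of_pos hρ] using h2)
  obtain ⟨C, hC⟩ := hs.norm.tendsto_atTop_zero.bddAbove_range
  have hq : ‖z‖ / ρ < 1 := by rwa [div_lt_one hρ]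
  have hq0 : 0 ≤ ‖z‖ / ρ := by positivity
  have s1 : Summable fun n : ℕ => ((n : ℝ) ^ 1) * (‖z‖ / ρ) ^ n :=
    summable_pow_mul_geometric_of_norm_lt_one 1 (by rwa [Real.norm_eq_abs, abs_of_nonneg hq0])
  have s2 : Summable fun n : ℕ => (‖z‖ / ρ) ^ n := summable_geometric_of_lt_one hq0 hq
  refine Summable.of_norm_bounded (((s1.add s2).mul_left (C / ρ))) fun n => ?_
  have h3 : ‖c (n + 1)‖ * ρ ^ (n + 1) ≤ C := by
    have := hC (mem_range_self (n + 1))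
    simpa [abs_of_pos hρ] using this
  rw [norm_mul, norm_mul, norm_pow]
  have h4 : ‖(n : ℂ) + 1‖ = n + 1 := by
    have : (n : ℂ) + 1 = ((n + 1 : ℕ) : ℂ) := by push_cast; ring
    rw [this, Complex.norm_natCast]; push_cast; ring
  rw [h4]
  calc ((n : ℝ) + 1) * ‖c (n + 1)‖ * ‖z‖ ^ n
      = ((‖c (n + 1)‖ * ρ ^ (n + 1)) / ρ) * (((n : ℝ) + 1) * (‖z‖ / ρ) ^ n) := by
        rw [div_pow, pow_succ]; field_simp
    _ ≤ (C / ρ) * (((n : ℝ) + 1) * (‖z‖ / ρ) ^ n) := by gcongr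
    _ = _ := by ring

theorem PS_hasDerivAt {c : ℕ → ℂ} (hc : PS c) {z : ℂ} (hz : z ∈ ball (0 : ℂ) 1) :
    HasDerivAt (fun z => ∑' n, c n * z ^ n) (∑' n : ℕ, (((n : ℂ) + 1) * c (n + 1)) * z ^ n) z := by
  have hz1 : ‖z‖ < 1 := mem_ball_zero_iff.1 hz
  obtain ⟨r, h1, h2⟩ := exists_between hz1
  have hr : 0 < r := (norm_nonneg z).trans_lt h1
  have hs := (PS_succ hc (r : ℂ) (by rw [mem_ball_zero_iff]; simpa [abs_of_pos hr] using h2)).norm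
  have hu : Summable fun n : ℕ => ‖c n‖ * (n * r ^ (n - 1)) := by
    rw [← summable_nat_add_iff 1]
    refine hs.congr fun n => ?_
    have h4 : ‖(n : ℂ) + 1‖ = n + 1 := by
      have : (n : ℂ) + 1 = ((n + 1 : ℕ) : ℂ) := by push_cast; ring
      rw [this, Complex.norm_natCast]; push_cast; ring
    rw [norm_mul, norm_mul, norm_pow, h4]
    simp [abs_of_pos hr]; ring
  have hu2 : Summable fun n : ℕ => c n * (n * z ^ (n - 1)) := by
    refine Summable.of_norm_bounded hu fun n => ?_
    simp only [norm_mul, norm_pow, Complex.norm_natCast]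
    gcongr
  have := hasDerivAt_tsum_of_isPreconnected (g := fun n (z : ℂ) => c n * z ^ n)
    (g' := fun n (z : ℂ) => c n * (n * z ^ (n - 1))) (t := ball 0 r) (y₀ := z) (y := z) hu isOpen_ball
    (convex_ball _ _).isPreconnected (fun n y hy => (hasDerivAt_pow n y).const_mul (c n))
    (fun n y hy => by
      rw [mem_ball_zero_iff] at hy
      simp only [norm_mul, norm_pow, Complex.norm_natCast]
      gcongr) (by simpa using h1) (hc z hz) (by simpa using h1)
  rw [hu2.tsum_eq_zero_add] at this
  simp only [Nat.cast_zero, zero_mul, mul_zero, zero_add] at this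
  have e : ∀ n : ℕ, c (n + 1) * (((n + 1 : ℕ) : ℂ) * z ^ (n + 1 - 1)) =
      (((n : ℂ) + 1) * c (n + 1)) * z ^ n := by
    intro n
    push_cast
    ring
  simp only [e] at this
  exact this

/-- coefficients of the `j`-th derivative -/
noncomputable def cF (a : ℕ → ℝ) (j n : ℕ) : ℂ := ((n + j).descFactorial j : ℂ) * (a (n + j) : ℂ)

/-- the `j`-th derivative -/
noncomputable def FF (a : ℕ → ℝ) (j : ℕ) (z : ℂ) : ℂ := ∑' n, cF a j n * z ^ n

/-- shifted coefficients -/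
noncomputable def bb (a : ℕ → ℝ) : ℕ → ℂ
  | 0 => 0
  | n + 1 => (a n : ℂ)

theorem cF_succ (a : ℕ → ℝ) (j n : ℕ) : cF a (j + 1) n = ((n : ℂ) + 1) * cF a j (n + 1) := by
  unfold cF
  have e : n + (j + 1) = n + 1 + j := by ring
  have e2 : (n + 1 + j).descFactorial (j + 1) = (n + 1) * (n + 1 + j).descFactorial j := by
    rw [Nat.descFactorial_succ]; congr 1; omega
  rw [e, e2]; push_cast; ring

theorem PS_of_summable {b : ℕ → ℂ} (hb : Summable fun N => ‖b N‖) : PS b := by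
  intro z hz
  refine Summable.of_norm_bounded hb fun n => ?_
  rw [norm_mul, norm_pow]
  exact mul_le_of_le_one_right (norm_nonneg _)
      (pow_le_one₀ (norm_nonneg _) (mem_ball_zero_iff.1 hz).le)

theorem PS_cF {a : ℕ → ℝ} (ha : Summable fun n => ‖(a n : ℂ)‖) (j : ℕ) : PS (cF a j) := by
  induction j with
  | zero =>
    apply PS_of_summable
    simpa [cF] using ha
  | succ j ih =>
    have := PS_succ ih
    have e : cF a (j + 1) = fun n : ℕ => ((n : ℂ) + 1) * cF a j (n + 1) := funext (cF_succ a j)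
    rwa [e]

theorem FF_deriv {a : ℕ → ℝ} (ha : Summable fun n => ‖(a n : ℂ)‖) (j : ℕ) {z : ℂ}
    (hz : z ∈ ball (0 : ℂ) 1) : HasDerivAt (FF a j) (FF a (j + 1) z) z := by
  have := PS_hasDerivAt (PS_cF ha j) hz
  simp only [← cF_succ] at this
  exact this

theorem FF_diff {a : ℕ → ℝ} (ha : Summable fun n => ‖(a n : ℂ)‖) (j : ℕ) :
    DifferentiableOn ℂ (FF a j) (ball 0 1) := fun _ hz =>
  (FF_deriv ha j hz).differentiableAt.differentiableWithinAt

theorem bb_summable {a : ℕ → ℝ} (ha : Summable fun n => ‖(a n : ℂ)‖) :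
    Summable fun N => ‖bb a N‖ := by
  rw [← summable_nat_add_iff 1]; exact ha

theorem PS_poly {b : ℕ → ℂ} (hb : Summable fun N => ‖b N‖) (j : ℕ) :
    PS fun N => (N : ℂ) ^ j * b N := by
  intro z hz
  refine Summable.of_norm_bounded (summable_poly_geom hb j (norm_nonneg z) (mem_ball_zero_iff.1 hz))
    fun N => ?_
  simp only [norm_mul, norm_pow, Complex.norm_natCast]
  rw [mul_comm (‖b N‖)]

theorem coeff_eq (a : ℕ → ℝ) (j n : ℕ) :
    ((mm j (n + (j + 1)) : ℝ) : ℂ) * (((n + (j + 1) : ℕ) : ℂ) ^ j * bb a (n + (j + 1))) = cF a j n := by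
  have e : n + (j + 1) = (n + j) + 1 := by ring
  have h0 : ((n + j + 1 : ℕ) : ℂ) ≠ 0 := by
    rw [Nat.cast_ne_zero]; omega
  rw [e]
  simp only [mm, bb, cF, Nat.add_sub_cancel]
  push_cast at h0 ⊢
  field_simp

theorem coeff_zero (a : ℕ → ℝ) {j N : ℕ} (h : N < j + 1) :
    ((mm j N : ℝ) : ℂ) * ((N : ℂ) ^ j * bb a N) = 0 := by
  rcases Nat.eq_zero_or_pos j with rfl | hj
  · obtain rfl : N = 0 := by omega
    simp [bb]
  · rw [mm_zero_of_le hj (by omega)]; simp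

/-- `z^{j+1} F_j(z) = W(z)` -/
theorem FF_W {a : ℕ → ℝ} (ha : Summable fun n => ‖(a n : ℂ)‖) (j : ℕ) {z : ℂ}
    (hz : z ∈ ball (0 : ℂ) 1) :
    ∑' N : ℕ, ((mm j N : ℝ) : ℂ) * ((N : ℂ) ^ j * bb a N) * z ^ N = z ^ (j + 1) * FF a j z := by
  have hs : Summable fun N : ℕ => ((mm j N : ℝ) : ℂ) * ((N : ℂ) ^ j * bb a N) * z ^ N := by
    refine Summable.of_norm_bounded (PS_poly (bb_summable ha) j z hz).norm fun N => ?_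
    rw [mul_assoc, norm_mul]
    refine mul_le_of_le_one_left (norm_nonneg _) ?_
    rw [Complex.norm_real, Real.norm_eq_abs, abs_of_nonneg (mm_nonneg _ _)]
    exact mm_le_one' _ _
  rw [← hs.sum_add_tsum_nat_add (j + 1), Finset.sum_eq_zero, zero_add]
  · unfold FF
    rw [← tsum_mul_left]
    refine tsum_congr fun n => ?_
    rw [coeff_eq, pow_add]; ring
  · intro N hN
    rw [coeff_zero a (Finset.mem_range.1 hN), zero_mul]


theorem a_summable {a : ℕ → ℝ} {φ : ℂ → ℂ}
    (hrep : ∀ w ∈ sphere (0:ℂ) 1, HasSum (fun n : ℕ => (a n : ℂ) * w ^ n) (φ w / w)) :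
    Summable fun n => ‖(a n : ℂ)‖ := by
  have := (hrep 1 (by simp)).summable.norm
  simpa using this

theorem circ_rep {a : ℕ → ℝ} {φ : ℂ → ℂ}
    (hrep : ∀ w ∈ sphere (0:ℂ) 1, HasSum (fun n : ℕ => (a n : ℂ) * w ^ n) (φ w / w)) (θ : ℝ) :
    circParam φ θ = ∑' N, bb a N * Complex.exp (θ * Complex.I) ^ N := by
  have hn : ‖Complex.exp (θ * Complex.I)‖ = 1 := Complex.norm_exp_ofReal_mul_I θ
  set w := Complex.exp (θ * Complex.I) with hw
  have hw0 : w ≠ 0 := Complex.exp_ne_zero _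
  have h := (hrep w (by simpa using hn)).mul_left w
  have hs : Summable fun N => bb a N * w ^ N := by
    rw [← summable_nat_add_iff 1]
    refine h.summable.congr fun n => ?_
    simp only [bb]; ring
  rw [hs.tsum_eq_zero_add]
  simp only [bb, zero_mul, zero_add]
  have e : w * (φ w / w) = circParam φ θ := by
    rw [mul_div_cancel₀ _ hw0]; rfl
  rw [← e, ← h.tsum_eq]
  refine tsum_congr fun n => ?_
  ring

/-- the boundary data as power series -/
noncomputable def UU (a : ℕ → ℝ) (j : ℕ) (z : ℂ) : ℂ := ∑' N : ℕ, ((N : ℂ) ^ j * bb a N) * z ^ N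

theorem UU_bound {k : ℕ} {α : ℝ} {a : ℕ → ℝ} {φ : ℂ → ℂ} (hφ : MemHolderCircle k α φ)
    (hrep : ∀ w ∈ sphere (0:ℂ) 1, HasSum (fun n : ℕ => (a n : ℂ) * w ^ n) (φ w / w))
    {j : ℕ} (hj : j ≤ k) {z : ℂ} (hz : z ∈ ball (0 : ℂ) 1) : ‖UU a j z‖ ≤ MM φ j :=
  lemma_Q (bb_summable (a_summable hrep)) (circ_rep hrep) (hφ.1.of_le (by exact_mod_cast hj))
    (le_MM hφ hj) hz

theorem mul_unit_mem {z ω : ℂ} (hz : z ∈ ball (0 : ℂ) 1) (hω : ‖ω‖ = 1) : z * ω ∈ ball (0 : ℂ) 1 := by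
  rw [mem_ball_zero_iff] at *
  rwa [norm_mul, hω, mul_one]

theorem PS_rot {u : ℕ → ℂ} (hu : PS u) {ω : ℂ} (hω : ‖ω‖ = 1) : PS fun N => u N * (ω ^ N - 1) := by
  intro z hz
  have := (hu _ (mul_unit_mem hz hω)).sub (hu z hz)
  refine this.congr fun N => ?_
  rw [mul_pow]; ring

theorem tsum_rot {u : ℕ → ℂ} (hu : PS u) {ω : ℂ} (hω : ‖ω‖ = 1) {z : ℂ} (hz : z ∈ ball (0 : ℂ) 1) :
    ∑' N, u N * (ω ^ N - 1) * z ^ N = ∑' N, u N * (z * ω) ^ N - ∑' N, u N * z ^ N := by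
  rw [← (hu _ (mul_unit_mem hz hω)).tsum_sub (hu z hz)]
  refine tsum_congr fun N => ?_
  rw [mul_pow]; ring

theorem UU_rot {k : ℕ} {α : ℝ} (hα : α ∈ Ioo (0 : ℝ) 1) {a : ℕ → ℝ} {φ : ℂ → ℂ}
    (hφ : MemHolderCircle k α φ)
    (hrep : ∀ w ∈ sphere (0:ℂ) 1, HasSum (fun n : ℕ => (a n : ℂ) * w ^ n) (φ w / w))
    {z ω : ℂ} (hz : z ∈ ball (0 : ℂ) 1) (hω : ‖ω‖ = 1) :
    ‖UU a k (z * ω) - UU a k z‖ ≤ 2 * (π / 4) ^ α * HH k α φ * ‖ω - 1‖ ^ α := by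
  obtain ⟨τ, hτ⟩ := (Complex.norm_eq_one_iff ω).1 hω
  have hb := bb_summable (a_summable hrep)
  have hb2 : Summable fun N => ‖bb a N * (ω ^ N - 1)‖ := by
    refine Summable.of_nonneg_of_le (fun _ => norm_nonneg _) (fun N => ?_) (hb.mul_right 2)
    rw [norm_mul]
    gcongr
    refine (norm_sub_le _ _).trans ?_
    rw [norm_pow, hω]; norm_num
  have hcd : ContDiff ℝ k fun θ => circParam φ (θ + τ) := by
    have := hφ.1
    fun_prop
  have key := lemma_Q (j := k) (b := fun N => bb a N * (ω ^ N - 1))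
    (g := fun θ => circParam φ (θ + τ) - circParam φ θ)
    (M := 2 * (π / 4) ^ α * HH k α φ * ‖ω - 1‖ ^ α) hb2 ?_ (hcd.sub hφ.1) ?_ hz
  · have e := tsum_rot (PS_poly hb k) hω hz
    unfold UU
    rw [← e]
    simpa only [mul_assoc] using key
  · intro θ
    have hn : ∀ t : ℝ, ‖Complex.exp (t * Complex.I)‖ = 1 := fun t => Complex.norm_exp_ofReal_mul_I t
    have hs : ∀ t : ℝ, Summable fun N => bb a N * Complex.exp (t * Complex.I) ^ N := by
      intro t
      refine Summable.of_norm_bounded hb fun N => ?_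
      rw [norm_mul, norm_pow, hn]; simp
    rw [circ_rep hrep, circ_rep hrep, ← (hs _).tsum_sub (hs _)]
    refine tsum_congr fun N => ?_
    rw [Complex.ofReal_add, add_mul, Complex.exp_add, hτ, mul_pow]; ring
  · intro θ
    have h1 := circle_holder hα hφ θ τ
    rw [hτ] at h1
    have e : iteratedDeriv k (fun θ => circParam φ (θ + τ) - circParam φ θ) θ =
        iteratedDeriv k (circParam φ) (θ + τ) - iteratedDeriv k (circParam φ) θ := by
      rw [iteratedDeriv_fun_sub hcd.contDiffAt hφ.1.contDiffAt, iteratedDeriv_comp_add_const]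
    rw [e]; exact h1

theorem FF_bound {k : ℕ} {α : ℝ} {a : ℕ → ℝ} {φ : ℂ → ℂ} (hφ : MemHolderCircle k α φ)
    (hrep : ∀ w ∈ sphere (0:ℂ) 1, HasSum (fun n : ℕ => (a n : ℂ) * w ^ n) (φ w / w))
    {j : ℕ} (hj : j ≤ k) {z : ℂ} (hz : z ∈ ball (0 : ℂ) 1) : ‖FF a j z‖ ≤ 2.233 * MM φ j := by
  have ha := a_summable hrep
  refine lemma_R (FF_diff ha j) (L := j + 1) (fun z hz => ?_) hz
  rw [← norm_pow, ← norm_mul, ← FF_W ha j hz]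
  rcases Nat.eq_zero_or_pos j with rfl | h0
  · have := UU_bound hφ hrep hj hz
    have hM := MM_nonneg φ 0
    simp only [mm_zero, Complex.ofReal_one, one_mul]
    unfold UU at this
    linarith
  · exact W_bound h0 (PS_poly (bb_summable ha) j) (fun z hz => UU_bound hφ hrep hj hz) hz

theorem FF_bound_zero {k : ℕ} {α : ℝ} {a : ℕ → ℝ} {φ : ℂ → ℂ} (hφ : MemHolderCircle k α φ)
    (hrep : ∀ w ∈ sphere (0:ℂ) 1, HasSum (fun n : ℕ => (a n : ℂ) * w ^ n) (φ w / w))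
    {z : ℂ} (hz : z ∈ ball (0 : ℂ) 1) : ‖FF a 0 z‖ ≤ MM φ 0 := by
  have ha := a_summable hrep
  refine lemma_R (FF_diff ha 0) (L := 0 + 1) (fun z hz => ?_) hz
  rw [← norm_pow, ← norm_mul, ← FF_W ha 0 hz]
  have := UU_bound hφ hrep (Nat.zero_le k) hz
  simp only [mm_zero, Complex.ofReal_one, one_mul]
  exact this

theorem pow_sub_one_le {ω : ℂ} (hω : ‖ω‖ = 1) (L : ℕ) : ‖ω ^ L - 1‖ ≤ L * ‖ω - 1‖ := by
  induction L with
  | zero => simp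
  | succ n ih =>
    have e : ω ^ (n + 1) - 1 = ω ^ n * (ω - 1) + (ω ^ n - 1) := by ring
    rw [e]
    refine (norm_add_le _ _).trans ?_
    rw [norm_mul, norm_pow, hω]
    push_cast
    simp only [one_pow]
    linarith

theorem FF_diff_rot {a : ℕ → ℝ} (ha : Summable fun n => ‖(a n : ℂ)‖) (j : ℕ) {ω : ℂ} (hω : ‖ω‖ = 1) :
    DifferentiableOn ℂ (fun z => FF a j (z * ω) - FF a j z) (ball 0 1) := by
  refine DifferentiableOn.sub ?_ (FF_diff ha j)
  exact (FF_diff ha j).comp (by fun_prop) fun z hz => mul_unit_mem hz hω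

theorem FF_rot_gen {a : ℕ → ℝ} (ha : Summable fun n => ‖(a n : ℂ)‖) (j : ℕ) {ω : ℂ} (hω : ‖ω‖ = 1)
    {A N : ℝ}
    (hA : ∀ z ∈ ball (0 : ℂ) 1, ‖(z * ω) ^ (j + 1) * FF a j (z * ω) - z ^ (j + 1) * FF a j z‖ ≤ A)
    (hN : ∀ z ∈ ball (0 : ℂ) 1, ‖FF a j z‖ ≤ N) {z : ℂ} (hz : z ∈ ball (0 : ℂ) 1) :
    ‖FF a j (z * ω) - FF a j z‖ ≤ A + ((j : ℝ) + 1) * ‖ω - 1‖ * N := by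
  refine lemma_R (FF_diff_rot ha j hω) (L := j + 1) (fun z hz => ?_) hz
  have hN0 : 0 ≤ N := (norm_nonneg _).trans (hN z hz)
  rw [← norm_pow, ← norm_mul]
  have e : z ^ (j + 1) * (FF a j (z * ω) - FF a j z) =
      ((z * ω) ^ (j + 1) * FF a j (z * ω) - z ^ (j + 1) * FF a j z) -
        (ω ^ (j + 1) - 1) * z ^ (j + 1) * FF a j (z * ω) := by
    rw [mul_pow]; ring
  rw [e]
  refine (norm_sub_le _ _).trans (add_le_add (hA z hz) ?_)
  rw [norm_mul, norm_mul, norm_pow z]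
  have h1 := pow_sub_one_le hω (j + 1)
  push_cast at h1
  have h2 : ‖z‖ ^ (j + 1) ≤ 1 := pow_le_one₀ (norm_nonneg _) (mem_ball_zero_iff.1 hz).le
  have h3 := hN _ (mul_unit_mem hz hω)
  calc _ ≤ (((j : ℝ) + 1) * ‖ω - 1‖) * 1 * N := by gcongr
    _ = _ := by ring

theorem FF_rot_pos {k : ℕ} (hk : 1 ≤ k) {α : ℝ} (hα : α ∈ Ioo (0 : ℝ) 1) {a : ℕ → ℝ} {φ : ℂ → ℂ}
    (hφ : MemHolderCircle k α φ)
    (hrep : ∀ w ∈ sphere (0:ℂ) 1, HasSum (fun n : ℕ => (a n : ℂ) * w ^ n) (φ w / w))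
    {z ω : ℂ} (hz : z ∈ ball (0 : ℂ) 1) (hω : ‖ω‖ = 1) :
    ‖FF a k (z * ω) - FF a k z‖ ≤ 6 * HH k α φ * ‖ω - 1‖ ^ α := by
  have ha := a_summable hrep
  have hb := bb_summable ha
  have hH := HH_nonneg k α φ
  have hpi := pi_pos
  rcases (norm_nonneg (ω - 1)).eq_or_lt with h0 | h0
  · have : ω = 1 := by rw [← sub_eq_zero, ← norm_eq_zero, ← h0]
    subst this
    simp only [mul_one, sub_self, norm_zero]
    positivity
  have hN : ∀ z ∈ ball (0 : ℂ) 1, ‖FF a k z‖ ≤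
      (2 * (π / 4) ^ α * HH k α φ) * (1.233 * (1.463 / (1.233 * ((k : ℝ) + 1))) ^ α) := by
    intro z hz
    refine lemma_R (FF_diff ha k) (L := k + 1) (fun z hz => ?_) hz
    rw [← norm_pow, ← norm_mul, ← FF_W ha k hz]
    refine W_bound_holder hk (PS_poly hb k) (by positivity) hα.1.le hα.2.le ?_ hz
    intro z hz ω hω
    rw [norm_sub_rev, norm_sub_rev 1]
    exact UU_rot hα hφ hrep hz hω
  refine min_ineq hα (L := (k : ℝ) + 1) (by positivity) hH h0 ?_ ?_
  · refine (norm_sub_le _ _).trans ?_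
    have h1 := hN _ (mul_unit_mem hz hω)
    have h2 := hN z hz
    linarith
  · refine FF_rot_gen ha k hω (fun z hz => ?_) hN hz
    have hps := PS_poly hb k
    rw [← FF_W ha k hz, ← FF_W ha k (mul_unit_mem hz hω)]
    have hp2 : PS fun N : ℕ => ((mm k N : ℝ) : ℂ) * ((N : ℂ) ^ k * bb a N) := by
      intro z hz
      refine Summable.of_norm_bounded (hps z hz).norm fun N => ?_
      rw [mul_assoc, norm_mul]
      refine mul_le_of_le_one_left (norm_nonneg _) ?_
      rw [Complex.norm_real, Real.norm_eq_abs, abs_of_nonneg (mm_nonneg _ _)]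
      exact mm_le_one' _ _
    rw [← tsum_rot hp2 hω hz]
    have h := W_bound hk (PS_rot hps hω) (M := 2 * (π / 4) ^ α * HH k α φ * ‖ω - 1‖ ^ α) (fun z hz => by
      rw [tsum_rot hps hω hz]
      exact UU_rot hα hφ hrep hz hω) hz
    simpa only [mul_assoc] using h

theorem FF_rot_zero {α : ℝ} (hα : α ∈ Ioo (0 : ℝ) 1) {a : ℕ → ℝ} {φ : ℂ → ℂ}
    (hφ : MemHolderCircle 0 α φ)
    (hrep : ∀ w ∈ sphere (0:ℂ) 1, HasSum (fun n : ℕ => (a n : ℂ) * w ^ n) (φ w / w))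
    {z ω : ℂ} (hz : z ∈ ball (0 : ℂ) 1) (hω : ‖ω‖ = 1) :
    ‖FF a 0 (z * ω) - FF a 0 z‖ ≤ (2 * HH 0 α φ + 2 * MM φ 0) * ‖ω - 1‖ ^ α := by
  have ha := a_summable hrep
  have hH := HH_nonneg 0 α φ
  have hM := MM_nonneg φ 0
  have hpi := pi_pos
  have h := FF_rot_gen ha 0 hω (A := 2 * (π / 4) ^ α * HH 0 α φ * ‖ω - 1‖ ^ α) (fun z hz => by
    rw [← FF_W ha 0 hz, ← FF_W ha 0 (mul_unit_mem hz hω)]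
    simp only [mm_zero, Complex.ofReal_one, one_mul]
    exact UU_rot hα hφ hrep hz hω) (fun z hz => FF_bound_zero hφ hrep hz) hz
  refine h.trans ?_
  have hp : (π / 4) ^ α ≤ 1 := Real.rpow_le_one (by positivity) (by linarith [Real.pi_lt_four]) hα.1.le
  set d := ‖ω - 1‖ with hd
  have hd0 : 0 ≤ d := norm_nonneg _
  have hd2 : d ≤ 2 := by
    refine (norm_sub_le _ _).trans ?_
    rw [hω]; norm_num
  have h3 : d ≤ 2 * d ^ α := by
    have h4 : d / 2 ≤ (d / 2) ^ α := by
      have := Real.rpow_le_rpow_of_exponent_ge' (x := d / 2) (by positivity) (by linarith) hα.1.le hα.2.le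
      simpa using this
    have h5 : (d / 2) ^ α ≤ d ^ α := Real.rpow_le_rpow (by positivity) (by linarith) hα.1.le
    linarith
  have hda : 0 ≤ d ^ α := by positivity
  have h6 : (π / 4) ^ α * (HH 0 α φ * d ^ α) ≤ 1 * (HH 0 α φ * d ^ α) := by gcongr
  have h7 : d * MM φ 0 ≤ 2 * d ^ α * MM φ 0 := by gcongr
  push_cast
  nlinarith

/-- rotation constant -/
noncomputable def SS (k : ℕ) (α : ℝ) (φ : ℂ → ℂ) : ℝ :=
  if k = 0 then 2 * HH 0 α φ + 2 * MM φ 0 else 6 * HH k α φ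

theorem SS_nonneg (k : ℕ) (α : ℝ) (φ : ℂ → ℂ) : 0 ≤ SS k α φ := by
  have hH := HH_nonneg k α φ
  have hH0 := HH_nonneg 0 α φ
  have hM := MM_nonneg φ 0
  unfold SS
  split_ifs <;> positivity

theorem FF_holder {k : ℕ} {α : ℝ} (hα : α ∈ Ioo (0 : ℝ) 1) {a : ℕ → ℝ} {φ : ℂ → ℂ}
    (hφ : MemHolderCircle k α φ)
    (hrep : ∀ w ∈ sphere (0:ℂ) 1, HasSum (fun n : ℕ => (a n : ℂ) * w ^ n) (φ w / w))
    {z w : ℂ} (hz : z ∈ ball (0 : ℂ) 1) (hw : w ∈ ball (0 : ℂ) 1) :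
    ‖FF a k z - FF a k w‖ ≤ SS k α φ * ‖z - w‖ ^ α := by
  refine lemma_H (FF_diff (a_summable hrep) k) (SS_nonneg k α φ) hα (fun z hz ω hω => ?_) hz hw
  unfold SS
  split_ifs with h
  · subst h; exact FF_rot_zero hα hφ hrep hz hω
  · exact FF_rot_pos (by omega) hα hφ hrep hz hω


theorem closure_unit : closure (ball (0 : ℂ) 1) = closedBall 0 1 := closure_ball _ one_ne_zero

theorem FF_unif {k : ℕ} {α : ℝ} (hα : α ∈ Ioo (0 : ℝ) 1) {a : ℕ → ℝ} {φ : ℂ → ℂ}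
    (hφ : MemHolderCircle k α φ)
    (hrep : ∀ w ∈ sphere (0:ℂ) 1, HasSum (fun n : ℕ => (a n : ℂ) * w ^ n) (φ w / w))
    {j : ℕ} (hj : j ≤ k) : UniformContinuousOn (FF a j) (ball 0 1) := by
  have ha := a_summable hrep
  rcases hj.eq_or_lt with rfl | hj
  · rw [Metric.uniformContinuousOn_iff_le]
    intro ε hε
    have hS := SS_nonneg j α φ
    have hd : 0 < (ε / (SS j α φ + 1)) ^ (1 / α) := by positivity
    refine ⟨_, hd, fun x hx y hy hxy => ?_⟩
    rw [dist_eq_norm] at *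
    refine (FF_holder hα hφ hrep hx hy).trans ?_
    have h1 : ‖x - y‖ ^ α ≤ ε / (SS j α φ + 1) := by
      have := Real.rpow_le_rpow (norm_nonneg _) hxy hα.1.le
      rwa [← Real.rpow_mul (by positivity), one_div_mul_cancel hα.1.ne', Real.rpow_one] at this
    calc _ ≤ SS j α φ * (ε / (SS j α φ + 1)) := by gcongr
      _ = (SS j α φ / (SS j α φ + 1)) * ε := by ring
      _ ≤ 1 * ε := by
        gcongr
        rw [div_le_one (by positivity)]; linarith
      _ = ε := one_mul _
  · have hL : LipschitzOnWith (2.233 * MM φ (j + 1)).toNNReal (FF a j) (ball 0 1) := by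
      refine (convex_ball (0 : ℂ) 1).lipschitzOnWith_of_nnnorm_hasDerivWithin_le
        (f' := FF a (j + 1)) (fun x hx => (FF_deriv ha j hx).hasDerivWithinAt) fun x hx => ?_
      rw [← NNReal.coe_le_coe, Real.coe_toNNReal _ (by have := MM_nonneg φ (j + 1); positivity)]
      exact FF_bound hφ hrep hj hx
    exact hL.uniformContinuousOn

theorem exists_lim_of_unif {f : ℂ → ℂ} {s : Set ℂ} (hf : UniformContinuousOn f s) {x : ℂ}
    (hx : x ∈ closure s) : ∃ y, Filter.Tendsto f (nhdsWithin x s) (nhds y) := by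
  have : (nhdsWithin x s).NeBot := mem_closure_iff_nhdsWithin_neBot.1 hx
  have h1 : Cauchy (nhdsWithin x s) := cauchy_nhds.mono nhdsWithin_le_nhds
  have h2 := h1.map_of_le hf (Filter.le_principal_iff.2 self_mem_nhdsWithin)
  exact CompleteSpace.complete h2

/-- extension to the closed disc -/
noncomputable def EE (a : ℕ → ℝ) (j : ℕ) : ℂ → ℂ := extendFrom (ball 0 1) (FF a j)

theorem EE_cont {k : ℕ} {α : ℝ} (hα : α ∈ Ioo (0 : ℝ) 1) {a : ℕ → ℝ} {φ : ℂ → ℂ}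
    (hφ : MemHolderCircle k α φ)
    (hrep : ∀ w ∈ sphere (0:ℂ) 1, HasSum (fun n : ℕ => (a n : ℂ) * w ^ n) (φ w / w))
    {j : ℕ} (hj : j ≤ k) : ContinuousOn (EE a j) (closedBall 0 1) :=
  continuousOn_extendFrom (by rw [closure_unit]) fun x hx =>
    exists_lim_of_unif (FF_unif hα hφ hrep hj) (by rwa [closure_unit])

theorem EE_eq {a : ℕ → ℝ} (ha : Summable fun n => ‖(a n : ℂ)‖) (j : ℕ) {x : ℂ}
    (hx : x ∈ ball (0 : ℂ) 1) : EE a j x = FF a j x :=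
  extendFrom_eq (subset_closure hx) ((FF_diff ha j).continuousOn x hx)

theorem EE_zero {a : ℕ → ℝ} (ha : Summable fun n => ‖(a n : ℂ)‖) {x : ℂ}
    (hx : x ∈ closedBall (0 : ℂ) 1) : EE a 0 x = ∑' n : ℕ, (a n : ℂ) * x ^ n := by
  have hc := (series_diffContOnCl ha).1
  refine extendFrom_eq (by rwa [closure_unit]) ?_
  have h := (hc x hx).mono_left (nhdsWithin_mono x ball_subset_closedBall)
  have e : FF a 0 = fun z => ∑' n : ℕ, (a n : ℂ) * z ^ n := by
    funext z; simp [FF, cF]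
  rw [e]; exact h

theorem EE_hasFDeriv {k : ℕ} {α : ℝ} (hα : α ∈ Ioo (0 : ℝ) 1) {a : ℕ → ℝ} {φ : ℂ → ℂ}
    (hφ : MemHolderCircle k α φ)
    (hrep : ∀ w ∈ sphere (0:ℂ) 1, HasSum (fun n : ℕ => (a n : ℂ) * w ^ n) (φ w / w))
    {j : ℕ} (hj : j < k) {x : ℂ} (hx : x ∈ closedBall (0 : ℂ) 1) :
    HasFDerivWithinAt (EE a j) (ContinuousLinearMap.mul ℝ ℂ (EE a (j + 1) x)) (closedBall 0 1) x := by
  have ha := a_summable hrep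
  have hd : ∀ y ∈ ball (0 : ℂ) 1,
      HasFDerivAt (EE a j) (ContinuousLinearMap.mul ℝ ℂ (EE a (j + 1) y)) y := by
    intro y hy
    have h1 : HasFDerivAt (FF a j) (ContinuousLinearMap.mul ℝ ℂ (EE a (j + 1) y)) y := by
      have h2 := ((FF_deriv ha j hy).hasFDerivAt).restrictScalars ℝ
      have e : ContinuousLinearMap.mul ℝ ℂ (EE a (j + 1) y) =
          (ContinuousLinearMap.toSpanSingleton ℂ (FF a (j + 1) y)).restrictScalars ℝ := by
        refine ContinuousLinearMap.ext fun v => ?_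
        simp [EE_eq ha _ hy, mul_comm]
      rw [e]; exact h2
    refine h1.congr_of_eventuallyEq ?_
    filter_upwards [isOpen_ball.mem_nhds hy] with w hw
    exact EE_eq ha j hw
  rw [← closure_unit]
  have hc := EE_cont hα hφ hrep hj.le
  have hc2 := EE_cont hα hφ hrep (Nat.succ_le_of_lt hj)
  refine hasFDerivWithinAt_closure_of_tendsto_fderiv
    (fun y hy => (hd y hy).differentiableAt.differentiableWithinAt) (convex_ball _ _) isOpen_ball
    (fun y hy => (hc y (by rwa [closure_unit] at hy)).mono ball_subset_closedBall) ?_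
  have h3 : Filter.Tendsto (fun y => ContinuousLinearMap.mul ℝ ℂ (EE a (j + 1) y))
      (nhdsWithin x (ball 0 1)) (nhds (ContinuousLinearMap.mul ℝ ℂ (EE a (j + 1) x))) :=
    ((ContinuousLinearMap.mul ℝ ℂ).continuous.tendsto _).comp
      ((hc2 x hx).mono_left (nhdsWithin_mono x ball_subset_closedBall))
  refine h3.congr' ?_
  filter_upwards [self_mem_nhdsWithin] with y hy
  exact ((hd y hy).fderiv).symm

/-- multiplication multilinear map with a scalar factor -/
noncomputable def LL (m : ℕ) : ℂ →L[ℝ] ContinuousMultilinearMap ℝ (fun _ : Fin m => ℂ) ℂ :=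
  ((1 : ℂ →L[ℂ] ℂ).smulRight (ContinuousMultilinearMap.mkPiAlgebra ℝ (Fin m) ℂ)).restrictScalars ℝ

theorem LL_apply (m : ℕ) (c : ℂ) :
    LL m c = c • ContinuousMultilinearMap.mkPiAlgebra ℝ (Fin m) ℂ := by
  simp [LL]

theorem LL_norm (m : ℕ) (c : ℂ) : ‖LL m c‖ = ‖c‖ := by
  rw [LL_apply, norm_smul, ContinuousMultilinearMap.norm_mkPiAlgebra, mul_one]

theorem EE_taylor {k : ℕ} {α : ℝ} (hα : α ∈ Ioo (0 : ℝ) 1) {a : ℕ → ℝ} {φ : ℂ → ℂ}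
    (hφ : MemHolderCircle k α φ)
    (hrep : ∀ w ∈ sphere (0:ℂ) 1, HasSum (fun n : ℕ => (a n : ℂ) * w ^ n) (φ w / w)) :
    HasFTaylorSeriesUpToOn k (fun z : ℂ => ∑' n : ℕ, (a n : ℂ) * z ^ n)
      (fun x m => LL m (EE a m x)) (closedBall 0 1) := by
  have ha := a_summable hrep
  refine ⟨?_, ?_, ?_⟩
  · intro x hx
    simp [LL_apply, EE_zero ha hx]
  · intro m hm x hx
    have hm' : m < k := by exact_mod_cast hm
    have h := (LL m).hasFDerivAt.comp_hasFDerivWithinAt x (EE_hasFDeriv hα hφ hrep hm' hx)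
    have e : (LL m.succ (EE a m.succ x)).curryLeft =
        (LL m).comp (ContinuousLinearMap.mul ℝ ℂ (EE a (m + 1) x)) := by
      refine ContinuousLinearMap.ext fun v => ContinuousMultilinearMap.ext fun w => ?_
      simp [LL_apply, Fin.prod_univ_succ, mul_assoc]
    rw [e]; exact h
  · intro m hm
    have hm' : m ≤ k := by exact_mod_cast hm
    exact (LL m).continuous.comp_continuousOn (EE_cont hα hφ hrep hm')

theorem EE_iter {k : ℕ} {α : ℝ} (hα : α ∈ Ioo (0 : ℝ) 1) {a : ℕ → ℝ} {φ : ℂ → ℂ}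
    (hφ : MemHolderCircle k α φ)
    (hrep : ∀ w ∈ sphere (0:ℂ) 1, HasSum (fun n : ℕ => (a n : ℂ) * w ^ n) (φ w / w))
    {j : ℕ} (hj : j ≤ k) {x : ℂ} (hx : x ∈ closedBall (0 : ℂ) 1) :
    iteratedFDerivWithin ℝ j (fun z : ℂ => ∑' n : ℕ, (a n : ℂ) * z ^ n) (closedBall 0 1) x =
      LL j (EE a j x) := by
  have hu : UniqueDiffOn ℝ (closedBall (0 : ℂ) 1) :=
    uniqueDiffOn_convex (convex_closedBall _ _) (by
      rw [interior_closedBall _ one_ne_zero]; exact ⟨0, by simp⟩)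
  exact ((EE_taylor hα hφ hrep).eq_iteratedFDerivWithin_of_uniqueDiffOn (by exact_mod_cast hj) hu hx).symm

theorem EE_bound {k : ℕ} {α : ℝ} (hα : α ∈ Ioo (0 : ℝ) 1) {a : ℕ → ℝ} {φ : ℂ → ℂ}
    (hφ : MemHolderCircle k α φ)
    (hrep : ∀ w ∈ sphere (0:ℂ) 1, HasSum (fun n : ℕ => (a n : ℂ) * w ^ n) (φ w / w))
    {j : ℕ} (hj : j ≤ k) {B : ℝ} (hB : ∀ x ∈ ball (0 : ℂ) 1, ‖FF a j x‖ ≤ B)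
    {x : ℂ} (hx : x ∈ closedBall (0 : ℂ) 1) : ‖EE a j x‖ ≤ B := by
  have ha := a_summable hrep
  have hc := EE_cont hα hφ hrep hj
  refine le_on_closure (f := fun x => ‖EE a j x‖) (g := fun _ => B) (s := ball 0 1)
    (fun y hy => by simpa only [EE_eq ha j hy] using hB y hy) ?_ continuousOn_const
    (by rwa [closure_unit])
  rw [closure_unit]; exact hc.norm

theorem EE_holder {k : ℕ} {α : ℝ} (hα : α ∈ Ioo (0 : ℝ) 1) {a : ℕ → ℝ} {φ : ℂ → ℂ}
    (hφ : MemHolderCircle k α φ)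
    (hrep : ∀ w ∈ sphere (0:ℂ) 1, HasSum (fun n : ℕ => (a n : ℂ) * w ^ n) (φ w / w))
    {x y : ℂ} (hx : x ∈ closedBall (0 : ℂ) 1) (hy : y ∈ closedBall (0 : ℂ) 1) :
    ‖EE a k x - EE a k y‖ ≤ SS k α φ * ‖x - y‖ ^ α := by
  have ha := a_summable hrep
  have hc := EE_cont hα hφ hrep le_rfl
  have hg : ∀ y : ℂ, Continuous fun x : ℂ => SS k α φ * ‖x - y‖ ^ α := fun y =>
    continuous_const.mul ((continuous_id.sub continuous_const).norm.rpow_const fun _ => Or.inr hα.1.le)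
  have h1 : ∀ x ∈ ball (0 : ℂ) 1, ‖EE a k x - EE a k y‖ ≤ SS k α φ * ‖x - y‖ ^ α := by
    intro x hx
    rw [norm_sub_rev, norm_sub_rev x]
    refine le_on_closure (f := fun y => ‖EE a k y - EE a k x‖)
      (g := fun y => SS k α φ * ‖y - x‖ ^ α) (s := ball 0 1)
      (fun y hy => by
        simpa only [EE_eq ha k hy, EE_eq ha k hx] using FF_holder hα hφ hrep hy hx) ?_
      (hg x).continuousOn (by rwa [closure_unit])
    rw [closure_unit]; exact (hc.sub continuousOn_const).norm
  refine le_on_closure (f := fun x => ‖EE a k x - EE a k y‖)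
      (g := fun x => SS k α φ * ‖x - y‖ ^ α) (s := ball 0 1) h1 ?_
      (hg y).continuousOn (by rwa [closure_unit])
  rw [closure_unit]; exact (hc.sub continuousOn_const).norm

/-- extension of Cauchy integrals. If `φ ∈ C^{k,α}(𝕋)` has the form
`φ(w) = w·Σ_{n≥0} aₙwⁿ` with real coefficients, then `C(φ)(z) = Σ_{n≥0} aₙzⁿ` is
well-defined and continuous on `𝔻̄`, holomorphic in `𝔻`, belongs to `C^{k,α}(𝔻̄)` and
satisfies `‖C(φ)‖_{C^{k,α}(𝔻̄)} ≤ 6‖φ‖_{C^{k,α}(𝕋)}`. -/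
theorem cauchy_extension (k : ℕ) (α : ℝ) (hα : α ∈ Ioo (0:ℝ) 1)
    (a : ℕ → ℝ) (φ : ℂ → ℂ)
    (hφ : MemHolderCircle k α φ)
    (hrep : ∀ w ∈ sphere (0:ℂ) 1, HasSum (fun n : ℕ => (a n : ℂ) * w ^ n) (φ w / w)) :
    ContinuousOn (fun z : ℂ => ∑' n : ℕ, (a n : ℂ) * z ^ n) (closedBall 0 1) ∧
    DifferentiableOn ℂ (fun z : ℂ => ∑' n : ℕ, (a n : ℂ) * z ^ n) (ball 0 1) ∧
    MemHolderDisc k α (fun z : ℂ => ∑' n : ℕ, (a n : ℂ) * z ^ n) ∧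
    discHolderNorm k α (fun z : ℂ => ∑' n : ℕ, (a n : ℂ) * z ^ n)
      ≤ 6 * circleHolderNorm k α φ := by
  have ha := a_summable hrep
  have hH := HH_nonneg k α φ
  have hS := SS_nonneg k α φ
  have hhol : ∀ x ∈ closedBall (0:ℂ) 1, ∀ y ∈ closedBall (0:ℂ) 1,
      ‖iteratedFDerivWithin ℝ k (fun z : ℂ => ∑' n : ℕ, (a n : ℂ) * z ^ n) (closedBall 0 1) x
      - iteratedFDerivWithin ℝ k (fun z : ℂ => ∑' n : ℕ, (a n : ℂ) * z ^ n) (closedBall 0 1) y‖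
        ≤ SS k α φ * ‖x - y‖ ^ α := by
    intro x hx y hy
    rw [EE_iter hα hφ hrep le_rfl hx, EE_iter hα hφ hrep le_rfl hy, ← map_sub, LL_norm]
    exact EE_holder hα hφ hrep hx hy
  refine ⟨(series_diffContOnCl ha).1, (series_diffContOnCl ha).2,
    ⟨(EE_taylor hα hφ hrep).contDiffOn , _, hhol⟩, ?_⟩
  have hsup : ∀ j ≤ k, ∀ B : ℝ, 0 ≤ B → (∀ x ∈ ball (0 : ℂ) 1, ‖FF a j x‖ ≤ B) →
      sSup ((fun x => ‖iteratedFDerivWithin ℝ j (fun z : ℂ => ∑' n : ℕ, (a n : ℂ) * z ^ n)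
        (closedBall 0 1) x‖) '' closedBall 0 1) ≤ B := by
    intro j hj B hB0 hB
    refine Real.sSup_le ?_ hB0
    rintro _ ⟨x, hx, rfl⟩
    simp only [EE_iter hα hφ hrep hj hx, LL_norm]
    exact EE_bound hα hφ hrep hj hB hx
  have hq : sSup {c : ℝ | ∃ x ∈ closedBall (0:ℂ) 1, ∃ y ∈ closedBall (0:ℂ) 1, x ≠ y ∧
      c = ‖iteratedFDerivWithin ℝ k (fun z : ℂ => ∑' n : ℕ, (a n : ℂ) * z ^ n) (closedBall 0 1) x
          - iteratedFDerivWithin ℝ k (fun z : ℂ => ∑' n : ℕ, (a n : ℂ) * z ^ n) (closedBall 0 1) y‖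
            / ‖x - y‖ ^ α} ≤ SS k α φ := by
    refine Real.sSup_le ?_ hS
    rintro _ ⟨x, hx, y, hy, hxy, rfl⟩
    have hp : 0 < ‖x - y‖ ^ α := Real.rpow_pos_of_pos (norm_pos_iff.2 (sub_ne_zero.2 hxy)) _
    rw [div_le_iff₀ hp]
    exact hhol x hx y hy
  have hcirc : circleHolderNorm k α φ = (∑ j ∈ Finset.range (k + 1), MM φ j) + HH k α φ := rfl
  rw [hcirc]
  unfold discHolderNorm
  rcases Nat.eq_zero_or_pos k with rfl | hk
  · have h0 := hsup 0 le_rfl _ (MM_nonneg φ 0) fun x hx => FF_bound_zero hφ hrep hx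
    have hM := MM_nonneg φ 0
    simp only [SS, if_true] at hq
    rw [zero_add, Finset.sum_range_one, Finset.sum_range_one]
    linarith
  · have h1 : ∀ j ∈ Finset.range (k + 1),
        sSup ((fun x => ‖iteratedFDerivWithin ℝ j (fun z : ℂ => ∑' n : ℕ, (a n : ℂ) * z ^ n)
          (closedBall 0 1) x‖) '' closedBall 0 1) ≤ 6 * MM φ j := by
      intro j hj
      have hj' : j ≤ k := Nat.lt_succ_iff.1 (Finset.mem_range.1 hj)
      have hM := MM_nonneg φ j
      have := hsup j hj' (2.233 * MM φ j) (by positivity) fun x hx => FF_bound hφ hrep hj' hx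
      linarith
    have h2 := Finset.sum_le_sum h1
    rw [← Finset.mul_sum] at h2
    simp only [SS, if_neg hk.ne'] at hq
    linarith
end
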